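/- arXiv:2303.02013 — 2 statements merged into one kernel-verified Lean document; each statement's English description precedes it below -/
import Mathlib

section
/- Let I be an inversive plane of even order q. Then there exists k ≥ 1 with q = 2^k, and, with F the field GaloisField 2 k of order q, there exist a nondegenerate alternating bilinear form B on the vector space V = F⁴, an injective map f from the points of I into the projective space ℙ(F, V) whose image O contains exactly one point of each totally isotropic two-dimensional subspace of V (i.e., O is an ovoid of the generalized quadrangle W(q)), and a bijection g from the circles of I onto the points of ℙ(F, V) not in O, such that for every point x and circle C of I: x lies on C if and only if B vanishes on representatives of f(x) and g(C) (i.e., f(x) and g(C) are collinear in W(q)). -/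
/-- An inversive plane of order `q` on a finite point set `P`:
`|P| = q² + 1`, every circle has `q + 1` points, and any three distinct
points lie in exactly one circle. -/
structure InversivePlane (q : ℕ) (P : Type) [Fintype P] where
  two_le : 2 ≤ q
  circles : Finset (Finset P)
  card_points : Fintype.card P = q ^ 2 + 1
  circle_card : ∀ C ∈ circles, C.card = q + 1
  three_points : ∀ x y z : P, x ≠ y → x ≠ z → y ≠ z →
      ∃! C, C ∈ circles ∧ x ∈ C ∧ y ∈ C ∧ z ∈ C

/-!
The points and circles of an inversive plane of even order `q`, taken together, are the
`(q ^ 2 + 1) + q * (q ^ 2 + 1)` points of a projective space: incidence and tangency form a null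
polarity of it. A circle has an odd number of points, so it cannot be partitioned by circles that
each meet it in `0` or `2` points; this produces enough tangent circles to see that the pencils,
bundles and flocks of circles are the lines of the space.

Coordinates are obtained from the polarity alone. Removing a polar plane leaves an affine space. Its
translations are constructed by means of Desargues' configuration and they commute, because the
space is three-dimensional. Measuring how far the points of a plane lie above the polar planes of
other points, along the centre of the plane at infinity, gives an alternating form that behaves like
a determinant, and this form defines a field structure on its own group of values. In homogeneous
coordinates over that field the polarity is the standard symplectic one, and counting points
identifies the field.
-/

universe u

/-! ### Area forms -/

/-- A biadditive map with the formal properties of the determinant `K² × K² → K` of a field `K`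
that do not mention `K`. -/
structure IsAreaForm {U Z : Type*} [AddCommGroup U] [AddCommGroup Z] (ω : U →+ U →+ Z) :
    Prop where
  apply_self : ∀ u, ω u u = 0
  trans : ∀ {u v w}, u ≠ 0 → ω u v = 0 → ω u w = 0 → ω v w = 0
  exists_apply_eq : ∀ {a b}, ω a b ≠ 0 → ∀ z, ∃ u, ω a u = 0 ∧ ω b u = z

namespace IsAreaForm

variable {U Z : Type*} [AddCommGroup U] [AddCommGroup Z] {ω : U →+ U →+ Z} {a b u v : U}

theorem neg_apply (h : IsAreaForm ω) (u v : U) : -ω u v = ω v u := by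
  have huv := h.apply_self (u + v)
  simp only [map_add, AddMonoidHom.add_apply, h.apply_self, zero_add, add_zero] at huv
  exact (eq_neg_of_add_eq_zero_left huv).symm

theorem apply_eq_zero_comm (h : IsAreaForm ω) : ω u v = 0 ↔ ω v u = 0 := by
  rw [← h.neg_apply u v, neg_eq_zero]

theorem ne_zero_of_apply_ne_zero (hab : ω a b ≠ 0) : a ≠ 0 := by
  rintro rfl; simp at hab

theorem eq_zero_of_apply_eq_zero (h : IsAreaForm ω) (hab : ω a b ≠ 0) (hau : ω a u = 0)
    (hbu : ω b u = 0) : u = 0 := by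
  by_contra hu
  exact hab (h.trans hu (h.apply_eq_zero_comm.1 hau) (h.apply_eq_zero_comm.1 hbu))

theorem bijective_kerApply (h : IsAreaForm ω) (hab : ω a b ≠ 0) :
    Function.Bijective ((ω.flip b).comp (ω a).ker.subtype) := by
  refine ⟨(injective_iff_map_eq_zero _).2 fun u hu ↦ ?_, fun z ↦ ?_⟩
  · exact Subtype.ext (h.eq_zero_of_apply_eq_zero hab u.2 (h.apply_eq_zero_comm.1 hu))
  · obtain ⟨u, hau, hbu⟩ := h.exists_apply_eq hab (-z)
    refine ⟨⟨u, hau⟩, ?_⟩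
    change ω u b = z
    rw [← h.neg_apply, hbu, neg_neg]

/-- The coordinate axis `(ω a).ker`, parametrized by `u ↦ ω u b`. -/
noncomputable def axis (h : IsAreaForm ω) (hab : ω a b ≠ 0) : Z →+ U :=
  (ω a).ker.subtype.comp (AddEquiv.ofBijective _ (h.bijective_kerApply hab)).symm.toAddMonoidHom

theorem apply_axis (h : IsAreaForm ω) (hab : ω a b ≠ 0) (z : Z) : ω a (h.axis hab z) = 0 :=
  Subtype.prop ((AddEquiv.ofBijective _ (h.bijective_kerApply hab)).symm z)

theorem axis_apply (h : IsAreaForm ω) (hab : ω a b ≠ 0) (z : Z) : ω (h.axis hab z) b = z :=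
  (AddEquiv.ofBijective _ (h.bijective_kerApply hab)).apply_symm_apply z

theorem axis_eq (h : IsAreaForm ω) (hab : ω a b ≠ 0) (hau : ω a u = 0) :
    h.axis hab (ω u b) = u :=
  congrArg Subtype.val
    ((AddEquiv.ofBijective _ (h.bijective_kerApply hab)).symm_apply_apply ⟨u, hau⟩)

theorem axis_apply_axis (h : IsAreaForm ω) (hab : ω a b ≠ 0) (z z' : Z) :
    ω (h.axis hab z) (h.axis hab z') = 0 :=
  h.trans (ne_zero_of_apply_ne_zero hab) (h.apply_axis hab z) (h.apply_axis hab z')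

theorem apply_neg_ne_zero (h : IsAreaForm ω) (hab : ω a b ≠ 0) : ω b (-a) ≠ 0 := by
  rwa [map_neg, h.neg_apply]

/-- The coordinate axis `(ω b).ker`, parametrized by `u ↦ ω a u`. -/
noncomputable def coaxis (h : IsAreaForm ω) (hab : ω a b ≠ 0) : Z →+ U :=
  h.axis (h.apply_neg_ne_zero hab)

theorem apply_coaxis (h : IsAreaForm ω) (hab : ω a b ≠ 0) (z : Z) : ω a (h.coaxis hab z) = z := by
  rw [← h.neg_apply, ← map_neg]
  exact h.axis_apply _ z

theorem coaxis_eq (h : IsAreaForm ω) (hab : ω a b ≠ 0) (hbu : ω b u = 0) :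
    h.coaxis hab (ω a u) = u := by
  rw [← h.neg_apply u a, ← map_neg]
  exact h.axis_eq _ hbu

theorem axis_add_coaxis (h : IsAreaForm ω) (hab : ω a b ≠ 0) (u : U) :
    h.axis hab (ω u b) + h.coaxis hab (ω a u) = u := by
  have hu : h.coaxis hab (ω a (u - h.axis hab (ω u b))) = u - h.axis hab (ω u b) :=
    h.coaxis_eq hab <| h.apply_eq_zero_comm.1 <| by
      rw [map_sub, AddMonoidHom.sub_apply, h.axis_apply, sub_self]
  rw [map_sub, h.apply_axis, sub_zero] at hu
  rw [hu, add_sub_cancel]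

/-- The multiplication of the coordinate field. -/
noncomputable def mul (h : IsAreaForm ω) (hab : ω a b ≠ 0) (c d : Z) : Z :=
  ω (h.axis hab c) (h.coaxis hab d)

theorem axis_add_coaxis_apply (h : IsAreaForm ω) (hab : ω a b ≠ 0) (c d c' d' : Z) :
    ω (h.axis hab c + h.coaxis hab d) (h.axis hab c' + h.coaxis hab d') =
      h.mul hab c d' - h.mul hab c' d := by
  have hd : ω (h.coaxis hab d) (h.coaxis hab d') = 0 := h.axis_apply_axis _ d d'
  rw [map_add, map_add, AddMonoidHom.add_apply, AddMonoidHom.add_apply, h.axis_apply_axis, hd,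
    ← h.neg_apply (h.axis hab c'), zero_add, add_zero, ← sub_eq_neg_add, mul, mul]

theorem one_mul (h : IsAreaForm ω) (hab : ω a b ≠ 0) (c : Z) : h.mul hab (ω a b) c = c := by
  rw [mul, h.axis_eq hab (h.apply_self a), h.apply_coaxis]

theorem mul_one (h : IsAreaForm ω) (hab : ω a b ≠ 0) (c : Z) : h.mul hab c (ω a b) = c := by
  rw [mul, h.coaxis_eq hab (h.apply_self b), h.axis_apply]

/-- The vectors with coordinates `(c, c * d)` and `(c', c' * d)` are both perpendicular to `(1, d)`,
hence to each other. -/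
theorem mul_left_comm (h : IsAreaForm ω) (hab : ω a b ≠ 0) (c c' d : Z) :
    h.mul hab c (h.mul hab c' d) = h.mul hab c' (h.mul hab c d) := by
  have hne : h.axis hab (ω a b) + h.coaxis hab d ≠ 0 := fun h0 ↦ hab <| by
    have h1 := congrArg (ω b) h0
    rwa [map_add, map_zero, h.axis_eq hab (h.apply_self a),
      show ω b (h.coaxis hab d) = 0 from h.apply_axis _ d, add_zero, h.apply_eq_zero_comm] at h1
  have mem_line (c : Z) : ω (h.axis hab (ω a b) + h.coaxis hab d)
      (h.axis hab c + h.coaxis hab (h.mul hab c d)) = 0 := by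
    rw [h.axis_add_coaxis_apply, h.one_mul, sub_self]
  have hcc' := h.trans hne (mem_line c) (mem_line c')
  rwa [h.axis_add_coaxis_apply, sub_eq_zero] at hcc'

theorem mul_comm (h : IsAreaForm ω) (hab : ω a b ≠ 0) (c d : Z) :
    h.mul hab c d = h.mul hab d c := by
  simpa only [h.mul_one] using h.mul_left_comm hab c d (ω a b)

theorem exists_mul_eq (h : IsAreaForm ω) (hab : ω a b ≠ 0) {c : Z} (hc : c ≠ 0) (d : Z) :
    ∃ x, h.mul hab c x = d := by
  have hbc : ω b (h.axis hab c) ≠ 0 := by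
    rwa [← h.neg_apply, h.axis_apply, neg_ne_zero]
  obtain ⟨u, hbu, hcu⟩ := h.exists_apply_eq hbc d
  exact ⟨ω a u, by rw [mul, h.coaxis_eq hab hbu, hcu]⟩

/-- The coordinate ring on the value group of an area form; `ω a b` is the unit element. -/
noncomputable abbrev commRing (h : IsAreaForm ω) (hab : ω a b ≠ 0) : CommRing Z where
  __ := (inferInstance : AddCommGroup Z)
  mul := h.mul hab
  one := ω a b
  one_mul := h.one_mul hab
  mul_one := h.mul_one hab
  mul_comm := h.mul_comm hab
  zero_mul d := show h.mul hab 0 d = 0 by rw [mul, map_zero, map_zero, AddMonoidHom.zero_apply]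
  mul_zero c := show h.mul hab c 0 = 0 by rw [mul, map_zero, map_zero]
  left_distrib c d d' := show h.mul hab c (d + d') = h.mul hab c d + h.mul hab c d' by
    rw [mul, map_add, map_add, mul, mul]
  right_distrib c c' d := show h.mul hab (c + c') d = h.mul hab c d + h.mul hab c' d by
    rw [mul, map_add, map_add, AddMonoidHom.add_apply, mul, mul]
  mul_assoc c c' d := show h.mul hab (h.mul hab c c') d = h.mul hab c (h.mul hab c' d) by
    rw [h.mul_comm hab _ d, h.mul_comm hab c' d, h.mul_left_comm]

theorem isField (h : IsAreaForm ω) (hab : ω a b ≠ 0) :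
    letI := h.commRing hab
    IsField Z :=
  letI := h.commRing hab
  { exists_pair_ne := ⟨ω a b, 0, hab⟩
    mul_comm := h.mul_comm hab
    mul_inv_cancel := fun hc ↦ h.exists_mul_eq hab hc (ω a b) }

/-- The coordinates of a vector with respect to `a` and `b`. -/
noncomputable def coordinates (h : IsAreaForm ω) (hab : ω a b ≠ 0) : U ≃+ Z × Z where
  toFun u := (ω u b, ω a u)
  invFun p := h.axis hab p.1 + h.coaxis hab p.2
  left_inv := h.axis_add_coaxis hab
  right_inv p := by
    have hp : ω (h.coaxis hab p.2) b = 0 := h.apply_eq_zero_comm.1 (h.apply_axis _ p.2)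
    dsimp only
    rw [map_add, map_add, AddMonoidHom.add_apply, h.axis_apply, hp, h.apply_axis, h.apply_coaxis,
      add_zero, zero_add]
  map_add' u v := by simp

theorem apply_eq_coordinates (h : IsAreaForm ω) (hab : ω a b ≠ 0) (u v : U) :
    ω u v = h.mul hab (h.coordinates hab u).1 (h.coordinates hab v).2 -
      h.mul hab (h.coordinates hab u).2 (h.coordinates hab v).1 := by
  rw [h.mul_comm hab (h.coordinates hab u).2, ← h.axis_add_coaxis_apply]
  exact congrArg₂ (fun u v ↦ ω u v) ((h.coordinates hab).symm_apply_apply u).symm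
    ((h.coordinates hab).symm_apply_apply v).symm

theorem exists_field {U : Type*} {Z : Type u} [AddCommGroup U] [AddCommGroup Z]
    {ω : U →+ U →+ Z} (h : IsAreaForm ω) (hω : ω ≠ 0) :
    ∃ (K : Type u) (_ : Field K) (φ : U ≃+ K × K) (ψ : Z ≃+ K),
      ∀ u v, ψ (ω u v) = (φ u).1 * (φ v).2 - (φ u).2 * (φ v).1 := by
  obtain ⟨a, ha⟩ := DFunLike.ne_iff.1 hω
  obtain ⟨b, hab⟩ := DFunLike.ne_iff.1 ha
  let := h.commRing hab
  exact ⟨Z, (h.isField hab).toField, h.coordinates hab, .refl Z, h.apply_eq_coordinates hab⟩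

end IsAreaForm

/-! ### Symplectic forms and projective spaces -/

section SymplecticForm

variable {K : Type*} [Field K]

/-- The standard symplectic form on `K⁴`. -/
def symplecticForm (K : Type*) [Field K] : (Fin 4 → K) →ₗ[K] (Fin 4 → K) →ₗ[K] K :=
  .mk₂ K (fun v w ↦ v 0 * w 3 - v 3 * w 0 - (v 1 * w 2 - v 2 * w 1))
    (fun _ _ _ ↦ by simp only [Pi.add_apply]; ring)
    (fun _ _ _ ↦ by simp only [Pi.smul_apply, smul_eq_mul]; ring)
    (fun _ _ _ ↦ by simp only [Pi.add_apply]; ring)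
    (fun _ _ _ ↦ by simp only [Pi.smul_apply, smul_eq_mul]; ring)

theorem symplecticForm_apply (v w : Fin 4 → K) :
    symplecticForm K v w = v 0 * w 3 - v 3 * w 0 - (v 1 * w 2 - v 2 * w 1) := rfl

theorem isAlt_symplecticForm : (symplecticForm K).IsAlt := fun v ↦ by
  rw [symplecticForm_apply]; ring

theorem separatingLeft_symplecticForm : (symplecticForm K).SeparatingLeft := fun v hv ↦ by
  have h₀ := hv (Pi.single 3 1)
  have h₁ := hv (Pi.single 2 1)
  have h₂ := hv (Pi.single 1 1)
  have h₃ := hv (Pi.single 0 1)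
  simp only [symplecticForm_apply, Pi.single_apply] at h₀ h₁ h₂ h₃
  ext i
  fin_cases i <;> simp_all

theorem nondegenerate_symplecticForm : (symplecticForm K).Nondegenerate :=
  isAlt_symplecticForm.isRefl.nondegenerate_iff_separatingLeft.2 separatingLeft_symplecticForm

theorem orthogonal_eq_self_of_isotropic {V : Type*} [AddCommGroup V] [Module K V]
    [FiniteDimensional K V] {B : LinearMap.BilinForm K V} (hB : B.Nondegenerate)
    {M : Submodule K V} (hM : ∀ v ∈ M, ∀ w ∈ M, B v w = 0)
    (hrank : Module.finrank K V ≤ 2 * Module.finrank K M) : B.orthogonal M = M := by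
  have hle : M ≤ B.orthogonal M := fun w hw v hv ↦ hM v hv w hw
  refine (Submodule.eq_of_le_of_finrank_le hle ?_).symm
  rw [LinearMap.BilinForm.finrank_orthogonal hB]
  omega

end SymplecticForm

section ProjectiveCounting

variable {K V : Type*} [Field K] [AddCommGroup V] [Module K V]

theorem finite_of_finite_projectivization [Finite (Projectivization K V)]
    (hV : 1 < Module.finrank K V) : Finite K := by
  have := Module.nontrivial_of_finrank_pos (zero_lt_one.trans hV)
  obtain ⟨v, hv⟩ := exists_ne (0 : V)
  obtain ⟨w, hvw⟩ := exists_linearIndependent_pair_of_one_lt_finrank hV hv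
  rw [LinearIndependent.pair_iff] at hvw
  have hne (t : K) : v + t • w ≠ 0 := fun h ↦ one_ne_zero (hvw 1 t (by rwa [one_smul])).1
  refine Finite.of_injective (fun t ↦ Projectivization.mk K (v + t • w) (hne t)) fun t s hts ↦ ?_
  obtain ⟨c, hc⟩ := (Projectivization.mk_eq_mk_iff' ..).1 hts
  obtain ⟨hc₁, hcs⟩ := hvw (c - 1) (c * s - t) <| by
    rw [← sub_eq_zero] at hc
    rw [← hc]
    module
  rw [sub_eq_zero] at hc₁ hcs
  rw [← hcs, hc₁, one_mul]

theorem natCard_eq_of_natCard_projectivization_eq [Finite (Projectivization K V)] {q : ℕ}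
    (hV : 1 < Module.finrank K V)
    (hcard : Nat.card (Projectivization K V) =
      ∑ i ∈ Finset.range (Module.finrank K V), q ^ i) : Nat.card K = q := by
  have := finite_of_finite_projectivization hV
  have hmono : StrictMono fun m : ℕ ↦ ∑ i ∈ Finset.range (Module.finrank K V), m ^ i :=
    fun a b hab ↦ Finset.sum_lt_sum (fun i _ ↦ Nat.pow_le_pow_left hab.le i)
      ⟨1, Finset.mem_range.2 hV, by simpa using hab⟩
  exact hmono.injective ((Projectivization.card_of_finrank K V rfl).symm.trans hcard)

theorem exists_ringEquiv_galoisField [Finite K] (hK : Even (Nat.card K)) :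
    ∃ k, 1 ≤ k ∧ Nat.card K = 2 ^ k ∧ Nonempty (GaloisField 2 k ≃+* K) := by
  have := Fintype.ofFinite K
  obtain ⟨p, hp⟩ := CharP.exists K
  obtain ⟨n, hprime, hn⟩ := FiniteField.card K p
  rw [← Nat.card_eq_fintype_card] at hn
  obtain rfl : p = 2 := hprime.even_iff.1 (Nat.even_pow.1 (hn ▸ hK)).1
  have := Fintype.ofFinite (GaloisField 2 n)
  refine ⟨n, n.2, hn, ⟨FiniteField.ringEquivOfCardEq ?_⟩⟩
  rw [← Nat.card_eq_fintype_card, ← Nat.card_eq_fintype_card, GaloisField.card 2 n n.2.ne', hn]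

end ProjectiveCounting

/-! ### Null polarities -/

/-- A null polarity of a three-dimensional projective space, described on the set `X` of points
alone: `Perp x y` says that `x` lies in the polar plane of `y`, and every plane is a polar plane.
Lines are recovered from perpendicularity, see `NullPolarity.line`. -/
structure NullPolarity (X : Type u) where
  Perp : X → X → Prop
  perp_self : ∀ x, Perp x x
  symm : ∀ {x y}, Perp x y → Perp y x
  exists_perp₃ : ∀ x y z, ∃ w, Perp w x ∧ Perp w y ∧ Perp w z
  perp_of_perp_pair : ∀ {x y w w' u z}, x ≠ y → w ≠ w' → Perp w x → Perp w y →
    Perp w' x → Perp w' y → Perp u x → Perp u y → Perp z w → Perp z w' → Perp u z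
  exists_ne_perp_pair : ∀ {x y}, x ≠ y → ∀ a b, ∃ w, w ≠ a ∧ w ≠ b ∧ Perp w x ∧ Perp w y
  exists_perp_not_perp : ∀ {x y}, x ≠ y → ∃ w, Perp w x ∧ ¬ Perp w y

namespace NullPolarity

variable {X : Type u} {G : NullPolarity X}

section Lines

variable {x y z z' u v w w' h a b c : X}

variable (G) in
/-- The line joining `x` and `y`: the points lying in every plane through `x` and `y`. -/
def line (x y : X) : Set X := {z | ∀ w, G.Perp w x → G.Perp w y → G.Perp w z}

theorem left_mem_line (x y : X) : x ∈ G.line x y := fun _ hx _ ↦ hx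

theorem right_mem_line (x y : X) : y ∈ G.line x y := fun _ _ hy ↦ hy

theorem mem_line_iff_perp (hxy : x ≠ y) (hw : w ≠ w') (hwx : G.Perp w x) (hwy : G.Perp w y)
    (hwx' : G.Perp w' x) (hwy' : G.Perp w' y) :
    u ∈ G.line w w' ↔ G.Perp u x ∧ G.Perp u y :=
  ⟨fun hu ↦ ⟨G.symm (hu x (G.symm hwx) (G.symm hwx')), G.symm (hu y (G.symm hwy) (G.symm hwy'))⟩,
    fun hu _ hz hz' ↦
      G.symm (G.perp_of_perp_pair hxy hw hwx hwy hwx' hwy' hu.1 hu.2 hz hz')⟩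

theorem exists_mem_line_iff_perp (hxy : x ≠ y) :
    ∃ w w', w ≠ w' ∧ ∀ u, u ∈ G.line x y ↔ G.Perp u w ∧ G.Perp u w' := by
  obtain ⟨w, -, -, hwx, hwy⟩ := G.exists_ne_perp_pair hxy x x
  obtain ⟨w', hw, -, hwx', hwy'⟩ := G.exists_ne_perp_pair hxy w w
  exact ⟨w, w', hw.symm, fun u ↦ mem_line_iff_perp hw.symm hxy (G.symm hwx) (G.symm hwx')
    (G.symm hwy) (G.symm hwy')⟩

theorem line_eq_of_mem (hxy : x ≠ y) (hz : z ≠ z') (h : z ∈ G.line x y)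
    (h' : z' ∈ G.line x y) : G.line z z' = G.line x y := by
  obtain ⟨w, w', hw, H⟩ := exists_mem_line_iff_perp hxy
  ext u
  rw [H] at h h' ⊢
  exact mem_line_iff_perp hw hz h.1 h.2 h'.1 h'.2

theorem exists_mem_line_perp (hxy : x ≠ y) (w : X) : ∃ z ∈ G.line x y, G.Perp z w := by
  obtain ⟨a, b, -, H⟩ := exists_mem_line_iff_perp hxy
  obtain ⟨z, hza, hzb, hzw⟩ := G.exists_perp₃ a b w
  exact ⟨z, (H z).2 ⟨hza, hzb⟩, hzw⟩

theorem exists_mem_line_ne_ne (hxy : x ≠ y) : ∃ z ∈ G.line x y, z ≠ x ∧ z ≠ y := by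
  obtain ⟨a, b, hab, H⟩ := exists_mem_line_iff_perp hxy
  obtain ⟨z, hzx, hzy, hza, hzb⟩ := G.exists_ne_perp_pair hab x y
  exact ⟨z, (H z).2 ⟨hza, hzb⟩, hzx, hzy⟩

theorem perp_of_mem_line (hxy : x ≠ y) (hz : z ≠ z') (h : z ∈ G.line x y) (h' : z' ∈ G.line x y)
    (hw : G.Perp w z) (hw' : G.Perp w z') (hu : u ∈ G.line x y) : G.Perp w u := by
  rw [← line_eq_of_mem hxy hz h h'] at hu
  exact hu w hw hw'

theorem exists_mem_line_mem_line (hxy : x ≠ y) (huv : u ≠ v) (hwx : G.Perp w x)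
    (hwy : G.Perp w y) (hwu : G.Perp w u) (hwv : G.Perp w v) :
    ∃ z, z ∈ G.line x y ∧ z ∈ G.line u v := by
  obtain ⟨a, ha, -, hax, hay⟩ := G.exists_ne_perp_pair hxy w w
  obtain ⟨b, hb, -, hbu, hbv⟩ := G.exists_ne_perp_pair huv w w
  obtain ⟨z, hzw, hza, hzb⟩ := G.exists_perp₃ w a b
  exact ⟨z,
    (mem_line_iff_perp ha.symm hxy (G.symm hwx) (G.symm hax) (G.symm hwy) (G.symm hay)).2
      ⟨hzw, hza⟩,
    (mem_line_iff_perp hb.symm huv (G.symm hwu) (G.symm hbu) (G.symm hwv) (G.symm hbv)).2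
      ⟨hzw, hzb⟩⟩

theorem exists_not_perp_pair (hwx : w ≠ x) : ∃ g, ¬ G.Perp g w ∧ ¬ G.Perp g x := by
  obtain ⟨u, huw, hux⟩ := G.exists_perp_not_perp hwx
  obtain ⟨v, hvx, hvw⟩ := G.exists_perp_not_perp hwx.symm
  have huv : u ≠ v := by rintro rfl; exact hux hvx
  obtain ⟨g, hg, hgu, hgv⟩ := exists_mem_line_ne_ne huv
  refine ⟨g, fun hgw ↦ hvw ?_, fun hgx ↦ hux ?_⟩
  · exact G.symm (perp_of_mem_line huv hgu hg (left_mem_line u v) (G.symm hgw) (G.symm huw)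
      (right_mem_line u v))
  · exact G.symm (perp_of_mem_line huv hgv hg (right_mem_line u v) (G.symm hgx) (G.symm hvx)
      (left_mem_line u v))

theorem mem_line_of_line_eq (e : G.line h a = G.line h b) : b ∈ G.line h a :=
  e ▸ right_mem_line h b

theorem perp_of_line_eq (e : G.line h a = G.line h b) (hwh : G.Perp w h) (hwa : G.Perp w a) :
    G.Perp w b := mem_line_of_line_eq e w hwh hwa

variable (G) in
/-- Four points are coplanar if they lie in a common polar plane. -/
def Coplanar (x y z t : X) : Prop := ∃ w, G.Perp w x ∧ G.Perp w y ∧ G.Perp w z ∧ G.Perp w t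

theorem perp_of_coplanar (hxy : x ≠ y) (hz : z ∉ G.line x y) (hwx : G.Perp w x)
    (hwy : G.Perp w y) (hwz : G.Perp w z) (hu : G.Coplanar x y z u) : G.Perp w u := by
  obtain ⟨w', hx, hy, hz', hu'⟩ := hu
  obtain rfl : w = w' := by
    by_contra hw
    exact hz ((mem_line_iff_perp hw hxy (G.symm hwx) (G.symm hx) (G.symm hwy) (G.symm hy)).2
      ⟨G.symm hwz, G.symm hz'⟩)
  exact hu'

end Lines

section Affine

variable (G) in
/-- The affine space obtained by removing the polar plane of `o`. -/
abbrev Affine (o : X) : Type u := {a // ¬ G.Perp a o}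

variable (G) in
/-- The points at infinity of `G.Affine o`: two affine points `a` and `b` are joined by a line of
direction `h` when `G.line h a = G.line h b`. -/
abbrev Direction (o : X) : Type u := {h // G.Perp h o}

/-- The centre `o` of the polar plane at infinity, as a direction. -/
abbrev center (o : X) : G.Direction o := ⟨o, G.perp_self o⟩

variable {o w y : X} {h k k₁ k₂ : G.Direction o} {a b c d e f : G.Affine o}

theorem direction_ne (h : G.Direction o) (a : G.Affine o) : (h : X) ≠ a :=
  fun e ↦ a.2 (e ▸ h.2)

theorem ne_center (ha : G.Perp w (a : X)) : w ≠ o := by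
  rintro rfl; exact a.2 (G.symm ha)

theorem ne_of_line_ne (H : G.line h a ≠ G.line h b) : a ≠ b := by
  rintro rfl; exact H rfl

theorem line_eq_of_mem_line (hb : (b : X) ∈ G.line h a) : G.line h a = G.line h b :=
  (line_eq_of_mem (direction_ne h a) (direction_ne h b) (left_mem_line _ _) hb).symm

theorem line_eq_line_iff (hab : a ≠ b) : G.line h a = G.line h b ↔ (h : X) ∈ G.line a b := by
  have hab : (a : X) ≠ b := Subtype.coe_injective.ne hab
  refine ⟨fun e ↦ ?_, fun e ↦ ?_⟩
  · rw [line_eq_of_mem (direction_ne h a) hab (right_mem_line _ _) (mem_line_of_line_eq e)]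
    exact left_mem_line _ _
  · rw [line_eq_of_mem hab (direction_ne h a) e (left_mem_line _ _),
      line_eq_of_mem hab (direction_ne h b) e (right_mem_line _ _)]

theorem perp_direction (hab : a ≠ b) (e : G.line h a = G.line h b) (ha : G.Perp w a)
    (hb : G.Perp w b) : G.Perp w h :=
  (line_eq_line_iff hab).1 e w ha hb

theorem eq_direction_of_mem_line (hk : (k : X) ∈ G.line h a) : k = h := by
  by_contra hkh
  exact a.2 <| G.symm <| perp_of_mem_line (direction_ne h a) (Subtype.coe_injective.ne hkh) hk
    (left_mem_line _ _) (G.symm k.2) (G.symm h.2) (right_mem_line _ _)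

theorem not_perp_of_mem_line (hy : y ∈ G.line h a) (hyh : y ≠ h) : ¬ G.Perp y o := fun hyo ↦
  hyh (congrArg Subtype.val (eq_direction_of_mem_line (k := ⟨y, hyo⟩) hy))

theorem exists_ne_line_eq (h : G.Direction o) (a : G.Affine o) :
    ∃ b : G.Affine o, b ≠ a ∧ G.line h a = G.line h b := by
  obtain ⟨b, hb, hbh, hba⟩ := exists_mem_line_ne_ne (direction_ne h a)
  exact ⟨⟨b, not_perp_of_mem_line hb hbh⟩, fun e ↦ hba (congrArg Subtype.val e),
    line_eq_of_mem_line hb⟩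

theorem exists_direction (a b : G.Affine o) : ∃ h : G.Direction o, G.line h a = G.line h b := by
  by_cases hab : a = b
  · exact ⟨center o, by rw [hab]⟩
  · obtain ⟨h, hm, ho⟩ := exists_mem_line_perp (G := G) (Subtype.coe_injective.ne hab) o
    exact ⟨⟨h, ho⟩, (line_eq_line_iff hab).2 hm⟩

theorem direction_unique (hab : a ≠ b) (hh : G.line h a = G.line h b)
    (hk : G.line k a = G.line k b) : h = k := by
  refine eq_direction_of_mem_line (a := a) ?_
  rw [line_eq_of_mem (Subtype.coe_injective.ne hab) (direction_ne k a)
    ((line_eq_line_iff hab).1 hk) (left_mem_line _ _)]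
  exact (line_eq_line_iff hab).1 hh

theorem exists_line_ne_line_ne (h : G.Direction o) (a c : G.Affine o) :
    ∃ g : G.Affine o, G.line h a ≠ G.line h g ∧ G.line h c ≠ G.line h g := by
  obtain ⟨w, wh, wa, wc⟩ := G.exists_perp₃ h a c
  obtain ⟨g, gw, go⟩ := exists_not_perp_pair (ne_center wa)
  exact ⟨⟨g, go⟩, fun e ↦ gw (G.symm (perp_of_line_eq e wh wa)),
    fun e ↦ gw (G.symm (perp_of_line_eq e wh wc))⟩

theorem direction_mem_line (hac : a ≠ c) (hae : a ≠ e) (hce : c ≠ e) (hk : k₁ ≠ k₂)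
    (h₁ : G.line k₁ a = G.line k₁ c) (h₂ : G.line k₂ a = G.line k₂ e)
    (h₃ : G.line k c = G.line k e) : (k : X) ∈ G.line k₁ k₂ := by
  obtain ⟨w, wa, wc, we⟩ := G.exists_perp₃ a c e
  exact (mem_line_iff_perp (ne_center wa) (Subtype.coe_injective.ne hk)
    (G.symm (perp_direction hac h₁ wa wc)) k₁.2 (G.symm (perp_direction hae h₂ wa we)) k₂.2).2
    ⟨G.symm (perp_direction hce h₃ wc we), k.2⟩

/-- A parallelogram `a b d c` whose sides `a b` and `c d` have direction `h` and lie on distinct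
lines; these two sides may shrink to points. -/
structure Parallelogram (h : G.Direction o) (a b c d : G.Affine o) : Prop where
  left : G.line h a = G.line h b
  right : G.line h c = G.line h d
  ne : G.line h a ≠ G.line h c
  cross : ∃ k : G.Direction o, G.line k a = G.line k c ∧ G.line k b = G.line k d

namespace Parallelogram

theorem symm (H : Parallelogram h a b c d) : Parallelogram h c d a b :=
  ⟨H.right, H.left, H.ne.symm, H.cross.imp fun _ hk ↦ ⟨hk.1.symm, hk.2.symm⟩⟩

theorem flip (H : Parallelogram h a b c d) : Parallelogram h b a d c :=
  ⟨H.left.symm, H.right.symm, H.left ▸ H.right ▸ H.ne, H.cross.imp fun _ ↦ And.symm⟩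

theorem exists_of_line_eq (hab : G.line h a = G.line h b) (hac : G.line h a ≠ G.line h c) :
    ∃ d, Parallelogram h a b c d := by
  obtain ⟨k, hk⟩ := exists_direction a c
  obtain ⟨w, wh, wa, wc⟩ := G.exists_perp₃ h a c
  have wk : G.Perp w k := perp_direction (ne_of_line_ne hac) hk wa wc
  obtain ⟨d, hdk, hdh⟩ := exists_mem_line_mem_line (direction_ne k b) (direction_ne h c) wk
    (perp_of_line_eq hab wh wa) wh wc
  have hd : ¬ G.Perp d o := by
    intro hd
    have hhk : h = k := (eq_direction_of_mem_line (k := ⟨d, hd⟩) hdh).symm.trans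
      (eq_direction_of_mem_line hdk)
    exact hac (hhk ▸ hk)
  exact ⟨⟨d, hd⟩, hab, line_eq_of_mem_line hdh, hac, k, hk, line_eq_of_mem_line hdk⟩

theorem unique (H : Parallelogram h a b c d) (H' : Parallelogram h a b c e) : d = e := by
  obtain ⟨k, hac, hbd⟩ := H.cross
  obtain ⟨k', hac', hbe⟩ := H'.cross
  obtain rfl := direction_unique (ne_of_line_ne H.ne) hac hac'
  by_contra hde
  obtain rfl := direction_unique hde (H.right.symm.trans H'.right) (hbd.symm.trans hbe)
  exact H.ne hac

/-- This is the Desargues configuration in space. -/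
theorem trans_of_not_coplanar (H : Parallelogram h a b c d) (H' : Parallelogram h a b e f)
    (hace : ¬ G.Coplanar h a c e) : Parallelogram h c d e f := by
  have hce : G.line h c ≠ G.line h e := fun hce ↦ by
    obtain ⟨w, wh, wa, wc⟩ := G.exists_perp₃ h a c
    exact hace ⟨w, wh, wa, wc, perp_of_line_eq hce wh wc⟩
  have hdf : G.line h d ≠ G.line h f := H.right ▸ H'.right ▸ hce
  obtain ⟨k₁, hac, hbd⟩ := H.cross
  obtain ⟨k₂, hae, hbf⟩ := H'.cross
  obtain ⟨k, hk⟩ := exists_direction c e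
  obtain ⟨k', hk'⟩ := exists_direction d f
  have hk₁₂ : k₁ ≠ k₂ := by
    rintro rfl
    obtain ⟨w, wh, wa, wk⟩ := G.exists_perp₃ h a k₁
    exact hace ⟨w, wh, wa, perp_of_line_eq hac wk wa, perp_of_line_eq hae wk wa⟩
  have hkm : (k : X) ∈ G.line k₁ k₂ := direction_mem_line (ne_of_line_ne H.ne)
    (ne_of_line_ne H'.ne) (ne_of_line_ne hce) hk₁₂ hac hae hk
  have hkm' : (k' : X) ∈ G.line k₁ k₂ := direction_mem_line (ne_of_line_ne H.flip.ne)
    (ne_of_line_ne H'.flip.ne) (ne_of_line_ne hdf) hk₁₂ hbd hbf hk'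
  suffices k = k' from ⟨H.right, H'.right, hce, k, hk, this ▸ hk'⟩
  by_contra hkk
  obtain ⟨v, vh, vc, ve⟩ := G.exists_perp₃ h c e
  have vk : G.Perp v k := perp_direction (ne_of_line_ne hce) hk vc ve
  have vk' : G.Perp v k' := perp_direction (ne_of_line_ne hdf) hk'
    (perp_of_line_eq H.right vh vc) (perp_of_line_eq H'.right vh ve)
  have vk₁ : G.Perp v k₁ := perp_of_mem_line (Subtype.coe_injective.ne hk₁₂)
    (Subtype.coe_injective.ne hkk) hkm hkm' vk vk' (left_mem_line _ _)
  exact hace ⟨v, vh, perp_of_line_eq hac.symm vk₁ vc, vc, ve⟩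

theorem trans (H : Parallelogram h a b c d) (H' : Parallelogram h a b e f)
    (hce : G.line h c ≠ G.line h e) : Parallelogram h c d e f := by
  by_cases hace : G.Coplanar h a c e
  swap
  · exact H.trans_of_not_coplanar H' hace
  -- In the planar case, compare both parallelograms with a third one outside the plane.
  obtain ⟨w, wh, wa, wc, we⟩ := hace
  obtain ⟨g, gw, go⟩ := exists_not_perp_pair (ne_center wa)
  lift g to G.Affine o using go
  have not_coplanar {x y : G.Affine o} (wx : G.Perp w x) (wy : G.Perp w y)
      (hxy : G.line h x ≠ G.line h y) : ¬ G.Coplanar h x y g := fun hg ↦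
    gw <| G.symm <| perp_of_coplanar (direction_ne h x)
      (fun hm ↦ hxy (line_eq_of_mem_line hm)) wh wx wy hg
  obtain ⟨g', Hg⟩ := exists_of_line_eq H.left (c := g)
    fun e ↦ gw (G.symm (perp_of_line_eq e wh wa))
  have Hcg := H.trans_of_not_coplanar Hg (not_coplanar wa wc H.ne)
  have Heg := H'.trans_of_not_coplanar Hg (not_coplanar wa we H'.ne)
  exact Hcg.symm.trans_of_not_coplanar Heg.symm
    fun ⟨v, vh, vg, vc, ve⟩ ↦ not_coplanar wc we hce ⟨v, vh, vc, ve, vg⟩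

end Parallelogram

end Affine

section Translations

variable {o : X} {h k : G.Direction o} {a b c d x x' y y' : G.Affine o}

/-- The image `y` of `x` under the translation that moves `a` to `b` and `c` to `d`, where `a b d c`
is a parallelogram: complete a parallelogram over `a b` or `c d`, whichever side is off the line. -/
def IsTranslate (h : G.Direction o) (a b c d x y : G.Affine o) : Prop :=
  (G.line h a ≠ G.line h x → Parallelogram h a b x y) ∧
    (G.line h c ≠ G.line h x → Parallelogram h c d x y)

theorem exists_isTranslate (H : Parallelogram h a b c d) (x : G.Affine o) :
    ∃ y, IsTranslate h a b c d x y := by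
  by_cases hax : G.line h a = G.line h x
  · obtain ⟨y, hy⟩ := Parallelogram.exists_of_line_eq H.right (hax ▸ H.ne.symm)
    exact ⟨y, fun hn ↦ absurd hax hn, fun _ ↦ hy⟩
  · obtain ⟨y, hy⟩ := Parallelogram.exists_of_line_eq H.left hax
    exact ⟨y, fun _ ↦ hy, fun hcx ↦ H.trans hy hcx⟩

namespace IsTranslate

theorem line_eq (H : Parallelogram h a b c d) (hx : IsTranslate h a b c d x y) :
    G.line h x = G.line h y := by
  by_cases hax : G.line h a = G.line h x
  · exact (hx.2 (hax ▸ H.ne.symm)).right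
  · exact (hx.1 hax).right

theorem parallelogram_of_line_ne (H : Parallelogram h a b c d) (hx : IsTranslate h a b c d x y)
    (hx' : IsTranslate h a b c d x' y') (hax : G.line h a ≠ G.line h x)
    (hcx : G.line h c ≠ G.line h x) (hxx' : G.line h x ≠ G.line h x') :
    Parallelogram h x y x' y' := by
  by_cases hax' : G.line h a = G.line h x'
  · exact (hx.2 hcx).trans (hx'.2 (hax' ▸ H.ne.symm)) hxx'
  · exact (hx.1 hax).trans (hx'.1 hax') hxx'

theorem parallelogram (H : Parallelogram h a b c d) (hx : IsTranslate h a b c d x y)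
    (hx' : IsTranslate h a b c d x' y') (hxx' : G.line h x ≠ G.line h x') :
    Parallelogram h x y x' y' := by
  by_cases ha : G.line h a ≠ G.line h x ∧ G.line h a ≠ G.line h x'
  · exact (hx.1 ha.1).trans (hx'.1 ha.2) hxx'
  by_cases hc : G.line h c ≠ G.line h x ∧ G.line h c ≠ G.line h x'
  · exact (hx.2 hc.1).trans (hx'.2 hc.2) hxx'
  have hac := H.ne
  obtain ⟨g, hag, hcg⟩ := exists_line_ne_line_ne h a c
  obtain ⟨g', hg⟩ := exists_isTranslate H g
  have hgx : G.line h g ≠ G.line h x := by grind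
  have hgx' : G.line h g ≠ G.line h x' := by grind
  exact (parallelogram_of_line_ne H hg hx hag hcg hgx).trans
    (parallelogram_of_line_ne H hg hx' hag hcg hgx') hxx'

end IsTranslate

/-- A map of the affine space that sends parallel lines to parallel lines of the same direction. -/
def IsDilation (t : G.Affine o → G.Affine o) : Prop :=
  ∀ ⦃k : G.Direction o⦄ ⦃a b : G.Affine o⦄, G.line k a = G.line k b →
    G.line k (t a) = G.line k (t b)

/-- A dilation that preserves every line of direction `h`. -/
structure IsTranslationAlong (h : G.Direction o) (t : G.Affine o → G.Affine o) : Prop where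
  isDilation : IsDilation t
  line_eq : ∀ a : G.Affine o, G.line h a = G.line h (t a)

variable {s t : G.Affine o → G.Affine o}

theorem IsDilation.comp (hs : IsDilation s) (ht : IsDilation t) : IsDilation (s ∘ t) :=
  fun _ _ _ e ↦ hs (ht e)

theorem IsTranslationAlong.comp (hs : IsTranslationAlong h s) (ht : IsTranslationAlong h t) :
    IsTranslationAlong h (s ∘ t) :=
  ⟨hs.isDilation.comp ht.isDilation, fun a ↦ (ht.line_eq a).trans (hs.line_eq _)⟩

theorem isTranslationAlong_of_parallelogram (hl : ∀ x : G.Affine o, G.line h x = G.line h (t x))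
    (ht : ∀ x y : G.Affine o, G.line h x ≠ G.line h y → Parallelogram h x (t x) y (t y)) :
    IsTranslationAlong h t := by
  refine ⟨fun k x y e ↦ ?_, hl⟩
  by_cases hxy : x = y
  · rw [hxy]
  by_cases hf : G.line h x = G.line h y
  · obtain rfl := direction_unique hxy hf e
    rw [← hl x, ← hl y, hf]
  · obtain ⟨k', e₁, e₂⟩ := (ht x y hf).cross
    obtain rfl := direction_unique hxy e₁ e
    exact e₂

theorem exists_isTranslationAlong (hab : G.line h a = G.line h b) :
    ∃ t, IsTranslationAlong h t ∧ t a = b := by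
  obtain ⟨c, hac, -⟩ := exists_line_ne_line_ne h a a
  obtain ⟨d, H⟩ := Parallelogram.exists_of_line_eq hab hac
  choose t ht using exists_isTranslate H
  exact ⟨t, isTranslationAlong_of_parallelogram (fun x ↦ (ht x).line_eq H)
    fun x y ↦ (ht x).parallelogram H (ht y), ((ht a).2 hac.symm).unique H.symm⟩

theorem IsTranslationAlong.apply_eq_self_of_line_ne (ht : IsTranslationAlong h t) (ha : t a = a)
    (hab : G.line h a ≠ G.line h b) : t b = b := by
  obtain ⟨k, e⟩ := exists_direction a b
  have e' := ht.isDilation e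
  rw [ha, e] at e'
  by_contra hb
  obtain rfl := direction_unique (Ne.symm hb) (ht.line_eq b) e'
  exact hab e

theorem IsTranslationAlong.apply_eq_self (ht : IsTranslationAlong h t) (ha : t a = a)
    (b : G.Affine o) : t b = b := by
  by_cases hab : G.line h a = G.line h b
  · obtain ⟨g, hag, -⟩ := exists_line_ne_line_ne h a a
    exact ht.apply_eq_self_of_line_ne (ht.apply_eq_self_of_line_ne ha hag) (hab ▸ hag.symm)
  · exact ht.apply_eq_self_of_line_ne ha hab

theorem exists_perm_isTranslationAlong (hab : G.line h a = G.line h b) :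
    ∃ t : Equiv.Perm (G.Affine o), IsTranslationAlong h t ∧ t a = b := by
  obtain ⟨t, ht, hta⟩ := exists_isTranslationAlong hab
  obtain ⟨s, hs, hsb⟩ := exists_isTranslationAlong hab.symm
  exact ⟨⟨t, s, (hs.comp ht).apply_eq_self (by rw [Function.comp_apply, hta, hsb]),
    (ht.comp hs).apply_eq_self (by rw [Function.comp_apply, hsb, hta])⟩, ht, hta⟩

theorem IsDilation.line_eq (ht : IsDilation t) (ha : G.line h a = G.line h (t a))
    (hab : G.line h a = G.line h b) : G.line h b = G.line h (t b) :=
  hab.symm.trans (ha.trans (ht hab))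

/-- The traces `a (t a)` and `c (t c)` are coplanar; they meet at infinity, as an affine common
point would be fixed. -/
theorem IsDilation.direction_eq_of_forall_ne (ht : IsDilation t) (hf : ∀ a, t a ≠ a)
    (ha : G.line h a = G.line h (t a)) (hc : G.line k c = G.line k (t c)) : h = k := by
  obtain ⟨j, hj⟩ := exists_direction a c
  obtain ⟨w, wj, wa, wta⟩ := G.exists_perp₃ j a (t a)
  have hne (x : G.Affine o) : (x : X) ≠ t x := Subtype.coe_injective.ne (hf x).symm
  obtain ⟨z, hza, hzc⟩ := exists_mem_line_mem_line (hne a) (hne c) wa wta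
    (perp_of_line_eq hj wj wa) (perp_of_line_eq (ht hj) wj wta)
  by_cases hz : G.Perp z o
  · lift z to G.Direction o using hz
    rw [← direction_unique (hf a).symm ((line_eq_line_iff (hf a).symm).2 hza) ha,
      ← direction_unique (hf c).symm ((line_eq_line_iff (hf c).symm).2 hzc) hc]
  · lift z to G.Affine o using hz
    have trace_eq {j : G.Direction o} {x : G.Affine o} (hx : G.line j x = G.line j (t x))
        (hzx : (z : X) ∈ G.line x (t x)) : G.line j z = G.line j (t z) := by
      refine ht.line_eq hx (line_eq_of_mem_line ?_)
      rwa [line_eq_of_mem (hne x) (direction_ne j x)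
        ((line_eq_line_iff (hf x).symm).1 hx) (left_mem_line _ _)]
    exact direction_unique (hf z).symm (trace_eq ha hza) (trace_eq hc hzc)

theorem IsDilation.exists_isTranslationAlong (ht : IsDilation t) (hf : ∀ a, t a ≠ a) :
    ∃ h, IsTranslationAlong h t := by
  rcases isEmpty_or_nonempty (G.Affine o) with _ | ⟨⟨a⟩⟩
  · exact ⟨center o, ht, fun a ↦ isEmptyElim a⟩
  · obtain ⟨h, ha⟩ := exists_direction a (t a)
    refine ⟨h, ht, fun c ↦ ?_⟩
    obtain ⟨k, hc⟩ := exists_direction c (t c)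
    rwa [ht.direction_eq_of_forall_ne hf ha hc]

/-- A dilation that preserves every line of some direction. -/
def IsTranslation (t : G.Affine o → G.Affine o) : Prop := ∃ h, IsTranslationAlong h t

theorem IsTranslation.comp (hs : IsTranslation s) (ht : IsTranslation t) :
    IsTranslation (s ∘ t) := by
  obtain ⟨h, hs⟩ := hs
  obtain ⟨k, ht⟩ := ht
  by_cases hf : ∃ a, s (t a) = a
  · obtain ⟨a, ha⟩ := hf
    by_cases hta : t a = a
    · exact ⟨h, hs.isDilation.comp ht.isDilation, fun b ↦ by
        rw [Function.comp_apply, ht.apply_eq_self hta, ← hs.line_eq]⟩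
    · have hsa := hs.line_eq (t a)
      rw [ha] at hsa
      obtain rfl := direction_unique hta hsa (ht.line_eq a).symm
      exact ⟨h, hs.comp ht⟩
  · exact (hs.isDilation.comp ht.isDilation).exists_isTranslationAlong (not_exists.1 hf)

theorem IsTranslationAlong.symm {t : Equiv.Perm (G.Affine o)} (ht : IsTranslationAlong h t) :
    IsTranslationAlong h t.symm := by
  refine ⟨fun k a b e ↦ ?_, fun a ↦ ?_⟩
  · by_cases hab : a = b
    · rw [hab]
    obtain ⟨k', e'⟩ := exists_direction (t.symm a) (t.symm b)
    have e'' := ht.isDilation e'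
    rw [t.apply_symm_apply, t.apply_symm_apply] at e''
    rwa [direction_unique hab e e'']
  · simpa using (ht.line_eq (t.symm a)).symm

theorem IsTranslationAlong.apply_comm_of_ne (hhk : h ≠ k) (hs : IsTranslationAlong h s)
    (ht : IsTranslationAlong k t) (a : G.Affine o) : s (t a) = t (s a) := by
  by_contra hne
  exact hhk (direction_unique hne
    ((hs.line_eq (t a)).symm.trans (ht.isDilation (hs.line_eq a)))
    ((hs.isDilation (ht.line_eq a)).symm.trans (ht.line_eq (s a))))

theorem IsTranslation.commute {s t : Equiv.Perm (G.Affine o)} (hs : IsTranslation s)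
    (ht : IsTranslation t) : Commute s t := by
  obtain ⟨h, hs⟩ := hs
  obtain ⟨k, htk⟩ := id ht
  by_cases hhk : h ≠ k
  · exact Equiv.ext (hs.apply_comm_of_ne hhk htk)
  obtain rfl := not_not.1 hhk
  -- Both `r` and `t * r` have directions other than `h`, so `s` commutes with both.
  rcases isEmpty_or_nonempty (G.Affine o) with _ | ⟨⟨a⟩⟩
  · exact Subsingleton.elim _ _
  obtain ⟨g, hag, -⟩ := exists_line_ne_line_ne h a a
  obtain ⟨j, haj⟩ := exists_direction a g
  obtain ⟨r, hr, rfl⟩ := exists_perm_isTranslationAlong haj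
  obtain ⟨m, hm⟩ := ht.comp ⟨j, hr⟩
  have hhj : h ≠ j := by rintro rfl; exact hag haj
  have hhm : h ≠ m := by rintro rfl; exact hag ((hm.line_eq a).trans (htk.line_eq (r a)).symm)
  have hsr : Commute s r := Equiv.ext (hs.apply_comm_of_ne hhj hr)
  have hstr : Commute s (t * r) := Equiv.ext (hs.apply_comm_of_ne hhm hm)
  simpa using hstr.mul_right hsr.inv_right

variable (G) in
/-- The group of translations of the affine space `G.Affine o`. -/
def translationGroup (o : X) : Subgroup (Equiv.Perm (G.Affine o)) where
  carrier := {t | IsTranslation t}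
  mul_mem' hs ht := hs.comp ht
  one_mem' := ⟨center o, fun _ _ _ e ↦ e, fun _ ↦ rfl⟩
  inv_mem' := fun ⟨h, ht⟩ ↦ ⟨h, ht.symm⟩

instance : CommGroup (G.translationGroup o) where
  mul_comm s t := Subtype.ext (s.2.commute t.2)

variable (G) in
/-- A parametrization of the affine space `G.Affine o` by an abelian group that acts on it by
translations. -/
structure Chart (o : X) (T : Type*) [AddCommGroup T] extends T ≃ G.Affine o where
  line_add : ∀ (h : G.Direction o) (s s' t : T), G.line h (toFun s) = G.line h (toFun s') →
    G.line h (toFun (s + t)) = G.line h (toFun (s' + t))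

theorem bijective_translationGroup_apply (a : G.Affine o) :
    Function.Bijective fun t : G.translationGroup o ↦ t.1 a := by
  refine ⟨fun s t hst ↦ ?_, fun b ↦ ?_⟩
  · obtain ⟨h, hr⟩ := (t⁻¹ * s).2
    have hra : (t⁻¹ * s).1 a = a := t.1.symm_apply_eq.2 hst
    exact (inv_mul_eq_one.1 (Subtype.ext (Equiv.ext (hr.apply_eq_self hra)))).symm
  · obtain ⟨h, hab⟩ := exists_direction a b
    obtain ⟨t, ht, rfl⟩ := exists_perm_isTranslationAlong hab
    exact ⟨⟨t, h, ht⟩, rfl⟩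

variable (G) in
/-- The chart that sends a translation to the image of the origin `a`. -/
noncomputable def chart (a : G.Affine o) : G.Chart o (Additive (G.translationGroup o)) where
  toEquiv := Additive.toMul.trans (Equiv.ofBijective _ (bijective_translationGroup_apply a))
  line_add h s s' t e := by
    rw [add_comm s, add_comm s']
    obtain ⟨_, ht⟩ := t.toMul.2
    exact ht.isDilation e

end Translations

namespace Chart

variable {o w : X} {T : Type*} [AddCommGroup T] (e : G.Chart o T) {s t u v : T}

instance : CoeFun (G.Chart o T) fun _ ↦ T → G.Affine o := ⟨fun e ↦ e.toEquiv⟩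

theorem line_add_eq {h : G.Direction o} (hst : G.line h (e s) = G.line h (e t)) (u : T) :
    G.line h (e (s + u)) = G.line h (e (t + u)) :=
  e.line_add h s t u hst

theorem perp_sub_add (hs : G.Perp w (e s)) (ht : G.Perp w (e t)) (hu : G.Perp w (e u)) :
    G.Perp w (e (s - t + u)) := by
  by_cases hst : s = t
  · rwa [hst, sub_self, zero_add]
  obtain ⟨h, hh⟩ := exists_direction (e s) (e t)
  have hwh : G.Perp w h := perp_direction (e.injective.ne hst) hh hs ht
  have hsu := e.line_add_eq hh (u - t)
  rw [add_sub_cancel, show s + (u - t) = s - t + u by abel] at hsu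
  exact perp_of_line_eq hsu.symm hwh hu

/-- The translations along the centre `o` of the plane at infinity. -/
def vertical : AddSubgroup T where
  carrier := {z | G.line o (e 0) = G.line o (e z)}
  zero_mem' := rfl
  add_mem' {z z'} hz hz' := by
    have hzz' := e.line_add_eq (h := center o) hz z'
    rw [zero_add] at hzz'
    exact hz'.trans hzz'
  neg_mem' {z} hz := by
    have hz' := e.line_add_eq (h := center o) hz (-z)
    rw [zero_add, add_neg_cancel] at hz'
    exact hz'.symm

/-- The parameters of the points in the polar plane of the origin `e 0`. -/
def horizontal : AddSubgroup T where
  carrier := {t | G.Perp (e 0) (e t)}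
  zero_mem' := G.perp_self _
  add_mem' {s t} hs ht := by
    simpa using e.perp_sub_add hs (G.perp_self (e 0)) ht
  neg_mem' {s} hs := by
    simpa using e.perp_sub_add (G.perp_self (e 0)) hs (G.perp_self (e 0))

theorem line_center_add (z : e.vertical) (t : T) : G.line o (e t) = G.line o (e (t + z)) := by
  have hz := e.line_add_eq (h := center o) z.2 t
  rwa [zero_add, add_comm] at hz

theorem perp_add_vertical (z : e.vertical) (hst : G.Perp (e s) (e t)) :
    G.Perp (e (s + z) : X) (e (t + z)) := by
  by_cases hne : s = t
  · rw [hne]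
    exact G.perp_self _
  obtain ⟨h, hh⟩ := exists_direction (e s) (e t)
  have hht : G.Perp (h : X) (e t) :=
    G.symm (perp_direction (e.injective.ne hne) hh (G.symm hst) (G.perp_self _))
  have hhtz : G.Perp (h : X) (e (t + z)) := perp_of_line_eq (e.line_center_add z t) h.2 hht
  exact G.symm (perp_of_line_eq (e.line_add_eq hh z).symm (G.symm hhtz) (G.perp_self _))

theorem existsUnique_perp_add (s t : T) : ∃! z : e.vertical, G.Perp (e (t + z) : X) (e s) := by
  obtain ⟨y, hyt, hys⟩ := exists_mem_line_perp (direction_ne (center o) (e t)) (e s : X)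
  have hy : ¬ G.Perp y o := not_perp_of_mem_line hyt <| by
    rintro rfl
    exact (e s).2 (G.symm hys)
  obtain ⟨t', ht'⟩ := e.surjective ⟨y, hy⟩
  obtain rfl : (e t' : X) = y := congrArg Subtype.val ht'
  have hz : G.line o (e 0) = G.line o (e (t' - t)) := by
    simpa [sub_eq_add_neg] using e.line_add_eq (line_eq_of_mem_line hyt) (-t)
  refine ⟨⟨t' - t, hz⟩, by simpa using hys, fun z hz' ↦ ?_⟩
  by_contra hne
  have hne' : e (t + z) ≠ e t' := fun h ↦
    hne (Subtype.ext (eq_sub_of_add_eq' (e.injective h)))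
  exact (e s).2 (perp_direction (h := center o) hne'
    ((e.line_center_add z t).symm.trans (line_eq_of_mem_line hyt)) (G.symm hz') (G.symm hys))

/-- The vertical translation that moves `e t` into the polar plane of `e s`. -/
noncomputable def height (s t : T) : e.vertical := (e.existsUnique_perp_add s t).choose

theorem perp_add_height (s t : T) : G.Perp (e (t + e.height s t) : X) (e s) :=
  (e.existsUnique_perp_add s t).choose_spec.1

theorem eq_height {z : e.vertical} (hz : G.Perp (e (t + z) : X) (e s)) : z = e.height s t :=
  (e.existsUnique_perp_add s t).unique hz (e.perp_add_height s t)

theorem perp_add_add_iff (z z' : e.vertical) :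
    G.Perp (e (t + z') : X) (e (s + z)) ↔ z' - z = e.height s t := by
  refine ⟨fun h ↦ e.eq_height ?_, fun h ↦ ?_⟩
  · simpa [sub_eq_add_neg, add_assoc] using e.perp_add_vertical (-z) h
  · have hz := e.perp_add_vertical z (e.perp_add_height s t)
    rw [← h] at hz
    simpa [add_assoc] using hz

theorem perp_add_iff (z : e.vertical) : G.Perp (e (t + z) : X) (e s) ↔ z = e.height s t := by
  simpa using e.perp_add_add_iff (s := s) (t := t) 0 z

theorem perp_iff_height_eq_zero : G.Perp (e t : X) (e s) ↔ e.height s t = 0 := by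
  simpa [eq_comm] using e.perp_add_iff (s := s) (t := t) 0

theorem neg_height (s t : T) : -e.height s t = e.height t s := by
  have h := G.symm ((e.perp_add_add_iff (s := s) (t := t) (-e.height s t) 0).2 (by simp))
  simpa using (e.perp_add_add_iff 0 (-e.height s t)).1 (by simpa using h)

theorem height_add {s t u : T} (hs : s ∈ e.horizontal) :
    e.height s (t + u) = e.height s t + e.height s u := by
  refine (e.eq_height (G.symm ?_)).symm
  have h := e.perp_sub_add (G.symm (e.perp_add_height s t)) (G.symm hs)
    (G.symm (e.perp_add_height s u))
  rwa [sub_zero, add_add_add_comm] at h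

/-- The alternating form on the horizontal plane whose values measure the heights of its points
over the polar planes. -/
noncomputable def form : e.horizontal →+ e.horizontal →+ e.vertical :=
  .mk' (fun u ↦ .mk' (fun v ↦ e.height u v) fun _ _ ↦ e.height_add u.2) fun u u' ↦ by
    refine DFunLike.ext _ _ fun v ↦ ?_
    simp only [AddMonoidHom.mk'_apply, AddMonoidHom.add_apply, AddSubgroup.coe_add]
    rw [← e.neg_height, e.height_add v.2, neg_add, e.neg_height, e.neg_height]

theorem form_eq_zero_iff {u v : e.horizontal} : e.form u v = 0 ↔ G.Perp (e v : X) (e u) :=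
  e.perp_iff_height_eq_zero.symm

theorem coe_ne_of_ne {s t : T} (hst : s ≠ t) : (e s : X) ≠ e t :=
  Subtype.coe_injective.ne (e.injective.ne hst)

theorem isAreaForm_form : IsAreaForm e.form where
  apply_self u := e.form_eq_zero_iff.2 (G.perp_self _)
  trans {u v w} hu huv huw := by
    rw [form_eq_zero_iff] at huv huw ⊢
    have hne : (e 0 : X) ≠ e u := e.coe_ne_of_ne (Subtype.coe_injective.ne hu.symm)
    exact G.perp_of_perp_pair hne hne (G.perp_self _) u.2 (G.symm u.2) (G.perp_self _)
      (G.symm w.2) huw (G.symm v.2) huv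
  exists_apply_eq {a b} hab z := by
    -- The point `e u` is the pole of the plane through `e 0`, `e a` and `e (b - z)`.
    obtain ⟨w, w₀, wa, wb⟩ := G.exists_perp₃ (e 0) (e a) (e (b + (-z : e.vertical)))
    have ha : a ≠ 0 := IsAreaForm.ne_zero_of_apply_ne_zero hab
    have hw : ¬ G.Perp w o := fun wo ↦ by
      have wb' : G.Perp w (e b) := perp_of_line_eq (e.line_center_add (-z) b).symm wo wb
      exact hab <| e.form_eq_zero_iff.2 <| G.perp_of_perp_pair (direction_ne ⟨w, wo⟩ (e 0)).symm
        (e.coe_ne_of_ne (Subtype.coe_injective.ne ha.symm)) (G.perp_self _) (G.symm w₀)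
        (G.symm a.2) (G.symm wa) (G.symm b.2) (G.symm wb') (G.symm a.2) (G.perp_self _)
    obtain ⟨u, hu⟩ := e.surjective ⟨w, hw⟩
    obtain rfl : (e u : X) = w := congrArg Subtype.val hu
    refine ⟨⟨u, G.symm w₀⟩, e.form_eq_zero_iff.2 wa, Eq.symm (e.eq_height ?_)⟩
    simpa using e.perp_add_vertical z wb

theorem exists_horizontal_not_perp {y : X} (hy : G.Perp (e 0 : X) y) (hne : (e 0 : X) ≠ y) :
    ∃ t ∈ e.horizontal, ¬ G.Perp (e t : X) y := by
  obtain ⟨g, hg, hgy⟩ := G.exists_perp_not_perp hne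
  by_cases hgo : G.Perp g o
  · lift g to G.Direction o using hgo
    obtain ⟨b, hb, hgb⟩ := exists_ne_line_eq g (e 0)
    obtain ⟨t, rfl⟩ := e.surjective b
    refine ⟨t, perp_of_line_eq hgb (G.symm hg) (G.perp_self _), fun hty ↦ hgy ?_⟩
    exact G.symm (perp_direction hb.symm hgb (G.symm hy) (G.symm hty))
  · obtain ⟨t, ht⟩ := e.surjective ⟨g, hgo⟩
    obtain rfl : (e t : X) = g := congrArg Subtype.val ht
    exact ⟨t, G.symm hg, hgy⟩

theorem form_ne_zero : e.form ≠ 0 := by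
  obtain ⟨h, ho, h₀, -⟩ := G.exists_perp₃ o (e 0) (e 0)
  obtain ⟨b, hb, hhb⟩ := exists_ne_line_eq ⟨h, ho⟩ (e 0)
  obtain ⟨s, rfl⟩ := e.surjective b
  have hs : s ∈ e.horizontal := perp_of_line_eq hhb (G.symm h₀) (G.perp_self _)
  obtain ⟨t, ht, hts⟩ := e.exists_horizontal_not_perp hs (Subtype.coe_injective.ne hb.symm)
  intro h
  exact hts (e.form_eq_zero_iff.1 (DFunLike.congr_fun (DFunLike.congr_fun h ⟨s, hs⟩) ⟨t, ht⟩))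

theorem bijective_coprod : Function.Bijective (e.horizontal.subtype.coprod e.vertical.subtype) := by
  refine ⟨(injective_iff_map_eq_zero _).2 fun ⟨u, z⟩ huz ↦ ?_, fun t ↦ ?_⟩
  · have huz : (u : T) + z = 0 := huz
    have hz : z = e.height 0 u := e.eq_height (by rw [huz]; exact G.perp_self _)
    have hz0 : z = 0 := hz.trans (e.perp_iff_height_eq_zero.1 (G.symm u.2))
    rw [hz0, AddSubgroup.coe_zero, add_zero] at huz
    exact Prod.ext (Subtype.ext huz) hz0
  · exact ⟨(⟨t + e.height 0 t, G.symm (e.perp_add_height 0 t)⟩, -e.height 0 t), by simp⟩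

end Chart

/-- Affine coordinates for a chart in which the null polarity is a standard one. -/
def Chart.IsAffineCoordinates {o : X} {T K : Type*} [AddCommGroup T] [Field K]
    (e : G.Chart o T) (κ : T ≃+ (K × K) × K) : Prop :=
  ∀ s t, G.Perp (e t : X) (e s) ↔
    (κ t).2 - (κ s).2 = (κ s).1.1 * (κ t).1.2 - (κ s).1.2 * (κ t).1.1

theorem Chart.exists_isAffineCoordinates {o : X} {T : Type u} [AddCommGroup T] (e : G.Chart o T) :
    ∃ (K : Type u) (_ : Field K) (κ : T ≃+ (K × K) × K), e.IsAffineCoordinates κ := by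
  obtain ⟨K, hK, φ, ψ, hφ⟩ := e.isAreaForm_form.exists_field e.form_ne_zero
  let split := AddEquiv.ofBijective _ e.bijective_coprod
  refine ⟨K, hK, split.symm.trans (φ.prodCongr ψ), fun s t ↦ ?_⟩
  obtain ⟨⟨u, z⟩, rfl⟩ := split.surjective s
  obtain ⟨⟨v, z'⟩, rfl⟩ := split.surjective t
  simp only [AddEquiv.trans_apply, AddEquiv.symm_apply_apply]
  change G.Perp (e (v + z') : X) (e (u + z)) ↔ ψ z' - ψ z = (φ u).1 * (φ v).2 - (φ u).2 * (φ v).1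
  rw [e.perp_add_add_iff, ← hφ, ← map_sub, ψ.injective.eq_iff]
  rfl

namespace Chart

variable {o : X} {T K : Type*} [AddCommGroup T] [Field K] {e : G.Chart o T}
  {κ : T ≃+ (K × K) × K} {s t t' : T}

/-- The direction of the translation `t`. -/
noncomputable def direction (e : G.Chart o T) (t : T) : G.Direction o :=
  (exists_direction (e 0) (e t)).choose

theorem line_direction (e : G.Chart o T) (s t : T) :
    G.line (e.direction t) (e s) = G.line (e.direction t) (e (t + s)) := by
  have h := e.line_add_eq (h := e.direction t) (exists_direction (e 0) (e t)).choose_spec s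
  rwa [zero_add] at h

theorem perp_direction_iff (ht : t ≠ 0) :
    G.Perp (e.direction t : X) (e s) ↔ G.Perp (e (t + s) : X) (e s) := by
  refine ⟨fun h ↦ ?_, fun h ↦ ?_⟩
  · exact G.symm (perp_of_line_eq (e.line_direction s t) (G.symm h) (G.perp_self _))
  · exact G.symm (perp_direction (e.injective.ne (right_ne_add.2 ht))
      (e.line_direction s t) (G.perp_self _) (G.symm h))

namespace IsAffineCoordinates

theorem perp_direction_iff (hκ : e.IsAffineCoordinates κ) (ht : t ≠ 0) :
    G.Perp (e.direction t : X) (e s) ↔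
      (κ t).2 = (κ s).1.1 * (κ t).1.2 - (κ s).1.2 * (κ t).1.1 := by
  rw [Chart.perp_direction_iff ht, hκ, map_add, Prod.fst_add, Prod.fst_add, Prod.snd_add,
    Prod.snd_add]
  constructor <;> intro h <;> linear_combination h

theorem direction_eq_center (hκ : e.IsAffineCoordinates κ) (ht : t ≠ 0) (h : (κ t).1 = 0) :
    e.direction t = center o := by
  by_contra hne
  obtain ⟨w, hw, hwo⟩ := G.exists_perp_not_perp (Subtype.coe_injective.ne hne)
  obtain ⟨s, hs⟩ := e.surjective ⟨w, hwo⟩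
  obtain rfl : (e s : X) = w := congrArg Subtype.val hs
  have h2 : (κ t).2 = 0 := by simpa [h] using (hκ.perp_direction_iff ht).1 (G.symm hw)
  exact ht ((map_eq_zero_iff κ κ.injective).1 (Prod.ext h h2))

theorem exists_perp_direction (hκ : e.IsAffineCoordinates κ) (ht : t ≠ 0) (h : (κ t).1 ≠ 0) :
    ∃ s, G.Perp (e.direction t : X) (e s) := by
  suffices ∃ x y : K, (κ t).2 = x * (κ t).1.2 - y * (κ t).1.1 by
    obtain ⟨x, y, hxy⟩ := this
    exact ⟨κ.symm ((x, y), 0), (hκ.perp_direction_iff ht).2 (by simpa using hxy)⟩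
  by_cases h₁ : (κ t).1.1 = 0
  · have h₂ : (κ t).1.2 ≠ 0 := fun h₂ ↦ h (Prod.ext h₁ h₂)
    exact ⟨(κ t).2 / (κ t).1.2, 0, by simp [h₂]⟩
  · exact ⟨0, -((κ t).2 / (κ t).1.1), by simp [h₁]⟩

theorem perp_direction_direction_iff (hκ : e.IsAffineCoordinates κ) (ht : t ≠ 0) (ht' : t' ≠ 0) :
    G.Perp (e.direction t : X) (e.direction t') ↔
      (κ t).1.1 * (κ t').1.2 - (κ t).1.2 * (κ t').1.1 = 0 := by
  by_cases h : (κ t).1 = 0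
  · simpa [hκ.direction_eq_center ht h, h] using G.symm (e.direction t').2
  obtain ⟨s, hs⟩ := hκ.exists_perp_direction ht h
  have hst : G.Perp (e.direction t : X) (e.direction t') ↔
      G.Perp (e.direction t : X) (e (t' + s)) :=
    ⟨fun h ↦ perp_of_line_eq (e.line_direction s t') h hs,
      perp_direction (e.injective.ne (right_ne_add.2 ht')) (e.line_direction s t') hs⟩
  have hs := (hκ.perp_direction_iff ht).1 hs
  rw [hst, hκ.perp_direction_iff ht, map_add]
  simp only [Prod.fst_add, Prod.snd_add]
  constructor <;> intro h
  · linear_combination h - hs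
  · linear_combination hs + h

end IsAffineCoordinates

theorem exists_direction_eq (e : G.Chart o T) (h : G.Direction o) :
    ∃ t ≠ 0, e.direction t = h := by
  obtain ⟨b, hb, hhb⟩ := exists_ne_line_eq h (e 0)
  obtain ⟨t, rfl⟩ := e.surjective b
  refine ⟨t, by rintro rfl; exact hb rfl, direction_unique hb.symm ?_ hhb⟩
  simpa using e.line_direction 0 t

end Chart

section SymplecticCoordinates

variable {K : Type*} [Field K]

variable (G) in
/-- Homogeneous coordinates of the space that identify the null polarity with the one of the
standard symplectic form. The value of `Ψ` at the zero vector is junk. -/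
structure IsSymplecticCoordinates (Ψ : (Fin 4 → K) → X) : Prop where
  perp_iff : ∀ {v w}, v ≠ 0 → w ≠ 0 → (G.Perp (Ψ v) (Ψ w) ↔ symplecticForm K v w = 0)
  exists_apply_eq : ∀ a, ∃ v ≠ 0, Ψ v = a

namespace Chart

variable {o : X} {T : Type*} [AddCommGroup T] {e : G.Chart o T} {κ : T ≃+ (K × K) × K}

open Classical in
/-- The extension of affine coordinates to homogeneous ones, the plane at infinity being
`v 0 = 0`. -/
noncomputable def homogeneous (e : G.Chart o T) (κ : T ≃+ (K × K) × K) (v : Fin 4 → K) : X :=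
  if v 0 = 0 then e.direction (κ.symm ((v 1, v 2), v 3))
  else e (κ.symm ((v 1 / v 0, v 2 / v 0), v 3 / v 0))

theorem symm_ne_zero_of_apply_zero {v : Fin 4 → K} (hv : v ≠ 0) (h₀ : v 0 = 0) :
    κ.symm ((v 1, v 2), v 3) ≠ 0 := fun h ↦ by
  have h := (map_eq_zero_iff κ.symm κ.symm.injective).1 h
  simp only [Prod.mk_eq_zero] at h
  refine hv (funext fun i ↦ ?_)
  fin_cases i
  exacts [h₀, h.1.1, h.1.2, h.2]

theorem IsAffineCoordinates.isSymplecticCoordinates (hκ : e.IsAffineCoordinates κ) :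
    G.IsSymplecticCoordinates (e.homogeneous κ) where
  perp_iff {v w} hv hw := by
    rw [symplecticForm_apply]
    by_cases hv₀ : v 0 = 0 <;> by_cases hw₀ : w 0 = 0 <;>
      simp only [homogeneous, hv₀, hw₀, if_true, if_false]
    · rw [hκ.perp_direction_direction_iff (symm_ne_zero_of_apply_zero hv hv₀)
        (symm_ne_zero_of_apply_zero hw hw₀)]
      simp only [AddEquiv.apply_symm_apply]
      constructor <;> intro h <;> linear_combination -h
    · rw [hκ.perp_direction_iff (symm_ne_zero_of_apply_zero hv hv₀)]
      simp only [AddEquiv.apply_symm_apply]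
      field_simp
      constructor <;> intro h <;> linear_combination -h
    · rw [show G.Perp (e _ : X) (e.direction _) ↔ _ from ⟨G.symm, G.symm⟩,
        hκ.perp_direction_iff (symm_ne_zero_of_apply_zero hw hw₀)]
      simp only [AddEquiv.apply_symm_apply]
      field_simp
      constructor <;> intro h <;> linear_combination h
    · rw [hκ]
      simp only [AddEquiv.apply_symm_apply]
      field_simp
      constructor <;> intro h <;> linear_combination -h
  exists_apply_eq a := by
    by_cases ha : G.Perp a o
    · obtain ⟨t, ht, hta⟩ := e.exists_direction_eq ⟨a, ha⟩
      refine ⟨![0, (κ t).1.1, (κ t).1.2, (κ t).2], fun h ↦ ht ?_, by simp [homogeneous, hta]⟩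
      refine (map_eq_zero_iff κ κ.injective).1 (Prod.ext (Prod.ext ?_ ?_) ?_)
      exacts [congrFun h 1, congrFun h 2, congrFun h 3]
    · obtain ⟨t, ht⟩ := e.surjective ⟨a, ha⟩
      exact ⟨![1, (κ t).1.1, (κ t).1.2, (κ t).2], fun h ↦ one_ne_zero (congrFun h 0),
        by simp [homogeneous, ht]⟩

end Chart

theorem exists_isSymplecticCoordinates {o a : X} (ha : ¬ G.Perp a o) :
    ∃ (K : Type u) (_ : Field K) (Ψ : (Fin 4 → K) → X), G.IsSymplecticCoordinates Ψ := by
  obtain ⟨K, hK, κ, hκ⟩ := (G.chart (o := o) ⟨a, ha⟩).exists_isAffineCoordinates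
  exact ⟨K, hK, _, hκ.isSymplecticCoordinates⟩

namespace IsSymplecticCoordinates

variable {Ψ : (Fin 4 → K) → X} {v w : Fin 4 → K}

theorem comp_ringEquiv (hΨ : G.IsSymplecticCoordinates Ψ) {F : Type*} [Field F] (σ : F ≃+* K) :
    G.IsSymplecticCoordinates fun v : Fin 4 → F ↦ Ψ (σ ∘ v) where
  perp_iff {v w} hv hw := by
    have hσ {v : Fin 4 → F} (hv : v ≠ 0) : σ ∘ v ≠ 0 := fun h ↦
      hv (funext fun i ↦ (map_eq_zero_iff σ σ.injective).1 (congrFun h i))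
    rw [hΨ.perp_iff (hσ hv) (hσ hw), ← map_eq_zero_iff σ σ.injective]
    simp [symplecticForm_apply]
  exists_apply_eq a := by
    obtain ⟨v, hv, rfl⟩ := hΨ.exists_apply_eq a
    refine ⟨σ.symm ∘ v, fun h ↦ hv (funext fun i ↦ ?_), ?_⟩
    · exact (map_eq_zero_iff σ.symm σ.symm.injective).1 (congrFun h i)
    · exact congrArg Ψ (funext fun i ↦ σ.apply_symm_apply _)

theorem apply_eq_apply_iff (hΨ : G.IsSymplecticCoordinates Ψ) (hv : v ≠ 0) (hw : w ≠ 0) :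
    Ψ v = Ψ w ↔ ∃ c : K, c • w = v := by
  refine ⟨fun h ↦ ?_, ?_⟩
  · have hker : ⨅ _ : Unit, (symplecticForm K w).ker ≤ (symplecticForm K v).ker := by
      intro u hu
      rw [iInf_const, LinearMap.mem_ker] at hu
      obtain rfl | hu₀ := eq_or_ne u 0
      · exact zero_mem _
      · exact (hΨ.perp_iff hv hu₀).1 (h ▸ (hΨ.perp_iff hw hu₀).2 hu)
    obtain ⟨c, hc⟩ := Submodule.mem_span_singleton.1 <| by
      simpa using mem_span_of_iInf_ker_le_ker hker
    refine ⟨c, LinearMap.ker_eq_bot.1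
      (LinearMap.separatingLeft_iff_ker_eq_bot.1 separatingLeft_symplecticForm) ?_⟩
    rwa [map_smul]
  · rintro ⟨c, rfl⟩
    by_contra hne
    obtain ⟨a, ha, ha'⟩ := G.exists_perp_not_perp (Ne.symm hne)
    obtain ⟨u, hu, rfl⟩ := hΨ.exists_apply_eq a
    rw [hΨ.perp_iff hu hw] at ha
    rw [hΨ.perp_iff hu hv, map_smul, ha, smul_zero] at ha'
    exact ha' rfl

theorem bijective_rep (hΨ : G.IsSymplecticCoordinates Ψ) :
    Function.Bijective fun p : Projectivization K (Fin 4 → K) ↦ Ψ p.rep := by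
  refine ⟨fun p p' h ↦ ?_, fun a ↦ ?_⟩
  · rw [← p.mk_rep, ← p'.mk_rep, Projectivization.mk_eq_mk_iff']
    exact (hΨ.apply_eq_apply_iff p.rep_nonzero p'.rep_nonzero).1 h
  · obtain ⟨v, hv, rfl⟩ := hΨ.exists_apply_eq a
    refine ⟨.mk K v hv, (hΨ.apply_eq_apply_iff (Projectivization.rep_nonzero _) hv).2 ?_⟩
    obtain ⟨c, hc⟩ := Projectivization.exists_smul_eq_mk_rep K v hv
    exact ⟨c, hc⟩

/-- The identification of the points of the space with those of a projective space. -/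
noncomputable def equiv (hΨ : G.IsSymplecticCoordinates Ψ) :
    X ≃ Projectivization K (Fin 4 → K) :=
  (Equiv.ofBijective _ hΨ.bijective_rep).symm

theorem apply_rep_equiv (hΨ : G.IsSymplecticCoordinates Ψ) (a : X) : Ψ (hΨ.equiv a).rep = a :=
  hΨ.equiv.symm_apply_apply a

theorem perp_iff_rep (hΨ : G.IsSymplecticCoordinates Ψ) (a b : X) :
    G.Perp a b ↔ symplecticForm K (hΨ.equiv a).rep (hΨ.equiv b).rep = 0 := by
  rw [← hΨ.perp_iff (Projectivization.rep_nonzero _) (Projectivization.rep_nonzero _),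
    hΨ.apply_rep_equiv, hΨ.apply_rep_equiv]

theorem exists_perp_pair_iff_submodule_le (hΨ : G.IsSymplecticCoordinates Ψ)
    {M : Submodule K (Fin 4 → K)} (hM : Module.finrank K M = 2)
    (hM₀ : ∀ v ∈ M, ∀ w ∈ M, symplecticForm K v w = 0) :
    ∃ a b, a ≠ b ∧ G.Perp a b ∧
      ∀ c, (hΨ.equiv c).submodule ≤ M ↔ G.Perp c a ∧ G.Perp c b := by
  let β := Module.finBasisOfFinrankEq K M hM
  have hβ (i : Fin 2) : (β i : Fin 4 → K) ≠ 0 := fun h ↦ β.ne_zero i (Subtype.ext h)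
  refine ⟨Ψ (β 0), Ψ (β 1), fun h ↦ ?_, ?_, fun c ↦ ?_⟩
  · obtain ⟨c, hc⟩ := (hΨ.apply_eq_apply_iff (hβ 0) (hβ 1)).1 h
    exact absurd (congrArg (β.repr · 0) (Subtype.ext hc : c • β 1 = β 0)) (by simp)
  · exact (hΨ.perp_iff (hβ 0) (hβ 1)).2 (hM₀ _ (β 0).2 _ (β 1).2)
  · have hc (i : Fin 2) :
        G.Perp c (Ψ (β i)) ↔ symplecticForm K (hΨ.equiv c).rep (β i) = 0 := by
      rw [← hΨ.perp_iff (Projectivization.rep_nonzero _) (hβ i), hΨ.apply_rep_equiv]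
    rw [hc, hc, ← Fin.forall_fin_two (p := fun i ↦ symplecticForm K _ (β i) = 0),
      Projectivization.submodule_eq, Submodule.span_singleton_le_iff_mem]
    refine ⟨fun h i ↦ hM₀ _ h _ (β i).2, fun h ↦ ?_⟩
    have hM₁ := orthogonal_eq_self_of_isotropic nondegenerate_symplecticForm hM₀
      (by simp [hM])
    have hcM : symplecticForm K (hΨ.equiv c).rep ∘ₗ M.subtype = 0 :=
      β.ext h
    rw [← hM₁]
    exact fun v hv ↦ isAlt_symplecticForm.isRefl _ _ (LinearMap.congr_fun hcM ⟨v, hv⟩)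

end IsSymplecticCoordinates

end SymplecticCoordinates

end NullPolarity

/-! ### Inversive planes -/

theorem existsUnique_notMem_range_of_card_eq_add_one {α β : Type*} [Finite β] {f : α → β}
    (hf : Function.Injective f) (h : Nat.card β = Nat.card α + 1) : ∃! b, b ∉ Set.range f := by
  have hcard : (Set.range f)ᶜ.ncard = 1 := by
    have := Set.ncard_add_ncard_compl (Set.range f)
    rw [Set.ncard_range_of_injective hf, h] at this
    omega
  obtain ⟨b, hb⟩ := Set.ncard_eq_one.1 hcard
  have key (c : β) : c ∉ Set.range f ↔ c = b := Set.ext_iff.1 hb c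
  exact ⟨b, (key b).2 rfl, fun c ↦ (key c).1⟩

namespace InversivePlane

variable {q : ℕ} {P : Type} [Fintype P] {I : InversivePlane q P}

variable (I) in
/-- The type of circles of an inversive plane. -/
abbrev Circle : Type := {C // C ∈ I.circles}

theorem circle_eq_of_mem {x y z : P} (hxy : x ≠ y) (hxz : x ≠ z) (hyz : y ≠ z) {C D : I.Circle}
    (hxC : x ∈ C.1) (hyC : y ∈ C.1) (hzC : z ∈ C.1) (hxD : x ∈ D.1) (hyD : y ∈ D.1)
    (hzD : z ∈ D.1) : C = D :=
  Subtype.ext <| (I.three_points x y z hxy hxz hyz).unique ⟨C.2, hxC, hyC, hzC⟩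
    ⟨D.2, hxD, hyD, hzD⟩

theorem circle_nonempty (C : I.Circle) : C.1.Nonempty := by
  rw [← Finset.card_pos, I.circle_card _ C.2]
  exact q.succ_pos

theorem exists_notMem (C : I.Circle) : ∃ z, z ∉ C.1 := by
  by_contra! h
  have hcard := I.circle_card _ C.2
  rw [Finset.eq_univ_of_forall h, Finset.card_univ, I.card_points] at hcard
  nlinarith [I.two_le]

theorem exists_mem_ne_ne (C : I.Circle) (x y : P) : ∃ z ∈ C.1, z ≠ x ∧ z ≠ y := by
  classical
  have hlt : ({x, y} : Finset P).card < C.1.card := by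
    have := I.circle_card C.1 C.2
    have := I.two_le
    have := Finset.card_le_two (a := x) (b := y)
    omega
  obtain ⟨z, hz, hz'⟩ := Finset.exists_mem_notMem_of_card_lt_card hlt
  exact ⟨z, hz, by simpa using hz'⟩

include I in
theorem exists_ne_ne (x y : P) : ∃ z, z ≠ x ∧ z ≠ y := by
  classical
  have hlt : ({x, y} : Finset P).card < (Finset.univ : Finset P).card := by
    have := I.two_le
    have := Finset.card_le_two (a := x) (b := y)
    rw [Finset.card_univ, I.card_points]
    nlinarith
  obtain ⟨z, -, hz⟩ := Finset.exists_mem_notMem_of_card_lt_card hlt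
  exact ⟨z, by simpa using hz⟩

variable (I) in
theorem exists_circle {x y : P} (hxy : x ≠ y) (z : P) :
    ∃ C : I.Circle, x ∈ C.1 ∧ y ∈ C.1 ∧ z ∈ C.1 := by
  have h₃ {z : P} (hx : z ≠ x) (hy : z ≠ y) : ∃ C : I.Circle, x ∈ C.1 ∧ y ∈ C.1 ∧ z ∈ C.1 := by
    obtain ⟨C, hC, h⟩ := (I.three_points x y z hxy hx.symm hy.symm).exists
    exact ⟨⟨C, hC⟩, h⟩
  obtain ⟨z', hx', hy'⟩ := I.exists_ne_ne x y
  rcases eq_or_ne z x with rfl | hx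
  · exact (h₃ hx' hy').imp fun C h ↦ ⟨h.1, h.2.1, h.1⟩
  rcases eq_or_ne z y with rfl | hy
  · exact (h₃ hx' hy').imp fun C h ↦ ⟨h.1, h.2.1, h.2.1⟩
  exact h₃ hx hy

theorem exists_mem_notMem (C : I.Circle) {D : I.Circle} (h : C ≠ D) : ∃ x ∈ C.1, x ∉ D.1 := by
  by_contra! hsub
  refine h (Subtype.ext (Finset.eq_of_subset_of_card_le hsub ?_))
  rw [I.circle_card _ C.2, I.circle_card _ D.2]

section through

open scoped Classical in
variable (I) in
/-- The finite set of circles through two points. -/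
noncomputable def through (x y : P) : Finset I.Circle := {C | x ∈ C.1 ∧ y ∈ C.1}

theorem mem_through {x y : P} {C : I.Circle} : C ∈ I.through x y ↔ x ∈ C.1 ∧ y ∈ C.1 := by
  simp [through]

theorem existsUnique_mem_through {x y z : P} (hxy : x ≠ y) (hx : z ≠ x) (hy : z ≠ y) :
    ∃! C, C ∈ I.through x y ∧ z ∈ C.1 := by
  obtain ⟨C, hxC, hyC, hzC⟩ := I.exists_circle hxy z
  refine ⟨C, ⟨mem_through.2 ⟨hxC, hyC⟩, hzC⟩, fun D ⟨hD, hzD⟩ ↦ ?_⟩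
  obtain ⟨hxD, hyD⟩ := mem_through.1 hD
  exact circle_eq_of_mem hxy hx.symm hy.symm hxD hyD hzD hxC hyC hzC

theorem card_through {x y : P} (hxy : x ≠ y) : (I.through x y).card = q + 1 := by
  classical
  have hpts : ({x, y}ᶜ : Finset P).card = (q + 1) * (q - 1) := by
    rw [Finset.card_compl, Finset.card_pair hxy, I.card_points]
    simpa using Nat.sq_sub_sq q 1
  have hcount := Finset.card_mul_eq_card_mul (s := ({x, y}ᶜ : Finset P)) (t := I.through x y)
    (fun z C ↦ z ∈ C.1) (m := 1) (n := q - 1) (fun z hz ↦ ?_) fun C hC ↦ ?_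
  · rw [mul_one, hpts] at hcount
    have := I.two_le
    exact (Nat.eq_of_mul_eq_mul_right (by omega) hcount).symm
  · simp only [Finset.mem_compl, Finset.mem_insert, Finset.mem_singleton, not_or] at hz
    obtain ⟨C, hC, huniq⟩ := I.existsUnique_mem_through hxy hz.1 hz.2
    refine Finset.card_eq_one.2 ⟨C, Finset.ext fun D ↦ ?_⟩
    rw [Finset.mem_bipartiteAbove, Finset.mem_singleton]
    exact ⟨huniq D, fun h ↦ h ▸ hC⟩
  · have hpair : {x, y} ⊆ C.1 := by
      simpa [Finset.insert_subset_iff] using mem_through.1 hC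
    have hinter : ({x, y}ᶜ : Finset P).bipartiteBelow (fun z C ↦ z ∈ C.1) C = C.1 \ {x, y} := by
      ext z
      simp [and_comm]
    rw [hinter, Finset.card_sdiff_of_subset hpair, Finset.card_pair hxy, I.circle_card _ C.2]
    omega

theorem exists_mem_mem_notMem {x y z : P} (hxy : x ≠ y) (hx : z ≠ x) (hy : z ≠ y) :
    ∃ C : I.Circle, x ∈ C.1 ∧ y ∈ C.1 ∧ z ∉ C.1 := by
  obtain ⟨C, -, huniq⟩ := I.existsUnique_mem_through hxy hx hy
  have hlt : 1 < (I.through x y).card := by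
    have := I.two_le
    rw [card_through hxy]
    omega
  obtain ⟨D, hD, hne⟩ := Finset.exists_mem_ne hlt C
  obtain ⟨hxD, hyD⟩ := mem_through.1 hD
  exact ⟨D, hxD, hyD, fun hz ↦ hne (huniq D ⟨hD, hz⟩)⟩

end through

section TouchAt

/-- The circles `C` and `D` touch at `p`: they are equal or meet in `p` only. For fixed `p` this
is an equivalence relation on the circles through `p`, and its classes are the pencils with
carrier `p`. -/
structure TouchAt (p : P) (C D : I.Circle) : Prop where
  mem_left : p ∈ C.1
  mem_right : p ∈ D.1
  eq_of_mem_of_ne : ∀ r ∈ C.1, r ∈ D.1 → r ≠ p → C = D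

theorem TouchAt.refl {p : P} {C : I.Circle} (hp : p ∈ C.1) : TouchAt p C C :=
  ⟨hp, hp, fun _ _ _ _ ↦ rfl⟩

theorem TouchAt.symm {p : P} {C D : I.Circle} (h : TouchAt p C D) : TouchAt p D C :=
  ⟨h.2, h.1, fun r hD hC hr ↦ (h.3 r hC hD hr).symm⟩

theorem TouchAt.of_mem {p r : P} {C D : I.Circle} (h : TouchAt p C D) (hC : r ∈ C.1)
    (hD : r ∈ D.1) : TouchAt r C D := by
  refine ⟨hC, hD, fun s hsC hsD hs ↦ ?_⟩
  rcases eq_or_ne s p with rfl | hsp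
  · exact h.3 r hC hD hs.symm
  · exact h.3 s hsC hsD hsp

theorem TouchAt.eq_of_ne {p r : P} {C D : I.Circle} (h : TouchAt p C D) (hne : C ≠ D)
    (hC : r ∈ C.1) (hD : r ∈ D.1) : r = p :=
  by_contra fun hr ↦ hne (h.3 r hC hD hr)

-- Among the `q + 1` circles through `p` and `x`, exactly `q` meet `C` in a point other than `p`.
theorem existsUnique_touchAt {C : I.Circle} {p x : P} (hp : p ∈ C.1) (hx : x ≠ p) :
    ∃! D, TouchAt p C D ∧ x ∈ D.1 := by
  classical
  by_cases hxC : x ∈ C.1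
  · exact ⟨C, ⟨.refl hp, hxC⟩, fun D ⟨hD, hxD⟩ ↦ (hD.3 x hxC hxD hx).symm⟩
  have hne {r : P} (hr : r ∈ C.1) : x ≠ r := fun h ↦ hxC (h ▸ hr)
  choose f hxf hpf hf using fun r : C.1.erase p ↦ I.exists_circle hx r
  let f' (r : C.1.erase p) : I.through x p := ⟨f r, mem_through.2 ⟨hxf r, hpf r⟩⟩
  have hinj : Function.Injective f' := fun r s hrs ↦ by
    have hr := Finset.mem_erase.1 r.2
    have hs := Finset.mem_erase.1 s.2
    have hfrs : f r = f s := congrArg Subtype.val hrs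
    by_contra hne
    have := circle_eq_of_mem hr.1.symm hs.1.symm (Subtype.coe_ne_coe.2 hne) hp hr.2 hs.2 (hpf r)
      (hf r) (hfrs ▸ hf s)
    exact hxC (this ▸ hxf r)
  have hmem (D : I.through x p) : D ∉ Set.range f' ↔ TouchAt p C D := by
    obtain ⟨hxD, hpD⟩ := mem_through.1 D.2
    constructor
    · refine fun hD ↦ ⟨hp, hpD, fun r hrC hrD hr ↦ ?_⟩
      refine (hD ⟨⟨r, Finset.mem_erase.2 ⟨hr, hrC⟩⟩, ?_⟩).elim
      exact Subtype.ext <| circle_eq_of_mem hx (hne hrC) hr.symm (hxf _) (hpf _) (hf _) hxD hpD hrD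
    · rintro hD ⟨r, rfl⟩
      obtain ⟨hrp, hrC⟩ := Finset.mem_erase.1 r.2
      exact hxC (hD.3 r hrC (hf r) hrp ▸ hxf r)
  have hcard : Nat.card (I.through x p) = Nat.card (C.1.erase p) + 1 := by
    rw [Nat.card_eq_finsetCard, Nat.card_eq_finsetCard, card_through hx,
      Finset.card_erase_of_mem hp, I.circle_card C C.2, Nat.add_sub_cancel]
  obtain ⟨D, hD, huniq⟩ := existsUnique_notMem_range_of_card_eq_add_one hinj hcard
  refine ⟨D, ⟨(hmem D).1 hD, (mem_through.1 D.2).1⟩, fun E ⟨hE, hxE⟩ ↦ ?_⟩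
  exact congrArg Subtype.val <|
    huniq ⟨E, mem_through.2 ⟨hxE, hE.2⟩⟩ ((hmem ⟨E, mem_through.2 ⟨hxE, hE.2⟩⟩).2 hE)

theorem TouchAt.unique {p x : P} {C D E : I.Circle} (hD : TouchAt p C D) (hE : TouchAt p C E)
    (hx : x ≠ p) (hxD : x ∈ D.1) (hxE : x ∈ E.1) : D = E :=
  (existsUnique_touchAt hD.1 hx).unique ⟨hD, hxD⟩ ⟨hE, hxE⟩

theorem TouchAt.trans {p : P} {C D E : I.Circle} (h : TouchAt p C D) (h' : TouchAt p D E) :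
    TouchAt p C E :=
  ⟨h.1, h'.2, fun _ hC hE hr ↦ h.symm.unique h' hr hC hE⟩

end TouchAt

theorem card_inter_le_two [DecidableEq P] {C D : I.Circle} (h : C ≠ D) :
    (C.1 ∩ D.1).card ≤ 2 := by
  by_contra! hlt
  obtain ⟨x, y, z, hx, hy, hz, hxy, hxz, hyz⟩ := Finset.two_lt_card_iff.1 hlt
  rw [Finset.mem_inter] at hx hy hz
  exact h (circle_eq_of_mem hxy hxz hyz hx.1 hy.1 hz.1 hx.2 hy.2 hz.2)

theorem even_card_inter [DecidableEq P] {C D : I.Circle} (h : ∀ p, ¬ TouchAt p C D) :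
    Even (C.1 ∩ D.1).card := by
  have hne : C ≠ D := by
    rintro rfl
    obtain ⟨z, hz⟩ := circle_nonempty C
    exact h z (.refl hz)
  have hone : (C.1 ∩ D.1).card ≠ 1 := fun hcard ↦ by
    obtain ⟨p, hp⟩ := Finset.card_eq_one.1 hcard
    have hmem (r : P) : r ∈ C.1 ∧ r ∈ D.1 ↔ r = p := by
      rw [← Finset.mem_inter, hp, Finset.mem_singleton]
    obtain ⟨hpC, hpD⟩ := (hmem p).2 rfl
    exact h p ⟨hpC, hpD, fun r hC hD hr ↦ absurd ((hmem r).1 ⟨hC, hD⟩) hr⟩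
  have := card_inter_le_two hne
  interval_cases (C.1 ∩ D.1).card <;> simp_all

section EvenOrder

variable (hq : Even q)
include hq

-- `C` has an odd number of points, so the circles that meet it in `0` or `2` points do not
-- partition it.
theorem exists_touchAt_of_existsUnique_mem {C : I.Circle} {𝓓 : Finset I.Circle}
    (h : ∀ r ∈ C.1, ∃! D, D ∈ 𝓓 ∧ r ∈ D.1) : ∃ D ∈ 𝓓, ∃ p, TouchAt p C D := by
  classical
  by_contra! hno
  have hsum := Finset.sum_card_bipartiteAbove_eq_sum_card_bipartiteBelow (s := C.1) (t := 𝓓)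
    fun r D ↦ r ∈ D.1
  have hone (r : P) (hr : r ∈ C.1) : (𝓓.bipartiteAbove (fun r D ↦ r ∈ D.1) r).card = 1 := by
    obtain ⟨D, hD, huniq⟩ := h r hr
    refine Finset.card_eq_one.2 ⟨D, Finset.ext fun E ↦ ?_⟩
    rw [Finset.mem_bipartiteAbove, Finset.mem_singleton]
    exact ⟨huniq E, fun h ↦ h ▸ hD⟩
  have heven (D : I.Circle) (hD : D ∈ 𝓓) :
      Even (C.1.bipartiteBelow (fun r D ↦ r ∈ D.1) D).card := by
    rw [Finset.bipartiteBelow, Finset.filter_mem_eq_inter]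
    exact even_card_inter (hno D hD)
  rw [Finset.sum_congr rfl hone, ← Finset.card_eq_sum_ones, I.circle_card _ C.2] at hsum
  exact Nat.not_even_iff_odd.2 hq.add_one (hsum ▸ Finset.even_sum _ heven)

theorem exists_mem_through_touchAt (C : I.Circle) {x y : P} (hxy : x ≠ y) :
    ∃ D ∈ I.through x y, ∃ p, TouchAt p C D := by
  by_cases hx : x ∈ C.1
  · obtain ⟨D, hD, hyD⟩ := (existsUnique_touchAt hx hxy.symm).exists
    exact ⟨D, mem_through.2 ⟨hD.2, hyD⟩, x, hD⟩
  by_cases hy : y ∈ C.1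
  · obtain ⟨D, hD, hxD⟩ := (existsUnique_touchAt hy hxy).exists
    exact ⟨D, mem_through.2 ⟨hxD, hD.2⟩, y, hD⟩
  exact exists_touchAt_of_existsUnique_mem hq fun r hr ↦
    existsUnique_mem_through hxy (ne_of_mem_of_not_mem hr hx) (ne_of_mem_of_not_mem hr hy)

theorem exists_touchAt_of_notMem {C D : I.Circle} {x : P} (hxC : x ∉ C.1) (hxD : x ∈ D.1) :
    ∃ E, TouchAt x D E ∧ ∃ p, TouchAt p C E := by
  classical
  have hpencil (r : P) (hr : r ∈ C.1) :
      ∃! E, E ∈ ({E | TouchAt x D E} : Finset I.Circle) ∧ r ∈ E.1 := by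
    simpa using existsUnique_touchAt hxD (ne_of_mem_of_not_mem hr hxC)
  obtain ⟨E, hE, hp⟩ := exists_touchAt_of_existsUnique_mem hq hpencil
  exact ⟨E, by simpa using hE, hp⟩

end EvenOrder

section Tangents

open scoped Classical in
/-- The finite set of circles through `x` that touch `C`. -/
noncomputable def tangents (C : I.Circle) (x : P) : Finset I.Circle :=
  {D | x ∈ D.1 ∧ ∃ p, TouchAt p C D}

theorem mem_tangents {C D : I.Circle} {x : P} :
    D ∈ tangents C x ↔ x ∈ D.1 ∧ ∃ p, TouchAt p C D := by
  simp [tangents]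

theorem card_tangents {C : I.Circle} {x : P} (hx : x ∉ C.1) : (tangents C x).card = q + 1 := by
  have hne {p : P} (hp : p ∈ C.1) : x ≠ p := (ne_of_mem_of_not_mem hp hx).symm
  choose f hf hxf using fun p : C.1 ↦ (existsUnique_touchAt p.2 (hne p.2)).exists
  rw [← I.circle_card _ C.2, eq_comm]
  refine Finset.card_bij (fun p hp ↦ f ⟨p, hp⟩) (fun p hp ↦ mem_tangents.2 ⟨hxf _, p, hf ⟨p, hp⟩⟩)
    (fun p hp r hr h ↦ ?_) fun D hD ↦ ?_
  · have hCne : C ≠ f ⟨r, hr⟩ := fun h ↦ hx (h ▸ hxf ⟨r, hr⟩)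
    exact (hf ⟨r, hr⟩).eq_of_ne hCne hp (h ▸ (hf ⟨p, hp⟩).2)
  · obtain ⟨hxD, p, hp⟩ := mem_tangents.1 hD
    exact ⟨p, hp.1, (hf ⟨p, hp.1⟩).unique hp (hne hp.1) (hxf _) hxD⟩

variable (hq : Even q)
include hq

-- Sending a tangent to the member of its pencil through `p` maps the `q + 1` tangents of `C`
-- through `x` onto the `q + 1` circles through `x` and `p`, hence is injective.
theorem TouchAt.eq_of_touchAt {C D D' : I.Circle} {x p p' : P} (hx : x ∉ C.1)
    (h : TouchAt x D D') (hp : TouchAt p C D) (hp' : TouchAt p' C D') : D = D' := by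
  have hxp : p ≠ x := ne_of_mem_of_not_mem hp.1 hx
  choose f hf hpf using fun E : tangents C x ↦
    (existsUnique_touchAt (mem_tangents.1 E.2).1 hxp).exists
  let f' (E : tangents C x) : I.through x p := ⟨f E, mem_through.2 ⟨(hf E).2, hpf E⟩⟩
  have hsurj : Function.Surjective f' := fun F ↦ by
    obtain ⟨hxF, hpF⟩ := mem_through.1 F.2
    obtain ⟨E, hE, hCE⟩ := exists_touchAt_of_notMem hq hx hxF
    refine ⟨⟨E, mem_tangents.2 ⟨hE.2, hCE⟩⟩, Subtype.ext ?_⟩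
    exact (hf ⟨E, _⟩).unique hE.symm hxp (hpf ⟨E, _⟩) hpF
  have hinj : Function.Injective f' := (hsurj.bijective_of_nat_card_le (by
    simp only [Nat.card_eq_finsetCard, card_tangents hx, card_through hxp.symm, le_refl])).1
  have hD : D ∈ tangents C x := mem_tangents.2 ⟨h.1, p, hp⟩
  have hD' : D' ∈ tangents C x := mem_tangents.2 ⟨h.2, p', hp'⟩
  have heq : f' ⟨D, hD⟩ = f' ⟨D', hD'⟩ :=
    Subtype.ext ((hf ⟨D, hD⟩).unique (h.trans (hf ⟨D', hD'⟩)) hxp (hpf _) (hpf _))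
  exact congrArg Subtype.val (hinj heq)

theorem exists_tangent_meeting {C S : I.Circle} {x : P} (hx : x ∉ C.1) (hxS : x ∈ S.1)
    (hS : ∀ p, ¬ TouchAt p C S) {a : P} (ha : a ∈ S.1) :
    ∃ F ∈ tangents C x, a ∈ F.1 ∧ ∀ b ∈ S.1, b ∈ F.1 → b ≠ x → b = a := by
  have hne {F : I.Circle} {p : P} (hF : TouchAt p C F) : S ≠ F := fun h ↦ hS p (h ▸ hF)
  rcases eq_or_ne a x with rfl | hax
  · obtain ⟨F, hF, p, hp⟩ := exists_touchAt_of_notMem hq hx hxS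
    exact ⟨F, mem_tangents.2 ⟨hF.2, p, hp⟩, hF.2, fun b hbS hbF _ ↦ hF.eq_of_ne (hne hp) hbS hbF⟩
  · obtain ⟨F, hF, p, hp⟩ := exists_mem_through_touchAt hq C hax.symm
    obtain ⟨hxF, haF⟩ := mem_through.1 hF
    refine ⟨F, mem_tangents.2 ⟨hxF, p, hp⟩, haF, fun b hbS hbF hbx ↦ ?_⟩
    by_contra hba
    exact hne hp (circle_eq_of_mem hax.symm hbx.symm (Ne.symm hba) hxS ha hbS hxF haF hbF)

-- Were `S` not tangent, then picking a tangent through each of its `q + 1` points would exhaust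
-- the `q + 1` tangents through `x`, and only one of them could pass through `y`.
theorem exists_touchAt_of_mem_of_mem {C D D' S : I.Circle} {x y : P} (hx : x ∉ C.1) (hxy : y ≠ x)
    (hne : D ≠ D') (hD : D ∈ tangents C x) (hD' : D' ∈ tangents C x) (hyD : y ∈ D.1)
    (hyD' : y ∈ D'.1) (hxS : x ∈ S.1) (hyS : y ∈ S.1) : ∃ p, TouchAt p C S := by
  by_contra! hS
  choose f hf hmem huniq using fun a : S.1 ↦ exists_tangent_meeting hq hx hxS hS a.2
  let f' (a : S.1) : tangents C x := ⟨f a, hf a⟩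
  have hinj : Function.Injective f' := fun a b hab ↦ Subtype.ext <| by
    have hab : f a = f b := congrArg Subtype.val hab
    rcases eq_or_ne a.1 x with ha | ha
    · rcases eq_or_ne b.1 x with hb | hb
      · rw [ha, hb]
      · exact (huniq a b b.2 (hab ▸ hmem b) hb).symm
    · exact huniq b a a.2 (hab ▸ hmem a) ha
  have hsurj : Function.Surjective f' := (hinj.bijective_of_nat_card_le (by
    simp only [Nat.card_eq_finsetCard, card_tangents hx, I.circle_card _ S.2, le_refl])).2
  obtain ⟨a, ha⟩ := hsurj ⟨D, hD⟩
  obtain ⟨b, hb⟩ := hsurj ⟨D', hD'⟩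
  have ha : f a = D := congrArg Subtype.val ha
  have hb : f b = D' := congrArg Subtype.val hb
  have hab : a = b := Subtype.ext <|
    (huniq a y hyS (ha ▸ hyD) hxy).symm.trans (huniq b y hyS (hb ▸ hyD') hxy)
  exact hne (ha ▸ hb ▸ congrArg f hab)

end Tangents

section IsInverse

/-- The points `x` and `x'` are inverse with respect to the circle `C`: a circle through `x`
touches `C` iff it passes through `x'`. -/
structure IsInverse (C : I.Circle) (x x' : P) : Prop where
  ne : x ≠ x'
  notMem_left : x ∉ C.1
  notMem_right : x' ∉ C.1
  touchAt_iff : ∀ D : I.Circle, x ∈ D.1 → ((∃ p, TouchAt p C D) ↔ x' ∈ D.1)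

variable (hq : Even q)
include hq

theorem exists_isInverse {C : I.Circle} {x : P} (hx : x ∉ C.1) : ∃ x', IsInverse C x x' := by
  have hlt : 1 < (tangents C x).card := by
    rw [card_tangents hx]
    exact Nat.lt_add_of_pos_left (by have := I.two_le; omega)
  obtain ⟨D, hD, D', hD', hne⟩ := Finset.one_lt_card.1 hlt
  obtain ⟨hxD, p, hp⟩ := mem_tangents.1 hD
  obtain ⟨hxD', p', hp'⟩ := mem_tangents.1 hD'
  obtain ⟨y, hyD, hyD', hyx⟩ : ∃ y, y ∈ D.1 ∧ y ∈ D'.1 ∧ y ≠ x := by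
    by_contra! hno
    have h : TouchAt x D D' := ⟨hxD, hxD', fun r hr hr' hrx ↦ absurd (hno r hr hr') hrx⟩
    exact hne (h.eq_of_touchAt hq hx hp hp')
  have hyC : y ∉ C.1 := fun hyC ↦
    hne ((hp.of_mem hyC hyD).unique (hp'.of_mem hyC hyD') (ne_of_mem_of_not_mem hyC hx).symm
      hxD hxD')
  have hsub : I.through x y ⊆ tangents C x := fun S hS ↦ by
    obtain ⟨hxS, hyS⟩ := mem_through.1 hS
    exact mem_tangents.2
      ⟨hxS, exists_touchAt_of_mem_of_mem hq hx hyx hne hD hD' hyD hyD' hxS hyS⟩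
  have heq : I.through x y = tangents C x :=
    Finset.eq_of_subset_of_card_le hsub (by rw [card_tangents hx, card_through hyx.symm])
  refine ⟨y, hyx.symm, hx, hyC, fun E hxE ↦ ?_⟩
  have := Finset.ext_iff.1 heq E
  rw [mem_through, mem_tangents] at this
  simpa [hxE] using this.symm

theorem isInverse_of_touchAt {C D D' : I.Circle} {x x' p p' : P} (hne : D ≠ D') (hx : x ∉ C.1)
    (hxx' : x ≠ x') (hp : TouchAt p C D) (hp' : TouchAt p' C D') (hxD : x ∈ D.1) (hxD' : x ∈ D'.1)
    (hx'D : x' ∈ D.1) (hx'D' : x' ∈ D'.1) : IsInverse C x x' := by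
  obtain ⟨y, h⟩ := exists_isInverse hq hx
  have hyD := (h.touchAt_iff D hxD).1 ⟨p, hp⟩
  have hyD' := (h.touchAt_iff D' hxD').1 ⟨p', hp'⟩
  obtain rfl : y = x' := by
    by_contra hyx'
    exact hne (circle_eq_of_mem hxx' h.ne (Ne.symm hyx') hxD hx'D hyD hxD' hx'D' hyD')
  exact h

theorem IsInverse.symm {C : I.Circle} {x x' : P} (h : IsInverse C x x') : IsInverse C x' x := by
  have hlt : 1 < (I.through x x').card := by
    rw [card_through h.ne]
    exact Nat.lt_add_of_pos_left (by have := I.two_le; omega)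
  obtain ⟨D, hD, D', hD', hne⟩ := Finset.one_lt_card.1 hlt
  obtain ⟨hxD, hx'D⟩ := mem_through.1 hD
  obtain ⟨hxD', hx'D'⟩ := mem_through.1 hD'
  obtain ⟨p, hp⟩ := (h.touchAt_iff D hxD).2 hx'D
  obtain ⟨p', hp'⟩ := (h.touchAt_iff D' hxD').2 hx'D'
  exact isInverse_of_touchAt hq hne h.notMem_right h.ne.symm hp hp' hx'D hx'D' hxD hxD'

theorem existsUnique_isInverse {p p' x : P} (hpp' : p ≠ p') (hx : x ≠ p) (hx' : x ≠ p') :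
    ∃! E : I.Circle, IsInverse E p p' ∧ x ∈ E.1 := by
  obtain ⟨D, hpD, hp'D, hxD⟩ := I.exists_circle hpp' x
  obtain ⟨S, hpS, hp'S, hxS⟩ := I.exists_mem_mem_notMem hpp' hx hx'
  obtain ⟨E, hE, r, hr⟩ := exists_touchAt_of_notMem hq hxS hxD
  have hne : D ≠ S := fun h ↦ hxS (h ▸ hxD)
  have hDE : D ≠ E := by
    rintro rfl
    exact hpp' ((hr.eq_of_ne hne.symm hpS hpD).trans (hr.eq_of_ne hne.symm hp'S hp'D).symm)
  have hpE : p ∉ E.1 := fun hpE ↦ hx (hE.eq_of_ne hDE hpD hpE).symm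
  refine ⟨E, ⟨isInverse_of_touchAt hq hne hpE hpp' hE.symm hr.symm hpD hpS hp'D hp'S, hE.2⟩, ?_⟩
  rintro E' ⟨hE', hxE'⟩
  obtain ⟨s, hs⟩ := (hE'.touchAt_iff D hpD).2 hp'D
  obtain ⟨t, ht⟩ := (hE'.touchAt_iff S hpS).2 hp'S
  exact ((hs.of_mem hxE' hxD).trans hE).eq_of_touchAt hq hxS ht.symm hr

theorem TouchAt.of_touchAt_of_touchAt {C D E : I.Circle} {p r s : P} (h : TouchAt p C D)
    (hne : C ≠ D) (hC : TouchAt r E C) (hD : TouchAt s E D) : TouchAt p E C := by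
  have hpE : p ∈ E.1 := by
    by_contra hpE
    exact hne (h.eq_of_touchAt hq hpE hC hD)
  exact hC.of_mem hpE h.1

theorem exists_tangents_meeting_of_disjoint {C D : I.Circle} (hdisj : ∀ x ∈ C.1, x ∉ D.1) :
    ∃ (E E' : I.Circle) (z z' : P), z ≠ z' ∧ TouchAt z C E ∧ TouchAt z' C E' ∧
      (∃ r, TouchAt r D E) ∧ (∃ r, TouchAt r D E') ∧ ∃ x ∈ E.1, x ∈ E'.1 := by
  classical
  choose f hf r hr using fun z : C.1 ↦ exists_touchAt_of_notMem hq (hdisj z z.2) z.2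
  obtain ⟨z, z', hzz', hnd⟩ : ∃ z z' : C.1, z ≠ z' ∧ ¬ Disjoint (f z).1 (f z').1 := by
    by_contra! hno
    have hcard := Finset.card_biUnion (s := Finset.univ) (t := fun z ↦ (f z).1)
      fun z _ z' _ hzz' ↦ hno z z' hzz'
    rw [Finset.sum_congr rfl fun z _ ↦ I.circle_card _ (f z).2, Finset.sum_const,
      Finset.card_univ, Fintype.card_coe, I.circle_card _ C.2, smul_eq_mul] at hcard
    have := Finset.card_le_univ (Finset.univ.biUnion fun z ↦ (f z).1)
    rw [hcard, I.card_points] at this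
    nlinarith [I.two_le]
  obtain ⟨x, hx, hx'⟩ := Finset.not_disjoint_iff.1 hnd
  exact ⟨f z, f z', z, z', Subtype.coe_ne_coe.2 hzz', hf z, hf z', ⟨_, hr z⟩, ⟨_, hr z'⟩, x, hx,
    hx'⟩

theorem exists_isInverse_of_disjoint {C D : I.Circle} (hdisj : ∀ x ∈ C.1, x ∉ D.1) :
    ∃ p p', p ≠ p' ∧ IsInverse C p p' ∧ IsInverse D p p' := by
  obtain ⟨E, E', z, z', hzz', hz, hz', ⟨r, hr⟩, ⟨r', hr'⟩, p, hpE, hpE'⟩ :=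
    exists_tangents_meeting_of_disjoint hq hdisj
  have hCE : C ≠ E := fun h ↦ hdisj r (h ▸ hr.2) hr.1
  have hCE' : C ≠ E' := fun h ↦ hdisj r' (h ▸ hr'.2) hr'.1
  have hne : E ≠ E' := by
    rintro rfl
    exact hzz' (hz'.eq_of_ne hCE hz.1 hz.2)
  obtain ⟨p', hp'E, hp'E', hp'⟩ : ∃ y, y ∈ E.1 ∧ y ∈ E'.1 ∧ y ≠ p := by
    by_contra! hno
    have h : TouchAt p E E' := ⟨hpE, hpE', fun s hs hs' hsp ↦ absurd (hno s hs hs') hsp⟩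
    exact hdisj p (h.of_touchAt_of_touchAt hq hne hz hz').1
      (h.of_touchAt_of_touchAt hq hne hr hr').1
  have hpC : p ∉ C.1 := fun hpC ↦
    hzz' ((hz.eq_of_ne hCE hpC hpE).symm.trans (hz'.eq_of_ne hCE' hpC hpE'))
  have hpD : p ∉ D.1 := fun hpD ↦
    hne <| ((hr.of_mem hpD hpE).symm.trans (hr'.of_mem hpD hpE')).3 p' hp'E hp'E' hp'
  exact ⟨p, p', hp'.symm, isInverse_of_touchAt hq hne hpC hp'.symm hz hz' hpE hpE' hp'E hp'E',
    isInverse_of_touchAt hq hne hpD hp'.symm hr hr' hpE hpE' hp'E hp'E'⟩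

end IsInverse

section Element

variable (I) in
/-- The elements of an inversive plane: its points and its circles. They are going to be the
points of a projective space. -/
abbrev Element : Type := P ⊕ I.Circle

variable (I) in
/-- The perpendicularity relation of elements: incidence of a point and a circle, tangency or
equality of two circles, equality of two points. -/
def Perp : I.Element → I.Element → Prop
  | .inl p, .inl r => p = r
  | .inl p, .inr C => p ∈ C.1
  | .inr C, .inl p => p ∈ C.1
  | .inr C, .inr D => ∃ p, TouchAt p C D

theorem Perp.refl (x : I.Element) : I.Perp x x := by
  rcases x with p | C
  · exact Eq.refl p
  · exact (circle_nonempty C).imp fun _ ↦ .refl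

theorem Perp.symm {x y : I.Element} (h : I.Perp x y) : I.Perp y x := by
  rcases x with p | C <;> rcases y with r | D
  · exact Eq.symm h
  · exact h
  · exact h
  · exact h.imp fun _ ↦ .symm

/-- The elements of a pencil of mutually tangent circles: its carrier `p` and the circles touching
`C` at `p`. -/
def pencil (p : P) (C : I.Circle) : Set I.Element :=
  {x | x.elim (· = p) (TouchAt p C ·)}

variable (I) in
/-- The elements of a bundle: the circles through two points `p` and `p'`. -/
def bundle (p p' : P) : Set I.Element :=
  {x | x.elim (fun _ ↦ False) fun D ↦ p ∈ D.1 ∧ p' ∈ D.1}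

variable (I) in
/-- The elements of a flock: its carriers `p` and `p'` and the circles with respect to which `p`
and `p'` are inverse. -/
def flock (p p' : P) : Set I.Element :=
  {x | x.elim (fun r ↦ r = p ∨ r = p') (IsInverse · p p')}

/-- `T` is the polar line of `S`: it consists of the elements perpendicular to any two elements of
`S`, and every element is perpendicular to some member of `T`. -/
structure IsPolarLine (S T : Set I.Element) : Prop where
  mem_of_perp : ∀ x ∈ S, ∀ y ∈ S, x ≠ y → ∀ w, I.Perp w x → I.Perp w y → w ∈ T
  perp : ∀ x ∈ S, ∀ w ∈ T, I.Perp w x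
  exists_perp : ∀ z, ∃ w ∈ T, I.Perp w z
  exists_ne_ne : ∀ x y, ∃ w ∈ T, w ≠ x ∧ w ≠ y

theorem exists_mem_ne_ne_of_mem {α : Type*} {s : Set α} {a b c : α} (ha : a ∈ s) (hb : b ∈ s)
    (hc : c ∈ s) (hab : a ≠ b) (hac : a ≠ c) (hbc : b ≠ c) (x y : α) : ∃ w ∈ s, w ≠ x ∧ w ≠ y := by
  by_contra! h
  have ha' := h a ha
  have hb' := h b hb
  have hc' := h c hc
  by_cases a = x <;> by_cases b = x <;> grind

variable (hq : Even q)

section Pencil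

theorem perp_of_mem_pencil {p : P} {C : I.Circle} {x w : I.Element}
    (hx : x ∈ pencil p C) (hw : w ∈ pencil p C) : I.Perp w x := by
  rcases x with r | D <;> rcases w with s | E
  · exact hw.trans hx.symm
  · exact hx ▸ hw.2
  · exact hw ▸ hx.2
  · exact ⟨p, hw.symm.trans hx⟩

theorem mem_pencil_of_perp_inl_inr {p : P} {C D : I.Circle} (hD : TouchAt p C D) {w : I.Element}
    (hp : I.Perp w (.inl p)) (hw : I.Perp w (.inr D)) : w ∈ pencil p C := by
  rcases w with r | E
  · exact hp
  · obtain ⟨t, ht⟩ := hw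
    exact hD.trans (ht.of_mem hp hD.2).symm

include hq

theorem mem_pencil_of_perp {p : P} {C : I.Circle} {x y w : I.Element} (hx : x ∈ pencil p C)
    (hy : y ∈ pencil p C) (hxy : x ≠ y) (hwx : I.Perp w x) (hwy : I.Perp w y) :
    w ∈ pencil p C := by
  rcases x with r | D <;> rcases y with s | E
  · exact absurd (congrArg Sum.inl (hx.trans hy.symm)) hxy
  · obtain rfl : r = p := hx
    exact mem_pencil_of_perp_inl_inr hy hwx hwy
  · obtain rfl : s = p := hy
    exact mem_pencil_of_perp_inl_inr hx hwy hwx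
  · have hne : D ≠ E := fun h ↦ hxy (congrArg Sum.inr h)
    have hDE : TouchAt p D E := hx.symm.trans hy
    rcases w with t | F
    · exact hDE.eq_of_ne hne hwx hwy
    · obtain ⟨t, ht⟩ := hwx
      obtain ⟨u, hu⟩ := hwy
      exact hx.trans (hDE.of_touchAt_of_touchAt hq hne ht hu).symm

theorem isPolarLine_pencil {p : P} {C : I.Circle} (hp : p ∈ C.1) :
    IsPolarLine (pencil p C) (pencil p C) where
  mem_of_perp _ hx _ hy hxy _ := mem_pencil_of_perp hq hx hy hxy
  perp _ hx _ := perp_of_mem_pencil hx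
  exists_perp := by
    rintro (r | D)
    · rcases eq_or_ne r p with rfl | hr
      · exact ⟨.inl r, rfl, rfl⟩
      · obtain ⟨D, hD, hrD⟩ := (existsUnique_touchAt hp hr).exists
        exact ⟨.inr D, hD, hrD⟩
    · by_cases hpD : p ∈ D.1
      · exact ⟨.inl p, rfl, hpD⟩
      · obtain ⟨E, hE, r, hr⟩ := exists_touchAt_of_notMem hq hpD hp
        exact ⟨.inr E, hE, r, hr.symm⟩
  exists_ne_ne := by
    obtain ⟨z, hz⟩ := exists_notMem C
    obtain ⟨D, hD, hzD⟩ := (existsUnique_touchAt hp (ne_of_mem_of_not_mem hp hz).symm).exists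
    have hCD : C ≠ D := fun h ↦ hz (h ▸ hzD)
    exact exists_mem_ne_ne_of_mem (a := .inl p) (b := .inr C) (c := .inr D) rfl (.refl hp) hD
      nofun nofun (Sum.inr_injective.ne hCD)

end Pencil

section BundleFlock

theorem perp_of_mem_bundle_of_mem_flock {p p' : P} {x w : I.Element} (hx : x ∈ I.bundle p p')
    (hw : w ∈ I.flock p p') : I.Perp w x := by
  rcases x with r | D
  · exact hx.elim
  rcases w with r | E
  · rcases hw with rfl | rfl
    · exact hx.1
    · exact hx.2
  · exact (hw.touchAt_iff D hx.1).2 hx.2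

theorem exists_mem_mem_bundle {p p' : P} (hpp' : p ≠ p') (r : P) :
    ∃ D : I.Circle, .inr D ∈ I.bundle p p' ∧ r ∈ D.1 := by
  obtain ⟨D, hp, hp', hr⟩ := I.exists_circle hpp' r
  exact ⟨D, ⟨hp, hp'⟩, hr⟩

theorem mem_bundle_of_perp_inl_inr {p p' : P} {E : I.Circle} (hE : IsInverse E p p')
    {w : I.Element} (hp : I.Perp w (.inl p)) (hw : I.Perp w (.inr E)) : w ∈ I.bundle p p' := by
  rcases w with r | D
  · exact hE.notMem_left (hp ▸ hw)
  · obtain ⟨t, ht⟩ := hw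
    exact ⟨hp, (hE.touchAt_iff D hp).1 ⟨t, ht.symm⟩⟩

include hq

theorem mem_flock_of_perp {p p' : P} (hpp' : p ≠ p') {x y w : I.Element}
    (hx : x ∈ I.bundle p p') (hy : y ∈ I.bundle p p') (hxy : x ≠ y) (hwx : I.Perp w x)
    (hwy : I.Perp w y) : w ∈ I.flock p p' := by
  rcases x with r | C
  · exact hx.elim
  rcases y with r | D
  · exact hy.elim
  obtain ⟨hpC, hp'C⟩ := hx
  obtain ⟨hpD, hp'D⟩ := hy
  have hne : C ≠ D := fun h ↦ hxy (congrArg Sum.inr h)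
  rcases w with r | E
  · change r = p ∨ r = p'
    by_contra! hr
    exact hne (circle_eq_of_mem hpp' hr.1.symm hr.2.symm hpC hp'C hwx hpD hp'D hwy)
  · obtain ⟨s, hs⟩ := hwx
    obtain ⟨t, ht⟩ := hwy
    have hpE : p ∉ E.1 := fun hpE ↦
      hne (((hs.of_mem hpE hpC).symm.trans (ht.of_mem hpE hpD)).3 p' hp'C hp'D hpp'.symm)
    exact isInverse_of_touchAt hq hne hpE hpp' hs ht hpC hpD hp'C hp'D

theorem mem_bundle_of_perp_inr_inr {p p' : P} {E E' : I.Circle} (hE : IsInverse E p p')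
    (hE' : IsInverse E' p p') (hne : E ≠ E') {w : I.Element} (hw : I.Perp w (.inr E))
    (hw' : I.Perp w (.inr E')) : w ∈ I.bundle p p' := by
  have hdisj {r : P} (hr : r ∈ E.1) : r ∉ E'.1 := fun hr' ↦
    hne <| (existsUnique_isInverse hq hE.ne (ne_of_mem_of_not_mem hr hE.notMem_left)
      (ne_of_mem_of_not_mem hr hE.notMem_right)).unique ⟨hE, hr⟩ ⟨hE', hr'⟩
  rcases w with r | D
  · exact hdisj hw hw'
  obtain ⟨z, hz⟩ := hw
  obtain ⟨t, ht⟩ := hw'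
  obtain ⟨B, hB, hzB⟩ := exists_mem_mem_bundle (I := I) hE.ne z
  obtain ⟨s, hs⟩ := (hE.touchAt_iff B hB.1).2 hB.2
  obtain ⟨s', hs'⟩ := (hE'.touchAt_iff B hB.1).2 hB.2
  obtain rfl : D = B :=
    (hz.trans (hs.of_mem hz.2 hzB)).eq_of_touchAt hq (hdisj hz.2) ht.symm hs'
  exact hB

theorem mem_bundle_of_perp {p p' : P} {x y w : I.Element} (hx : x ∈ I.flock p p')
    (hy : y ∈ I.flock p p') (hxy : x ≠ y) (hwx : I.Perp w x) (hwy : I.Perp w y) :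
    w ∈ I.bundle p p' := by
  have hpoint {E : I.Circle} (hE : IsInverse E p p') {r : P} (hr : r = p ∨ r = p')
      (hwr : I.Perp w (.inl r)) (hwE : I.Perp w (.inr E)) : w ∈ I.bundle p p' := by
    rcases hr with rfl | rfl
    · exact mem_bundle_of_perp_inl_inr hE hwr hwE
    · have := mem_bundle_of_perp_inl_inr (hE.symm hq) hwr hwE
      rcases w with r | D
      exacts [this, And.symm this]
  rcases x with r | E <;> rcases y with s | E'
  · have hrs : r ≠ s := fun h ↦ hxy (congrArg Sum.inl h)
    rcases w with t | D
    · exact hrs (hwx.symm.trans hwy)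
    · rcases hx with rfl | rfl <;> rcases hy with rfl | rfl
      exacts [absurd rfl hrs, ⟨hwx, hwy⟩, ⟨hwy, hwx⟩, absurd rfl hrs]
  · exact hpoint hy hx hwx hwy
  · exact hpoint hx hy hwy hwx
  · exact mem_bundle_of_perp_inr_inr hq hx hy (fun h ↦ hxy (congrArg Sum.inr h)) hwx hwy

theorem isPolarLine_bundle_flock {p p' : P} (hpp' : p ≠ p') :
    IsPolarLine (I.bundle p p') (I.flock p p') where
  mem_of_perp _ hx _ hy hxy _ := mem_flock_of_perp hq hpp' hx hy hxy
  perp _ hx _ := perp_of_mem_bundle_of_mem_flock hx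
  exists_perp := by
    classical
    rintro (r | D)
    · rcases eq_or_ne r p with rfl | hr
      · exact ⟨.inl r, .inl rfl, rfl⟩
      rcases eq_or_ne r p' with rfl | hr'
      · exact ⟨.inl r, .inr rfl, rfl⟩
      obtain ⟨E, hE, hrE⟩ := (existsUnique_isInverse (I := I) hq hpp' hr hr').exists
      exact ⟨.inr E, hE, hrE⟩
    · by_cases hp : p ∈ D.1
      · exact ⟨.inl p, .inl rfl, hp⟩
      by_cases hp' : p' ∈ D.1
      · exact ⟨.inl p', .inr rfl, hp'⟩
      have hflock (r : P) (hr : r ∈ D.1) :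
          ∃! E, E ∈ ({E | IsInverse E p p'} : Finset I.Circle) ∧ r ∈ E.1 := by
        simpa using existsUnique_isInverse hq hpp' (ne_of_mem_of_not_mem hr hp)
          (ne_of_mem_of_not_mem hr hp')
      obtain ⟨E, hE, r, hr⟩ := exists_touchAt_of_existsUnique_mem hq hflock
      exact ⟨.inr E, (Finset.mem_filter.1 hE).2, r, hr.symm⟩
  exists_ne_ne := by
    obtain ⟨z, hz, hz'⟩ := I.exists_ne_ne p p'
    obtain ⟨E, hE, -⟩ := (existsUnique_isInverse (I := I) hq hpp' hz hz').exists
    exact exists_mem_ne_ne_of_mem (a := .inl p) (b := .inl p') (c := .inr E) (.inl rfl) (.inr rfl)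
      hE (Sum.inl_injective.ne hpp') nofun nofun

theorem isPolarLine_flock_bundle {p p' : P} (hpp' : p ≠ p') :
    IsPolarLine (I.flock p p') (I.bundle p p') where
  mem_of_perp _ hx _ hy hxy _ := mem_bundle_of_perp hq hx hy hxy
  perp _ hx _ hw := (perp_of_mem_bundle_of_mem_flock hw hx).symm
  exists_perp := by
    rintro (r | C)
    · obtain ⟨D, hD, hr⟩ := exists_mem_mem_bundle (I := I) hpp' r
      exact ⟨.inr D, hD, hr⟩
    · obtain ⟨D, hD, t, ht⟩ := exists_mem_through_touchAt hq C hpp'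
      exact ⟨.inr D, mem_through.1 hD, t, ht.symm⟩
  exists_ne_ne := by
    have hlt : 2 < (I.through p p').card := by
      rw [card_through hpp']
      exact Nat.lt_succ_of_le I.two_le
    obtain ⟨C, D, E, hC, hD, hE, hCD, hCE, hDE⟩ := Finset.two_lt_card_iff.1 hlt
    exact exists_mem_ne_ne_of_mem (a := .inr C) (b := .inr D) (c := .inr E) (mem_through.1 hC)
      (mem_through.1 hD) (mem_through.1 hE) (Sum.inr_injective.ne hCD) (Sum.inr_injective.ne hCE)
      (Sum.inr_injective.ne hDE)

end BundleFlock

include hq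

theorem exists_isPolarLine_of_mem (p : P) (C : I.Circle) : ∃ S T : Set I.Element,
    .inl p ∈ S ∧ .inr C ∈ S ∧ IsPolarLine S T ∧ IsPolarLine T S := by
  by_cases hp : p ∈ C.1
  · exact ⟨_, _, Eq.refl p, .refl hp, isPolarLine_pencil hq hp, isPolarLine_pencil hq hp⟩
  · obtain ⟨p', hp'⟩ := exists_isInverse hq hp
    exact ⟨_, _, .inl rfl, hp', isPolarLine_flock_bundle hq hp'.ne,
      isPolarLine_bundle_flock hq hp'.ne⟩

theorem exists_isPolarLine {x y : I.Element} (hxy : x ≠ y) : ∃ S T : Set I.Element,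
    x ∈ S ∧ y ∈ S ∧ IsPolarLine S T ∧ IsPolarLine T S := by
  rcases x with p | C <;> rcases y with p' | D
  · have hpp' : p ≠ p' := fun h ↦ hxy (congrArg Sum.inl h)
    exact ⟨_, _, .inl rfl, .inr rfl, isPolarLine_flock_bundle hq hpp',
      isPolarLine_bundle_flock hq hpp'⟩
  · exact exists_isPolarLine_of_mem hq p D
  · obtain ⟨S, T, hp, hC, h⟩ := exists_isPolarLine_of_mem hq p' C
    exact ⟨S, T, hC, hp, h⟩
  · by_cases hdisj : ∀ r ∈ C.1, r ∉ D.1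
    · obtain ⟨p, p', hpp', hC, hD⟩ := exists_isInverse_of_disjoint hq hdisj
      exact ⟨_, _, hC, hD, isPolarLine_flock_bundle hq hpp', isPolarLine_bundle_flock hq hpp'⟩
    push Not at hdisj
    obtain ⟨p, hpC, hpD⟩ := hdisj
    by_cases ht : TouchAt p C D
    · exact ⟨_, _, .refl hpC, ht, isPolarLine_pencil hq hpC, isPolarLine_pencil hq hpC⟩
    obtain ⟨r, hrC, hrD, hrp⟩ : ∃ r ∈ C.1, r ∈ D.1 ∧ r ≠ p := by
      by_contra! hno
      exact ht ⟨hpC, hpD, fun r hrC hrD hrp ↦ absurd (hno r hrC hrD) hrp⟩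
    exact ⟨I.bundle p r, I.flock p r, ⟨hpC, hrC⟩, ⟨hpD, hrD⟩,
      isPolarLine_bundle_flock hq hrp.symm, isPolarLine_flock_bundle hq hrp.symm⟩

omit hq

theorem exists_perp_not_perp {x y : I.Element} (hxy : x ≠ y) :
    ∃ w, I.Perp w x ∧ ¬ I.Perp w y := by
  rcases x with p | C <;> rcases y with p' | D
  · exact ⟨.inl p, rfl, fun h ↦ hxy (congrArg Sum.inl h)⟩
  · by_cases hp : p ∈ D.1
    · obtain ⟨r, hrD, hrp, -⟩ := exists_mem_ne_ne D p p
      obtain ⟨z, hzD, hzp, hzr⟩ := exists_mem_ne_ne D p r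
      obtain ⟨E, hpE, hrE, hzE⟩ := I.exists_mem_mem_notMem hrp.symm hzp hzr
      refine ⟨.inr E, hpE, fun ⟨t, ht⟩ ↦ ?_⟩
      have hED : E = D := (ht.of_mem hpE hp).3 r hrE hrD hrp
      exact hzE (hED ▸ hzD)
    · exact ⟨.inl p, rfl, hp⟩
  · obtain ⟨r, hrC, hrp, -⟩ := exists_mem_ne_ne C p' p'
    exact ⟨.inl r, hrC, hrp⟩
  · obtain ⟨r, hrC, hrD⟩ := exists_mem_notMem C (D := D) fun h ↦ hxy (congrArg Sum.inr h)
    exact ⟨.inl r, hrC, hrD⟩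

theorem existsUnique_inl_perp {x y : I.Element} (hxy : x ≠ y) (h : I.Perp x y) :
    ∃! p : P, I.Perp (.inl p) x ∧ I.Perp (.inl p) y := by
  rcases x with p | C <;> rcases y with p' | D
  · exact absurd (congrArg Sum.inl h) hxy
  · exact ⟨p, ⟨rfl, h⟩, fun r hr ↦ hr.1⟩
  · exact ⟨p', ⟨h, rfl⟩, fun r hr ↦ hr.2⟩
  · obtain ⟨t, ht⟩ := h
    exact ⟨t, ⟨ht.1, ht.2⟩, fun r hr ↦ ht.eq_of_ne (fun h ↦ hxy (congrArg Sum.inr h)) hr.1 hr.2⟩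

variable (I) in
theorem nontrivial_element : Nontrivial I.Element := by
  have hcard : 1 < Fintype.card P := by
    rw [I.card_points]
    exact Nat.lt_add_of_pos_left (pow_pos (by linarith [I.two_le]) 2)
  have := Fintype.one_lt_card_iff_nontrivial.1 hcard
  exact (Sum.inl_injective (β := I.Circle)).nontrivial

include hq in
theorem exists_perp₃ (x y z : I.Element) : ∃ w, I.Perp w x ∧ I.Perp w y ∧ I.Perp w z := by
  have h₃ {x y : I.Element} (hxy : x ≠ y) (z : I.Element) :
      ∃ w, I.Perp w x ∧ I.Perp w y ∧ I.Perp w z := by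
    obtain ⟨S, T, hx, hy, hST, -⟩ := exists_isPolarLine hq hxy
    obtain ⟨w, hw, hwz⟩ := hST.exists_perp z
    exact ⟨w, hST.perp x hx w hw, hST.perp y hy w hw, hwz⟩
  rcases eq_or_ne x y with rfl | hxy
  · have := I.nontrivial_element
    obtain ⟨y, hy⟩ := exists_ne x
    obtain ⟨w, hwx, -, hwz⟩ := h₃ hy.symm z
    exact ⟨w, hwx, hwx, hwz⟩
  · exact h₃ hxy z

variable (I) in
/-- The null polarity of the three-dimensional projective space whose points are the elements of
an inversive plane of even order. -/
def nullPolarity (hq : Even q) : NullPolarity I.Element where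
  Perp := I.Perp
  perp_self := Perp.refl
  symm := Perp.symm
  exists_perp₃ := exists_perp₃ hq
  perp_of_perp_pair hxy hww' hwx hwy hwx' hwy' hux huy hzw hzw' := by
    obtain ⟨S, T, hx, hy, hST, hTS⟩ := exists_isPolarLine hq hxy
    have hT {v} := hST.mem_of_perp _ hx _ hy hxy v
    exact (hST.perp _ (hTS.mem_of_perp _ (hT hwx hwy) _ (hT hwx' hwy') hww' _ hzw hzw') _
      (hT hux huy))
  exists_ne_perp_pair hxy a b := by
    obtain ⟨S, T, hx, hy, hST, -⟩ := exists_isPolarLine hq hxy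
    obtain ⟨w, hw, hwa, hwb⟩ := hST.exists_ne_ne a b
    exact ⟨w, hwa, hwb, hST.perp _ hx w hw, hST.perp _ hy w hw⟩
  exists_perp_not_perp := exists_perp_not_perp

end Element

theorem card_circles (I : InversivePlane q P) : I.circles.card = q * (q ^ 2 + 1) := by
  classical
  have hq := I.two_le
  have hcount := Finset.card_mul_eq_card_mul (s := (Finset.univ : Finset P).offDiag)
    (t := (Finset.univ : Finset I.Circle)) (fun x C ↦ x.1 ∈ C.1 ∧ x.2 ∈ C.1)
    (m := q + 1) (n := (q + 1) * q) (fun x hx ↦ ?_) fun C _ ↦ ?_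
  · rw [Finset.offDiag_card, Finset.card_univ, I.card_points, Finset.card_univ,
      Fintype.card_coe, ← Nat.mul_sub_one, Nat.add_sub_cancel] at hcount
    refine Nat.eq_of_mul_eq_mul_right (by positivity : 0 < (q + 1) * q) ?_
    linear_combination -hcount
  · rw [← card_through (I := I) (Finset.mem_offDiag.1 hx).2.2]
    congr 1
  · have hC : C.1.offDiag.card = (q + 1) * q := by
      rw [Finset.offDiag_card, I.circle_card _ C.2, ← Nat.mul_sub_one, Nat.add_sub_cancel]
    rw [← hC]
    congr 1
    ext x
    simp only [Finset.mem_bipartiteBelow, Finset.mem_offDiag, Finset.mem_univ, true_and]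
    tauto

theorem card_element (I : InversivePlane q P) :
    Nat.card I.Element = ∑ i ∈ Finset.range 4, q ^ i := by
  rw [Nat.card_sum, Nat.card_eq_fintype_card, Nat.card_eq_finsetCard, I.card_points,
    I.card_circles]
  simp only [Finset.sum_range_succ, Finset.sum_range_zero]
  ring

theorem exists_isSymplecticCoordinates_galoisField (I : InversivePlane q P) (hq : Even q) :
    ∃ k, 1 ≤ k ∧ q = 2 ^ k ∧ ∃ Ψ : (Fin 4 → GaloisField 2 k) → I.Element,
      (I.nullPolarity hq).IsSymplecticCoordinates Ψ := by
  have := I.nontrivial_element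
  obtain ⟨x, y, hxy⟩ := exists_pair_ne I.Element
  obtain ⟨w, -, hwy⟩ := exists_perp_not_perp hxy
  obtain ⟨K, _, Ψ, hΨ⟩ := (I.nullPolarity hq).exists_isSymplecticCoordinates hwy
  have := Finite.of_equiv _ hΨ.equiv
  have hrank : 1 < Module.finrank K (Fin 4 → K) := by simp
  have := finite_of_finite_projectivization hrank
  have hcard : Nat.card K = q := natCard_eq_of_natCard_projectivization_eq hrank <| by
    rw [← Nat.card_congr hΨ.equiv, I.card_element, Module.finrank_fin_fun]
  obtain ⟨k, hk, hKk, ⟨σ⟩⟩ := exists_ringEquiv_galoisField (hcard.symm ▸ hq)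
  exact ⟨k, hk, hcard.symm.trans hKk, _, hΨ.comp_ringEquiv σ⟩

variable {hq : Even q} {K : Type*} [Field K] {Ψ : (Fin 4 → K) → I.Element}

theorem existsUnique_mem_range_inl_submodule_le
    (hΨ : (I.nullPolarity hq).IsSymplecticCoordinates Ψ) {M : Submodule K (Fin 4 → K)}
    (hM : Module.finrank K M = 2)
    (hM₀ : ∀ v ∈ M, ∀ w ∈ M, symplecticForm K v w = 0) :
    ∃! y, y ∈ Set.range (hΨ.equiv ∘ Sum.inl) ∧ y.submodule ≤ M := by
  obtain ⟨a, b, hab, hperp, hmem⟩ := hΨ.exists_perp_pair_iff_submodule_le hM hM₀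
  obtain ⟨p, hp, huniq⟩ := existsUnique_inl_perp hab hperp
  refine ⟨hΨ.equiv (.inl p), ⟨⟨p, rfl⟩, (hmem _).2 hp⟩, ?_⟩
  rintro _ ⟨⟨r, rfl⟩, hr⟩
  exact congrArg (hΨ.equiv ∘ Sum.inl) (huniq r ((hmem _).1 hr))

theorem range_inr_eq_compl_range_inl (hΨ : (I.nullPolarity hq).IsSymplecticCoordinates Ψ) :
    Set.range (hΨ.equiv ∘ Sum.inr) = (Set.range (hΨ.equiv ∘ Sum.inl))ᶜ := by
  rw [Set.range_comp, Set.range_comp, ← Set.image_compl_eq hΨ.equiv.bijective,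
    Set.compl_range_inl]

end InversivePlane

/-- Dembowski's theorem.  If `I` is an inversive plane of even order `q`, then
`q = 2^k` for some `k ≥ 1` and, with `F = GaloisField 2 k` (the field of
order `q`) and `V = F⁴`, there are a nondegenerate alternating bilinear form
`B` on `V`, an injective map `f` from the points of `I` into `ℙ(F, V)` whose
image `O` meets every totally isotropic two-dimensional subspace of `V` in
exactly one point (an ovoid of the generalized quadrangle `W(q)`), and a
bijection `g` from the circles of `I` onto the points of `ℙ(F, V)` outside
`O`, such that a point `x` lies on a circle `C` iff `B` vanishes on
representatives of `f x` and `g C` (i.e. `f x` and `g C` are collinear in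
`W(q)`). -/
theorem dembowski_inversive_plane_even_order
    {q : ℕ} (hq : Even q) (P : Type) [Fintype P]
    (I : InversivePlane q P) :
    ∃ k : ℕ, 1 ≤ k ∧ q = 2 ^ k ∧
      ∃ B : (Fin 4 → GaloisField 2 k) →ₗ[GaloisField 2 k]
            (Fin 4 → GaloisField 2 k) →ₗ[GaloisField 2 k] GaloisField 2 k,
        -- `B` is nondegenerate
        (∀ v, (∀ w, B v w = 0) → v = 0) ∧
        -- `B` is alternating
        (∀ v, B v v = 0) ∧
        ∃ (f : P → Projectivization (GaloisField 2 k) (Fin 4 → GaloisField 2 k))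
          (g : {C // C ∈ I.circles} →
               Projectivization (GaloisField 2 k) (Fin 4 → GaloisField 2 k)),
          Function.Injective f ∧
          -- the image of `f` is an ovoid of `W(q)`: it contains exactly one
          -- point of every totally isotropic two-dimensional subspace of `V`
          (∀ M : Submodule (GaloisField 2 k) (Fin 4 → GaloisField 2 k),
              Module.finrank (GaloisField 2 k) M = 2 →
              (∀ v ∈ M, ∀ w ∈ M, B v w = 0) →
              ∃! y, y ∈ Set.range f ∧ y.submodule ≤ M) ∧
          -- `g` is a bijection from the circles onto the points not in the ovoid
          Function.Injective g ∧
          Set.range g = (Set.range f)ᶜ ∧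
          -- incidence: `x ∈ C` iff `f x` and `g C` are collinear in `W(q)`
          (∀ (x : P) (C : {C // C ∈ I.circles}),
              x ∈ C.1 ↔ B (f x).rep (g C).rep = 0) := by
  obtain ⟨k, hk, hqk, Ψ, hΨ⟩ := I.exists_isSymplecticCoordinates_galoisField hq
  exact ⟨k, hk, hqk, symplecticForm _, separatingLeft_symplecticForm,
    isAlt_symplecticForm, hΨ.equiv ∘ Sum.inl, hΨ.equiv ∘ Sum.inr,
    hΨ.equiv.injective.comp Sum.inl_injective,
    fun _ ↦ InversivePlane.existsUnique_mem_range_inl_submodule_le hΨ,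
    hΨ.equiv.injective.comp Sum.inr_injective,
    InversivePlane.range_inr_eq_compl_range_inl hΨ,
    fun x C ↦ hΨ.perp_iff_rep (.inl x) (.inr C)⟩
end

section
/- If there exists an inversive plane of even order q, then q is a power of two, i.e., there exists k ≥ 1 with q = 2^k. -/
/-!
Call the points (as singletons) and the circles blocks, and call two blocks orthogonal if they meet
in an odd number of points. For even `q` an odd number of blocks passes through any three points,
equal or not, and counting incidences modulo `2` turns each of the three points into an arbitrary
block: any three blocks have a common orthogonal block. This and two counts force orthogonality to
be a polarity of a projective 3-space of order `q` with the blocks as points.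

In a space Desargues' theorem holds, so deleting a plane leaves an affine space in which the
translations with a given direction form a group of order `q`. As `q` is even, some translation `f`
is an involution. For a translation `g` in another direction, `(f * g) ^ 2 = g ^ 2` would be a
translation in two directions, so `g ^ 2 = 1`: the order of a group of exponent `2` is a power
of two.
-/

/-- A three-dimensional affine geometry with points `A`, directions (points at infinity) `D` and
planes `W`. Lines are not objects: `Join n a b` says that `a` and `b` lie on a common line with
direction `n`. -/
structure AffineGeometry (A D W : Type*) where
  Join : D → A → A → Prop
  PointOn : A → W → Prop
  DirOn : D → W → Prop
  join_refl : ∀ n a, Join n a a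
  join_symm : ∀ {n a b}, Join n a b → Join n b a
  join_trans : ∀ {n a b c}, Join n a b → Join n b c → Join n a c
  eq_of_join : ∀ {n m a b}, n ≠ m → Join n a b → Join m a b → a = b
  exists_join : ∀ a b, ∃ n, Join n a b
  exists_fourth_vertex : ∀ {n m a b c}, Join n a b → Join m a c → ∃ d, Join m b d ∧ Join n c d
  pointOn_of_join : ∀ {a b n w}, Join n a b → DirOn n w → PointOn a w → PointOn b w
  dirOn_of_join : ∀ {a b n w}, a ≠ b → Join n a b → PointOn a w → PointOn b w → DirOn n w
  exists_plane : ∀ a b c, ∃ w, PointOn a w ∧ PointOn b w ∧ PointOn c w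
  exists_plane_of_dir : ∀ a b n, ∃ w, PointOn a w ∧ PointOn b w ∧ DirOn n w
  dir_eq_of_planes : ∀ {a n m w w'}, w ≠ w' → PointOn a w → PointOn a w' →
    DirOn n w → DirOn n w' → DirOn m w → DirOn m w' → n = m
  dirOn_of_two_dirs : ∀ {m k l w w'}, m ≠ k → DirOn m w → DirOn k w → DirOn m w' → DirOn k w' →
    DirOn l w → DirOn l w'
  exists_not_pointOn : ∀ w, ∃ a, ¬ PointOn a w

namespace AffineGeometry

variable {A D W : Type*} {G : AffineGeometry A D W} {n m k : D}
  {a b c u u' v v' v'' x x' : A} {w : W}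

theorem dir_eq_of_join (hab : a ≠ b) (hn : G.Join n a b) (hm : G.Join m a b) : n = m := by
  by_contra hnm
  exact hab (G.eq_of_join hnm hn hm)

variable (G) in
theorem exists_not_join_not_join (n : D) (a b : A) :
    ∃ c, ¬ G.Join n a c ∧ ¬ G.Join n b c := by
  obtain ⟨w, ha, hb, hn⟩ := G.exists_plane_of_dir a b n
  obtain ⟨c, hc⟩ := G.exists_not_pointOn w
  exact ⟨c, fun h => hc (G.pointOn_of_join h hn ha), fun h => hc (G.pointOn_of_join h hn hb)⟩

/-- The quadrilateral `u u' v' v` is a parallelogram, not contained in a line, whose sides `u u'`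
and `v v'` have direction `n`; these two sides may degenerate to points. -/
structure Parallelogram (G : AffineGeometry A D W) (n : D) (u u' v v' : A) : Prop where
  left : G.Join n u u'
  right : G.Join n v v'
  not_join : ¬ G.Join n u v
  exists_dir : ∃ m, G.Join m u v ∧ G.Join m u' v'

namespace Parallelogram

theorem symm (h : G.Parallelogram n u u' v v') : G.Parallelogram n v v' u u' where
  left := h.right
  right := h.left
  not_join := fun hvu => h.not_join (G.join_symm hvu)
  exists_dir := h.exists_dir.imp fun _ hm => ⟨G.join_symm hm.1, G.join_symm hm.2⟩

theorem ne (h : G.Parallelogram n u u' v v') : u ≠ v := by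
  rintro rfl
  exact h.not_join (G.join_refl n u)

theorem not_join' (h : G.Parallelogram n u u' v v') : ¬ G.Join n u' v' := fun h' =>
  h.not_join (G.join_trans (G.join_trans h.left h') (G.join_symm h.right))

theorem ne' (h : G.Parallelogram n u u' v v') : u' ≠ v' := by
  rintro rfl
  exact h.not_join' (G.join_refl n u')

theorem join_iff (h : G.Parallelogram n u u' v v') (m : D) :
    G.Join m u v ↔ G.Join m u' v' := by
  obtain ⟨k, hk, hk'⟩ := h.exists_dir
  exact ⟨fun hm => dir_eq_of_join h.ne hk hm ▸ hk', fun hm => dir_eq_of_join h.ne' hk' hm ▸ hk⟩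

theorem right_unique (h₁ : G.Parallelogram n u u' v v') (h₂ : G.Parallelogram n u u' v v'') :
    v' = v'' := by
  obtain ⟨m, hm, hm'⟩ := h₁.exists_dir
  have hnm : n ≠ m := by
    rintro rfl
    exact h₁.not_join hm
  exact G.eq_of_join hnm (G.join_trans (G.join_symm h₁.right) h₂.right)
    (G.join_trans (G.join_symm hm') ((h₂.join_iff m).1 hm))

/-- The affine form of Desargues' theorem for two triangles in different parallel planes. -/
theorem trans_of_not_coplanar (h₁ : G.Parallelogram n u u' v v')
    (h₂ : G.Parallelogram n v v' x x') (hux : ¬ G.Join n u x) (hu : G.PointOn u w)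
    (hx : G.PointOn x w) (hn : G.DirOn n w) (hv : ¬ G.PointOn v w) :
    G.Parallelogram n u u' x x' := by
  obtain ⟨m, hm, hm'⟩ := h₁.exists_dir
  obtain ⟨k, hk, hk'⟩ := h₂.exists_dir
  refine ⟨h₁.left, h₂.right, hux, ?_⟩
  by_cases hmk : m = k
  · subst hmk
    exact ⟨m, G.join_trans hm hk, G.join_trans hm' hk'⟩
  have hu' : G.PointOn u' w := G.pointOn_of_join h₁.left hn hu
  have hx' : G.PointOn x' w := G.pointOn_of_join h₂.right hn hx
  have hux' : u' ≠ x' := by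
    rintro rfl
    exact hux (G.join_trans h₁.left (G.join_symm h₂.right))
  have hux_ne : u ≠ x := by
    rintro rfl
    exact hux (G.join_refl n u)
  obtain ⟨l, hl⟩ := G.exists_join u x
  obtain ⟨l', hl'⟩ := G.exists_join u' x'
  obtain ⟨π, hπu, hπv, hπx⟩ := G.exists_plane u v x
  obtain ⟨π', hπu', hπv', hπx'⟩ := G.exists_plane u' v' x'
  have hlπ' : G.DirOn l π' := G.dirOn_of_two_dirs hmk
    (G.dirOn_of_join h₁.ne hm hπu hπv) (G.dirOn_of_join h₂.ne hk hπv hπx)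
    (G.dirOn_of_join h₁.ne' hm' hπu' hπv') (G.dirOn_of_join h₂.ne' hk' hπv' hπx')
    (G.dirOn_of_join hux_ne hl hπu hπx)
  have hπ'w : π' ≠ w := by
    rintro rfl
    exact hv (G.pointOn_of_join (G.join_symm h₂.left) hn hπv')
  have hll' : l = l' := G.dir_eq_of_planes hπ'w hπu' hu'
    hlπ' (G.dirOn_of_join hux_ne hl hu hx)
    (G.dirOn_of_join hux' hl' hπu' hπx') (G.dirOn_of_join hux' hl' hu' hx')
  exact ⟨l, hl, hll' ▸ hl'⟩

end Parallelogram

theorem exists_parallelogram (hu : G.Join n u u') (huv : ¬ G.Join n u v) :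
    ∃ v', G.Parallelogram n u u' v v' := by
  obtain ⟨m, hm⟩ := G.exists_join u v
  obtain ⟨v', hv', hv⟩ := G.exists_fourth_vertex hu hm
  exact ⟨v', hu, hv, huv, m, hm, hv'⟩

/-- Two planes through `v` with direction `n` have no other line in common. -/
theorem Parallelogram.not_pointOn_of_plane_ne {w' : W} (h : G.Parallelogram n u u' v v')
    (hw : w ≠ w') (hn : G.DirOn n w) (hn' : G.DirOn n w') (hu : G.PointOn u w)
    (hv : G.PointOn v w) (hu' : G.PointOn u w') : ¬ G.PointOn v w' := fun hv' => by
  obtain ⟨m, hm, -⟩ := h.exists_dir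
  have hmn : m = n := G.dir_eq_of_planes hw hu hu' (G.dirOn_of_join h.ne hm hu hv)
    (G.dirOn_of_join h.ne hm hu' hv') hn hn'
  exact h.not_join (hmn ▸ hm)

/-- Coplanar parallelograms are compared through a fourth line outside their plane. -/
theorem Parallelogram.trans (h₁ : G.Parallelogram n u u' v v')
    (h₂ : G.Parallelogram n v v' x x') (hux : ¬ G.Join n u x) :
    G.Parallelogram n u u' x x' := by
  obtain ⟨π, hu, hx, hn⟩ := G.exists_plane_of_dir u x n
  by_cases hv : G.PointOn v π
  swap
  · exact h₁.trans_of_not_coplanar h₂ hux hu hx hn hv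
  obtain ⟨y, hy⟩ := G.exists_not_pointOn π
  have not_join_y {t : A} (ht : G.PointOn t π) : ¬ G.Join n t y := fun h =>
    hy (G.pointOn_of_join h hn ht)
  obtain ⟨y', hvy⟩ := exists_parallelogram h₂.left (not_join_y hv)
  have lift {t t' : A} (ht : G.PointOn t π) (h : G.Parallelogram n t t' v v') :
      G.Parallelogram n t t' y y' := by
    obtain ⟨σ, htσ, hyσ, hnσ⟩ := G.exists_plane_of_dir t y n
    have hπσ : π ≠ σ := by
      rintro rfl
      exact hy hyσ
    exact h.trans_of_not_coplanar hvy (not_join_y ht) htσ hyσ hnσ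
      (h.not_pointOn_of_plane_ne hπσ hn hnσ ht hv htσ)
  exact (lift hu h₁).trans_of_not_coplanar (lift hx h₂.symm).symm hux hu hx hn hy

section Translations

variable (G) in
/-- The group of translations in direction `n`. -/
def translations (n : D) : Subgroup (Equiv.Perm A) where
  carrier := {f | (∀ a, G.Join n a (f a)) ∧ ∀ m a b, G.Join m a b ↔ G.Join m (f a) (f b)}
  one_mem' := ⟨fun a => G.join_refl n a, fun _ _ _ => Iff.rfl⟩
  mul_mem' := fun {f g} ⟨hf, hf'⟩ ⟨hg, hg'⟩ =>
    ⟨fun a => G.join_trans (hg a) (hf (g a)), fun m a b => (hg' m a b).trans (hf' m _ _)⟩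
  inv_mem' := fun {f} ⟨hf, hf'⟩ =>
    ⟨fun a => G.join_symm (by simpa using hf (f⁻¹ a)),
      fun m a b => by simpa using (hf' m (f⁻¹ a) (f⁻¹ b)).symm⟩

variable {f g : Equiv.Perm A}

theorem apply_eq_of_not_join (hf : f ∈ G.translations n) (ha : f a = a) (hab : ¬ G.Join n a b) :
    f b = b := by
  obtain ⟨m, hm⟩ := G.exists_join a b
  have hnm : n ≠ m := by
    rintro rfl
    exact hab hm
  have hm' : G.Join m a (f b) := ha ▸ (hf.2 m a b).1 hm
  exact (G.eq_of_join hnm (hf.1 b) (G.join_trans (G.join_symm hm) hm')).symm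

theorem eq_one_of_apply_eq (hf : f ∈ G.translations n) (ha : f a = a) : f = 1 := by
  ext b
  obtain ⟨c, hac, hbc⟩ := G.exists_not_join_not_join n a b
  exact apply_eq_of_not_join hf (apply_eq_of_not_join hf ha hac) fun h => hbc (G.join_symm h)

theorem eq_of_apply_eq (hf : f ∈ G.translations n) (hg : g ∈ G.translations n)
    (h : f a = g a) : f = g :=
  (inv_mul_eq_one.1 (eq_one_of_apply_eq (mul_mem (inv_mem hg) hf) (a := a) (by simp [h]))).symm

theorem apply_comm (hnm : n ≠ m) (hf : f ∈ G.translations n) (hg : g ∈ G.translations m) (a : A) :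
    f (g a) = g (f a) :=
  G.eq_of_join hnm (G.join_trans (G.join_symm (hf.1 (g a))) ((hg.2 n _ _).1 (hf.1 a)))
    (G.join_trans (G.join_symm ((hf.2 m _ _).1 (hg.1 a))) (hg.1 (f a)))

section Existence

variable {φ : A → A}

theorem join_map_of_parallelogram (hφ : ∀ u, G.Join n u (φ u))
    (hpar : ∀ u v, ¬ G.Join n u v → G.Parallelogram n u (φ u) v (φ v)) (huv : G.Join m u v) :
    G.Join m (φ u) (φ v) := by
  by_cases hn : G.Join n u v
  · by_cases hnm : n = m
    · subst hnm
      exact G.join_trans (G.join_trans (G.join_symm (hφ u)) hn) (hφ v)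
    · rw [G.eq_of_join hnm hn huv]
      exact G.join_refl m _
  · exact ((hpar u v hn).join_iff m).1 huv

theorem injective_of_parallelogram
    (hpar : ∀ u v, ¬ G.Join n u v → G.Parallelogram n u (φ u) v (φ v)) :
    Function.Injective φ := by
  intro u v huv
  by_cases h : G.Join n u v
  · obtain ⟨x, hux, hvx⟩ := G.exists_not_join_not_join n u v
    obtain ⟨m, hm, hm'⟩ := (hpar u x hux).exists_dir
    have hvm : G.Join m v x := ((hpar v x hvx).join_iff m).2 (huv ▸ hm')
    have hnm : n ≠ m := by
      rintro rfl
      exact hux hm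
    exact G.eq_of_join hnm h (G.join_trans hm (G.join_symm hvm))
  · exact absurd huv (hpar u v h).ne'

theorem exists_translation_of_parallelogram [Finite A] (hφ : ∀ u, G.Join n u (φ u))
    (hpar : ∀ u v, ¬ G.Join n u v → G.Parallelogram n u (φ u) v (φ v)) :
    ∃ f ∈ G.translations n, ⇑f = φ := by
  have hinj := injective_of_parallelogram hpar
  refine ⟨Equiv.ofBijective φ (Finite.injective_iff_bijective.1 hinj),
    ⟨hφ, fun m u v => ⟨join_map_of_parallelogram hφ hpar, fun hm => ?_⟩⟩, rfl⟩
  obtain ⟨k, hk⟩ := G.exists_join u v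
  by_cases hkm : k = m
  · exact hkm ▸ hk
  · rw [hinj (G.eq_of_join hkm (join_map_of_parallelogram hφ hpar hk) hm)]
    exact G.join_refl m v

/-- The translation taking `a` to `b` and `c` to `c'`, where `a b c' c` is a parallelogram, takes
`u` to `u'`. Two base points are needed because a parallelogram on the side `a b` determines the
image of `u` only when `u` is not on the line `a b`. -/
structure IsImage (G : AffineGeometry A D W) (n : D) (a b c c' u u' : A) : Prop where
  join : G.Join n u u'
  left : ¬ G.Join n a u → G.Parallelogram n a b u u'
  right : ¬ G.Join n c u → G.Parallelogram n c c' u u'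

variable {c' : A}

theorem exists_isImage (h : G.Parallelogram n a b c c') (u : A) :
    ∃ u', G.IsImage n a b c c' u u' := by
  by_cases hau : G.Join n a u
  · have hcu : ¬ G.Join n c u := fun hcu =>
      h.not_join (G.join_trans hau (G.join_symm hcu))
    obtain ⟨u', hu'⟩ := exists_parallelogram h.right hcu
    exact ⟨u', hu'.right, fun hau' => absurd hau hau', fun _ => hu'⟩
  · obtain ⟨u', hu'⟩ := exists_parallelogram h.left hau
    exact ⟨u', hu'.right, fun _ => hu', fun hcu => h.symm.trans hu' hcu⟩

namespace IsImage

theorem parallelogram_of_not_join_left (hu : G.IsImage n a b c c' u u')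
    (hv : G.IsImage n a b c c' v v') (hau : ¬ G.Join n a u) (hav : ¬ G.Join n a v)
    (huv : ¬ G.Join n u v) : G.Parallelogram n u u' v v' :=
  (hu.left hau).symm.trans (hv.left hav) huv

theorem parallelogram_of_not_join_right (hu : G.IsImage n a b c c' u u')
    (hv : G.IsImage n a b c c' v v') (hcu : ¬ G.Join n c u) (hcv : ¬ G.Join n c v)
    (huv : ¬ G.Join n u v) : G.Parallelogram n u u' v v' :=
  (hu.right hcu).symm.trans (hv.right hcv) huv

theorem parallelogram_of_join_of_join (h : G.Parallelogram n a b c c')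
    (hu : G.IsImage n a b c c' u u') (hv : G.IsImage n a b c c' v v') (hau : G.Join n a u)
    (hcv : G.Join n c v) : G.Parallelogram n u u' v v' := by
  have hcu : ¬ G.Join n c u := fun hcu => h.not_join (G.join_trans hau (G.join_symm hcu))
  have hav : ¬ G.Join n a v := fun hav => h.not_join (G.join_trans hav (G.join_symm hcv))
  obtain ⟨w, haw, hcw⟩ := G.exists_not_join_not_join n a c
  obtain ⟨w', hw⟩ := exists_isImage h w
  have huw := hu.parallelogram_of_not_join_right hw hcu hcw fun huw => haw (G.join_trans hau huw)
  have hwv := hw.parallelogram_of_not_join_left hv haw hav fun hwv =>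
    hcw (G.join_trans hcv (G.join_symm hwv))
  exact huw.trans hwv fun huv => hav (G.join_trans hau huv)

theorem parallelogram (h : G.Parallelogram n a b c c') (hu : G.IsImage n a b c c' u u')
    (hv : G.IsImage n a b c c' v v') (huv : ¬ G.Join n u v) : G.Parallelogram n u u' v v' := by
  have not_join_right {t : A} (hat : G.Join n a t) : ¬ G.Join n c t := fun hct =>
    h.not_join (G.join_trans hat (G.join_symm hct))
  by_cases hau : G.Join n a u
  · by_cases hcv : G.Join n c v
    · exact parallelogram_of_join_of_join h hu hv hau hcv
    · exact hu.parallelogram_of_not_join_right hv (not_join_right hau) hcv huv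
  · by_cases hav : G.Join n a v
    · by_cases hcu : G.Join n c u
      · exact (parallelogram_of_join_of_join h hv hu hav hcu).symm
      · exact hu.parallelogram_of_not_join_right hv hcu (not_join_right hav) huv
    · exact hu.parallelogram_of_not_join_left hv hau hav huv

end IsImage

theorem exists_translation [Finite A] (hab : G.Join n a b) :
    ∃ f ∈ G.translations n, f a = b := by
  obtain ⟨c, hac, -⟩ := G.exists_not_join_not_join n a a
  obtain ⟨c', h⟩ := exists_parallelogram hab hac
  choose φ hφ using exists_isImage h
  obtain ⟨f, hf, hfφ⟩ := exists_translation_of_parallelogram (fun u => (hφ u).join)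
    fun u v huv => (hφ u).parallelogram h (hφ v) huv
  have hca : ¬ G.Join n c a := fun hca => hac (G.join_symm hca)
  exact ⟨f, hf, hfφ ▸ ((hφ a).right hca).right_unique h.symm⟩

end Existence

theorem card_translations [Finite A] (n : D) (o : A) :
    Nat.card (G.translations n) = Nat.card {b // G.Join n o b} := by
  refine Nat.card_congr (Equiv.ofBijective (fun f => ⟨f.1 o, f.2.1 o⟩) ⟨?_, ?_⟩)
  · intro f g h
    exact Subtype.ext (eq_of_apply_eq f.2 g.2 (congrArg Subtype.val h))
  · rintro ⟨b, hb⟩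
    obtain ⟨f, hf, rfl⟩ := exists_translation hb
    exact ⟨⟨f, hf⟩, rfl⟩

/-- If `r` translates `o` to `f (g o)`, then `r ^ 2` and `g ^ 2` agree at `o`, although they have
different directions. -/
theorem mul_self_eq_one_of_involution [Finite A] (hnm : n ≠ m) (hf : f ∈ G.translations n)
    (hf_ne : f ≠ 1) (hff : f * f = 1) (hg : g ∈ G.translations m) : g * g = 1 := by
  by_cases hg_ne : g = 1
  · rw [hg_ne, mul_one]
  obtain ⟨o⟩ : Nonempty A := by
    by_contra hA
    rw [not_nonempty_iff] at hA
    exact hf_ne (Subsingleton.elim _ _)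
  obtain ⟨k, hk⟩ := G.exists_join o (f (g o))
  obtain ⟨r, hr, hro⟩ := exists_translation hk
  have hkn : k ≠ n := by
    rintro rfl
    have hgo : G.Join k o (g o) := G.join_trans hk (G.join_symm (hf.1 _))
    exact hg_ne (eq_one_of_apply_eq hg (G.eq_of_join hnm hgo (hg.1 o)).symm)
  have hkm : k ≠ m := by
    rintro rfl
    rw [apply_comm hnm hf hg] at hk
    have hfo : G.Join k o (f o) := G.join_trans hk (G.join_symm (hg.1 _))
    exact hf_ne (eq_one_of_apply_eq hf (G.eq_of_join hnm (hf.1 o) hfo).symm)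
  have hrr : r (r o) = g (g o) := calc
    r (r o) = f (r (g o)) := by rw [hro, apply_comm hkn hr hf]
    _ = f (g (f (g o))) := by rw [apply_comm hkm hr hg, hro]
    _ = (f * f) (g (g o)) := by rw [← apply_comm hnm hf hg, Equiv.Perm.mul_apply]
    _ = g (g o) := by rw [hff, Equiv.Perm.one_apply]
  have hk_join : G.Join k o (g (g o)) := hrr ▸ G.join_trans (hr.1 o) (hr.1 (r o))
  have hm_join : G.Join m o (g (g o)) := G.join_trans (hg.1 o) (hg.1 (g o))
  exact eq_one_of_apply_eq (mul_mem hg hg) (G.eq_of_join hkm hk_join hm_join).symm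

theorem exists_eq_two_pow [Finite A] {q : ℕ} (hq : Even q) (hnm : n ≠ m) (o : A)
    (hn : Nat.card {b // G.Join n o b} = q) (hm : Nat.card {b // G.Join m o b} = q) :
    ∃ k, q = 2 ^ k := by
  rw [← card_translations] at hn hm
  have : Fact (Nat.Prime 2) := ⟨Nat.prime_two⟩
  obtain ⟨⟨f, hf⟩, hf_order⟩ :=
    exists_prime_orderOf_dvd_card' (G := G.translations n) 2 (hn ▸ hq.two_dvd)
  rw [Subgroup.orderOf_mk, orderOf_eq_prime_iff, pow_two] at hf_order
  have hp : IsPGroup 2 (G.translations m) := fun g =>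
    ⟨1, Subtype.ext (by
      simpa [pow_two] using
        mul_self_eq_one_of_involution hnm hf hf_order.2 hf_order.1 g.2)⟩
  obtain ⟨k, hk⟩ := IsPGroup.iff_card.1 hp
  exact ⟨k, hm ▸ hk⟩

end Translations

end AffineGeometry

open Finset

/-- A polarity of projective 3-space of order `q`, described by points only: `r s t` says that the
point `s` lies in the plane polar to `t`. The axioms prescribe the numbers of all points and of the
points of a plane, and demand that any three planes have a common point. -/
structure IsSpacePolarity {S : Type*} [Fintype S] (q : ℕ) (r : S → S → Prop) [DecidableRel r] :
    Prop where
  two_le : 2 ≤ q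
  card_univ : Fintype.card S = q ^ 3 + q ^ 2 + q + 1
  symm : ∀ {s t}, r s t → r t s
  card_perp : ∀ s, #{z | r z s} = q ^ 2 + q + 1
  exists_perp : ∀ s t u, ∃ z, r z s ∧ r z t ∧ r z u

/-- The point `u` lies on the line through `s` and `t`, that is, in every plane containing both;
for `s = t` this only says that `u` lies in every plane through `s`. -/
def OnLine {S : Type*} (r : S → S → Prop) (s t u : S) : Prop :=
  ∀ w, r w s → r w t → r w u

namespace IsSpacePolarity

variable {S : Type*} [Fintype S] {q : ℕ} {r : S → S → Prop} [DecidableRel r]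
  {p a b c d h m n s t u v w x y z : S}

section Counting

theorem le_card_common (Q : IsSpacePolarity q r) (s t : S) : q + 1 ≤ #{z | r z s ∧ r z t} := by
  classical
  have hcover : univ ⊆ ({z | r z s ∧ r z t} : Finset S).biUnion fun z => {u | r u z} := by
    intro u _
    obtain ⟨z, hzs, hzt, hzu⟩ := Q.exists_perp s t u
    simpa using ⟨z, ⟨hzs, hzt⟩, Q.symm hzu⟩
  have hle : q ^ 3 + q ^ 2 + q + 1 ≤ #{z | r z s ∧ r z t} * (q ^ 2 + q + 1) := by
    rw [← Q.card_univ]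
    exact (card_le_card hcover).trans (card_biUnion_le_card_mul _ _ _ fun z _ => (Q.card_perp z).le)
  by_contra! hlt
  nlinarith [Nat.mul_le_mul_right (q ^ 2 + q + 1) (Nat.le_of_lt_succ hlt)]

theorem card_common (Q : IsSpacePolarity q r) (hst : s ≠ t) : #{z | r z s ∧ r z t} = q + 1 := by
  classical
  have hcard (z : S) : #{t | r z t} = q ^ 2 + q + 1 := by
    rw [← Q.card_perp z]
    exact congrArg card (filter_congr fun t _ => ⟨Q.symm, Q.symm⟩)
  have hdouble := sum_card_bipartiteAbove_eq_sum_card_bipartiteBelow (s := {z | r z s})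
    (t := univ) r
  simp only [bipartiteAbove, bipartiteBelow, filter_filter, hcard, sum_const, smul_eq_mul]
    at hdouble
  have herase : #(univ.erase s) = q ^ 3 + q ^ 2 + q := by
    rw [card_erase_of_mem (mem_univ s), Finset.card_univ, Q.card_univ, Nat.add_sub_cancel]
  have hsum : ∑ t ∈ univ.erase s, #{z | r z s ∧ r z t} = ∑ t ∈ univ.erase s, (q + 1) := by
    rw [← add_sum_erase univ _ (mem_univ s)] at hdouble
    simp only [and_self, Q.card_perp] at hdouble
    rw [sum_const, herase, smul_eq_mul]
    linarith
  rw [eq_comm, sum_eq_sum_iff_of_le fun t _ => Q.le_card_common s t] at hsum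
  exact (hsum t (mem_erase.2 ⟨hst.symm, mem_univ t⟩)).symm

theorem exists_ne_perp_perp (Q : IsSpacePolarity q r) (hst : s ≠ t) (w : S) :
    ∃ x, x ≠ w ∧ r x s ∧ r x t := by
  have hcard : 1 < #{z | r z s ∧ r z t} := by
    have := Q.two_le
    rw [Q.card_common hst]
    omega
  obtain ⟨x, hx, hxw⟩ := exists_mem_ne hcard w
  rw [mem_filter_univ] at hx
  exact ⟨x, hxw, hx⟩

theorem exists_two_perp_perp (Q : IsSpacePolarity q r) (hst : s ≠ t) :
    ∃ x y, x ≠ y ∧ r x s ∧ r x t ∧ r y s ∧ r y t := by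
  obtain ⟨y, -, hys, hyt⟩ := Q.exists_ne_perp_perp hst s
  obtain ⟨x, hxy, hxs, hxt⟩ := Q.exists_ne_perp_perp hst y
  exact ⟨x, y, hxy, hxs, hxt, hys, hyt⟩

theorem card_not_perp (Q : IsSpacePolarity q r) (s : S) : #{z | ¬ r z s} = q ^ 3 := by
  have hsplit := card_filter_add_card_filter_not (s := univ) fun z => r z s
  rw [Q.card_perp, Finset.card_univ, Q.card_univ] at hsplit
  omega

theorem card_perp_not_perp (Q : IsSpacePolarity q r) (hst : s ≠ t) :
    #{z | r z s ∧ ¬ r z t} = q ^ 2 := by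
  have hsplit := card_filter_add_card_filter_not (s := {z | r z s}) fun z => r z t
  rw [filter_filter, filter_filter, Q.card_common hst, Q.card_perp] at hsplit
  omega

/-- Among the `q ^ 3` planes `z` missing the point `y` of the line `xᗮ ∩ hᗮ`, the average number
of points of the line in `z` is `1`, and each `z` contains at least one. -/
theorem card_perp_line (Q : IsSpacePolarity q r) (hxh : x ≠ h) (hyx : r y x) (hyh : r y h)
    (hwy : ¬ r w y) : #{u | (r u x ∧ r u h) ∧ r u w} = 1 := by
  classical
  set line : Finset S := {u | r u x ∧ r u h} with hline
  have hy : y ∈ line := by simp [hline, hyx, hyh]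
  have hpos : ∀ z ∈ ({z | ¬ r z y} : Finset S), 1 ≤ #{u ∈ line | r u z} := fun z _ => by
    obtain ⟨u, hux, huh, huz⟩ := Q.exists_perp x h z
    exact card_pos.2 ⟨u, by simp [hline, hux, huh, huz]⟩
  have hsum : ∑ z with ¬ r z y, #{u ∈ line | r u z} = q ^ 3 := by
    have hself : #{z | ¬ r z y ∧ r y z} = 0 := by
      rw [card_eq_zero, filter_eq_empty_iff]
      exact fun z _ hz => hz.1 (Q.symm hz.2)
    have hother : ∀ u ∈ line.erase y, #{z | ¬ r z y ∧ r u z} = q ^ 2 := fun u hu => by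
      rw [← Q.card_perp_not_perp (ne_of_mem_erase hu)]
      exact congrArg card (filter_congr fun z _ =>
        and_comm.trans (and_congr_left' ⟨Q.symm, Q.symm⟩))
    have hcard : #(line.erase y) = q := by
      rw [card_erase_of_mem hy, Q.card_common hxh, Nat.add_sub_cancel]
    have hdouble := sum_card_bipartiteAbove_eq_sum_card_bipartiteBelow (s := line)
      (t := {z | ¬ r z y}) r
    simp only [bipartiteAbove, bipartiteBelow, filter_filter] at hdouble
    rw [← hdouble, ← add_sum_erase _ _ hy, hself, sum_congr rfl hother, sum_const, hcard]
    ring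
  rw [← Q.card_not_perp y, card_eq_sum_ones, eq_comm, sum_eq_sum_iff_of_le hpos] at hsum
  rw [← filter_filter]
  exact (hsum w (by simpa using hwy)).symm

theorem perp_of_perp_perp (Q : IsSpacePolarity q r) (huv : u ≠ v) (hxh : x ≠ h) (hux : r u x)
    (huh : r u h) (hvx : r v x) (hvh : r v h) (hzx : r z x) (hzh : r z h) (hwu : r w u)
    (hwv : r w v) : r w z := by
  by_contra hwz
  have hcard := Q.card_perp_line hxh hzx hzh hwz
  exact huv (card_le_one.1 hcard.le u (by simp [hux, huh, Q.symm hwu]) v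
    (by simp [hvx, hvh, Q.symm hwv]))

theorem exists_not_perp_not_perp (Q : IsSpacePolarity q r) (p w : S) : ∃ a, ¬ r a p ∧ ¬ r a w := by
  by_cases hwp : w = p
  · subst hwp
    have hpos : 0 < #{a | ¬ r a w} := by
      rw [Q.card_not_perp]
      exact pow_pos (zero_lt_two.trans_le Q.two_le) 3
    obtain ⟨a, ha⟩ := card_pos.1 hpos
    rw [mem_filter_univ] at ha
    exact ⟨a, ha, ha⟩
  have hlt : #{a | r a w ∧ ¬ r a p} < #{a | ¬ r a p} := by
    rw [Q.card_perp_not_perp hwp, Q.card_not_perp]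
    exact Nat.pow_lt_pow_right Q.two_le (by norm_num)
  obtain ⟨a, ha, haw⟩ := exists_mem_notMem_of_card_lt_card hlt
  rw [mem_filter_univ] at ha haw
  exact ⟨a, ha, fun h => haw ⟨h, ha⟩⟩

end Counting

section Lines

theorem onLine_of_perp (Q : IsSpacePolarity q r) (huv : u ≠ v) (hxh : x ≠ h) (hxu : r x u)
    (hhu : r h u) (hxv : r x v) (hhv : r h v) (hxz : r x z) (hhz : r h z) : OnLine r u v z :=
  fun _ => Q.perp_of_perp_perp huv hxh (Q.symm hxu) (Q.symm hhu) (Q.symm hxv) (Q.symm hhv)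
    (Q.symm hxz) (Q.symm hhz)

theorem onLine_exchange (Q : IsSpacePolarity q r) (hst : s ≠ t) (hsu : s ≠ u)
    (hline : OnLine r s t u) : OnLine r s u t := by
  obtain ⟨x, y, hxy, hxs, hxt, hys, hyt⟩ := Q.exists_two_perp_perp hst
  exact Q.onLine_of_perp hsu hxy hxs hys (hline x hxs hxt) (hline y hys hyt) hxt hyt

theorem exists_onLine_perp (Q : IsSpacePolarity q r) (hst : s ≠ t) (w : S) :
    ∃ z, OnLine r s t z ∧ r z w := by
  obtain ⟨x, y, hxy, hxs, hxt, hys, hyt⟩ := Q.exists_two_perp_perp hst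
  obtain ⟨z, hzx, hzy, hzw⟩ := Q.exists_perp x y w
  exact ⟨z, Q.onLine_of_perp hst hxy hxs hys hxt hyt (Q.symm hzx) (Q.symm hzy), hzw⟩

theorem eq_of_onLine_of_perp (Q : IsSpacePolarity q r) (hn : r n p) (ha : ¬ r a p)
    (hline : OnLine r n a d) (hd : r d p) : n = d := by
  by_contra hnd
  have hna : n ≠ a := fun h => ha (h ▸ hn)
  exact ha (Q.symm (Q.onLine_exchange hna hnd hline p (Q.symm hn) (Q.symm hd)))

theorem eq_of_onLine_onLine (Q : IsSpacePolarity q r) (hn : r n p) (hm : r m p) (hnm : n ≠ m)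
    (ha : ¬ r a p) (hna : OnLine r n a b) (hma : OnLine r m a b) : a = b := by
  by_contra hab
  have ham : a ≠ m := fun h => ha (h ▸ hm)
  have hba : OnLine r a b m := Q.onLine_exchange ham hab fun w hwa hwm => hma w hwm hwa
  exact hnm (Q.eq_of_onLine_of_perp hn ha (fun w hwn hwa => hba w hwa (hna w hwn hwa)) hm)

theorem exists_fourth_vertex (Q : IsSpacePolarity q r) (hn : r n p) (hm : r m p) (ha : ¬ r a p)
    (hb : ¬ r b p) (hc : ¬ r c p) (hab : OnLine r n a b) (hac : OnLine r m a c) :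
    ∃ d, ¬ r d p ∧ OnLine r m b d ∧ OnLine r n c d := by
  have hn_ne {e : S} (he : ¬ r e p) : n ≠ e := fun h => he (h ▸ hn)
  have hm_ne {e : S} (he : ¬ r e p) : m ≠ e := fun h => he (h ▸ hm)
  by_cases hab_eq : a = b
  · exact ⟨c, hc, hab_eq ▸ hac, fun _ _ hw => hw⟩
  by_cases hac_eq : a = c
  · exact ⟨b, hb, fun _ _ hw => hw, hac_eq ▸ hab⟩
  by_cases hnm : n = m
  · subst hnm
    exact ⟨a, ha, Q.onLine_exchange (hn_ne ha) (hn_ne hb) hab,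
      Q.onLine_exchange (hn_ne ha) (hn_ne hc) hac⟩
  obtain ⟨w, hwa, hwb, hwc⟩ : ∃ w, r w a ∧ r w b ∧ r w c := Q.exists_perp a b c
  have hwn : r w n :=
    Q.onLine_exchange (hn_ne ha).symm hab_eq (fun w hwa hwn => hab w hwn hwa) w hwa hwb
  have hwm : r w m :=
    Q.onLine_exchange (hm_ne ha).symm hac_eq (fun w hwa hwm => hac w hwm hwa) w hwa hwc
  obtain ⟨h, hhw, hhn, hhc⟩ := Q.exists_ne_perp_perp (hn_ne hc) w
  obtain ⟨d, hmbd, hdh⟩ := Q.exists_onLine_perp (hm_ne hb) h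
  have hncd : OnLine r n c d :=
    Q.onLine_of_perp (hn_ne hc) hhw.symm hwn hhn hwc hhc (hmbd w hwm hwb) (Q.symm hdh)
  refine ⟨d, fun hd => hnm ?_, hmbd, hncd⟩
  rw [Q.eq_of_onLine_of_perp hn hc hncd hd, Q.eq_of_onLine_of_perp hm hb hmbd hd]

end Lines

/-- The affine space left when the plane polar to `p` is taken as the plane at infinity. -/
def affineGeometry (Q : IsSpacePolarity q r) (p : S) :
    AffineGeometry {a // ¬ r a p} {n // r n p} {w // w ≠ p} where
  Join n a b := OnLine r n a b
  PointOn a w := r a w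
  DirOn n w := r n w
  join_refl _ _ _ _ ha := ha
  join_symm {n a b} := Q.onLine_exchange (fun h => a.2 (h ▸ n.2)) fun h => b.2 (h ▸ n.2)
  join_trans hab hbc w hn ha := hbc w hn (hab w hn ha)
  eq_of_join {n m a b} hnm hn hm := Subtype.ext <|
    Q.eq_of_onLine_onLine n.2 m.2 (Subtype.coe_ne_coe.2 hnm) a.2 hn hm
  exists_join a b := by
    by_cases hab : a = b
    · obtain ⟨n, hn, -⟩ := Q.exists_perp p p p
      exact ⟨⟨n, hn⟩, fun _ _ ha => hab ▸ ha⟩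
    · obtain ⟨n, hline, hn⟩ := Q.exists_onLine_perp (Subtype.coe_ne_coe.2 hab) p
      have han : a.1 ≠ n := fun h => a.2 (h ▸ hn)
      exact ⟨⟨n, hn⟩, fun w hwn hwa =>
        Q.onLine_exchange (Subtype.coe_ne_coe.2 hab) han hline w hwa hwn⟩
  exists_fourth_vertex {n m a b c} hab hac := by
    obtain ⟨d, hd, hbd, hcd⟩ := Q.exists_fourth_vertex n.2 m.2 a.2 b.2 c.2 hab hac
    exact ⟨⟨d, hd⟩, hbd, hcd⟩
  pointOn_of_join {_ _ _ w} hab hn ha := Q.symm (hab w (Q.symm hn) (Q.symm ha))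
  dirOn_of_join {a b n w} hab hn ha hb := by
    have han : a.1 ≠ n := fun h => a.2 (h ▸ n.2)
    exact Q.symm (Q.onLine_exchange han (Subtype.coe_ne_coe.2 hab)
      (fun w hwa hwn => hn w hwn hwa) w (Q.symm ha) (Q.symm hb))
  exists_plane a b c := by
    obtain ⟨w, hwa, hwb, hwc⟩ := Q.exists_perp a b c
    exact ⟨⟨w, fun h => a.2 (Q.symm (h ▸ hwa))⟩, Q.symm hwa, Q.symm hwb, Q.symm hwc⟩
  exists_plane_of_dir a b n := by
    obtain ⟨w, hwa, hwb, hwn⟩ := Q.exists_perp a b n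
    exact ⟨⟨w, fun h => a.2 (Q.symm (h ▸ hwa))⟩, Q.symm hwa, Q.symm hwb, Q.symm hwn⟩
  dir_eq_of_planes {a n m _ _} hw ha ha' hn hn' hm hm' := by
    by_contra hnm
    exact a.2 (Q.symm (Q.perp_of_perp_perp (Subtype.coe_ne_coe.2 hnm) (Subtype.coe_ne_coe.2 hw)
      hn hn' hm hm' ha ha' (Q.symm n.2) (Q.symm m.2)))
  dirOn_of_two_dirs {m k l w w'} hmk hm hk hm' hk' hl := by
    have hwp : w.1 ≠ p := w.2
    exact Q.symm (Q.perp_of_perp_perp (Subtype.coe_ne_coe.2 hmk) hwp hm m.2 hk k.2 hl l.2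
      (Q.symm hm') (Q.symm hk'))
  exists_not_pointOn w := by
    obtain ⟨a, hap, haw⟩ := Q.exists_not_perp_not_perp p w
    exact ⟨⟨a, hap⟩, haw⟩

theorem card_join (Q : IsSpacePolarity q r) (n : {n // r n p}) (a : {a // ¬ r a p}) :
    Nat.card {b // (Q.affineGeometry p).Join n a b} = q := by
  have hna : n.1 ≠ a := fun h => a.2 (h ▸ n.2)
  obtain ⟨x, y, hxy, hxn, hxa, hyn, hya⟩ := Q.exists_two_perp_perp hna
  have hjoin (b : S) : OnLine r n a b ↔ r b x ∧ r b y :=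
    ⟨fun h => ⟨Q.symm (h x hxn hxa), Q.symm (h y hyn hya)⟩, fun ⟨hbx, hby⟩ =>
      Q.onLine_of_perp hna hxy hxn hyn hxa hya (Q.symm hbx) (Q.symm hby)⟩
  have hsplit := card_filter_add_card_filter_not (s := {b | r b x ∧ r b y}) fun b => r b p
  rw [filter_filter, filter_filter, Q.card_common hxy, Q.card_perp_line hxy (Q.symm hxa)
    (Q.symm hya) fun hpa => a.2 (Q.symm hpa)] at hsplit
  have hequiv : {b // (Q.affineGeometry p).Join n a b} ≃ {b // (r b x ∧ r b y) ∧ ¬ r b p} :=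
    (Equiv.subtypeSubtypeEquivSubtypeInter _ fun b => OnLine r n a b).trans
      (Equiv.subtypeEquivRight fun b => by rw [hjoin, and_comm])
  rw [Nat.card_congr hequiv, Nat.card_eq_fintype_card, Fintype.card_subtype]
  omega

theorem exists_eq_two_pow (Q : IsSpacePolarity q r) (hq : Even q) : ∃ k, q = 2 ^ k := by
  obtain ⟨p⟩ : Nonempty S := by
    rw [← Fintype.card_pos_iff, Q.card_univ]
    exact Nat.succ_pos _
  obtain ⟨o, ho, -⟩ := Q.exists_not_perp_not_perp p p
  have hcard : 1 < #{n | r n p} := by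
    have := Q.two_le
    rw [Q.card_perp]
    omega
  obtain ⟨n, hn, m, hm, hnm⟩ := one_lt_card.1 hcard
  rw [mem_filter_univ] at hn hm
  have hnm' : (⟨n, hn⟩ : {n // r n p}) ≠ ⟨m, hm⟩ := Subtype.coe_ne_coe.1 hnm
  exact AffineGeometry.exists_eq_two_pow hq hnm' ⟨o, ho⟩ (Q.card_join _ _) (Q.card_join _ _)

end IsSpacePolarity

section Orthogonality

variable {α : Type*} [DecidableEq α] {G : Finset (Finset α)} {s t : Finset α} {x : α}

/-- Two finite sets are orthogonal if they have an odd number of common points: their indicator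
vectors over `𝔽₂` have scalar product `1`. -/
abbrev Orthogonal (s t : Finset α) : Prop := Odd #(s ∩ t)

theorem Orthogonal.symm (h : Orthogonal s t) : Orthogonal t s := by
  rwa [Orthogonal, inter_comm]

theorem orthogonal_singleton_right : Orthogonal s {x} ↔ x ∈ s := by
  by_cases hx : x ∈ s <;> simp [Orthogonal, hx]

theorem orthogonal_singleton_left : Orthogonal {x} s ↔ x ∈ s :=
  ⟨fun h => orthogonal_singleton_right.1 h.symm,
    fun h => Orthogonal.symm (orthogonal_singleton_right.2 h)⟩

theorem sum_card_inter_eq (G : Finset (Finset α)) (s : Finset α) :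
    ∑ D ∈ G, #(D ∩ s) = ∑ x ∈ s, #{D ∈ G | x ∈ D} := by
  simpa only [bipartiteAbove, bipartiteBelow, filter_mem_eq_inter, inter_comm] using
    sum_card_bipartiteAbove_eq_sum_card_bipartiteBelow (s := G) (t := s) fun D x => x ∈ D

theorem card_mul_eq_of_card_inter {k m : ℕ} (hk : ∀ D ∈ G, #(D ∩ s) = k)
    (hm : ∀ x ∈ s, #{D ∈ G | x ∈ D} = m) : #G * k = #s * m := by
  have hsum := sum_card_inter_eq G s
  rwa [sum_const_nat hk, sum_const_nat hm] at hsum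

/-- Count incidences between `s` and the sets `D ∈ G` with `p D` modulo `2`. -/
theorem odd_card_orthogonal {p : Finset α → Prop} [DecidablePred p] (hs : Odd #s)
    (h : ∀ x ∈ s, Odd #{D ∈ G | x ∈ D ∧ p D}) : Odd #{D ∈ G | p D ∧ Orthogonal D s} := by
  have hfilter (x : α) : #{D ∈ G | x ∈ D ∧ p D} = #{D ∈ {D ∈ G | p D} | x ∈ D} := by
    simp only [filter_filter, and_comm]
  rw [← filter_filter, ← odd_sum_iff_odd_card_odd, sum_card_inter_eq, odd_sum_iff_odd_card_odd,
    filter_true_of_mem fun x hx => hfilter x ▸ h x hx]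
  exact hs

end Orthogonality

namespace InversivePlane

variable {q : ℕ} {P : Type} [Fintype P] {I : InversivePlane q P} {C D : Finset P} {p x y z : P}

theorem circle_eq_of_three_points (hC : C ∈ I.circles) (hD : D ∈ I.circles) (hxy : x ≠ y)
    (hxz : x ≠ z) (hyz : y ≠ z) (hC' : x ∈ C ∧ y ∈ C ∧ z ∈ C) (hD' : x ∈ D ∧ y ∈ D ∧ z ∈ D) :
    C = D :=
  (I.three_points x y z hxy hxz hyz).unique ⟨hC, hC'⟩ ⟨hD, hD'⟩

theorem circle_ne_singleton (hC : C ∈ I.circles) (x : P) : C ≠ {x} := by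
  rintro rfl
  have hcard := I.circle_card _ hC
  have hq := I.two_le
  rw [card_singleton] at hcard
  omega

variable [DecidableEq P]

theorem card_inter_le_two_s1 (hC : C ∈ I.circles) (hD : D ∈ I.circles) (hCD : C ≠ D) :
    #(C ∩ D) ≤ 2 := by
  by_contra! hlt
  obtain ⟨x, hx, y, hy, z, hz, hxy, hxz, hyz⟩ := two_lt_card.1 hlt
  rw [mem_inter] at hx hy hz
  exact hCD (circle_eq_of_three_points hC hD hxy hxz hyz ⟨hx.1, hy.1, hz.1⟩ ⟨hx.2, hy.2, hz.2⟩)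

theorem card_inter_eq_one (hC : C ∈ I.circles) (hD : D ∈ I.circles) (hCD : C ≠ D)
    (h : Orthogonal C D) : #(C ∩ D) = 1 := by
  obtain ⟨k, hk⟩ := h
  have hle := card_inter_le_two_s1 hC hD hCD
  omega

section CirclesThroughPoints

theorem card_circles_of_three_points (hxy : x ≠ y) (hxz : x ≠ z) (hyz : y ≠ z) :
    #{C ∈ I.circles | x ∈ C ∧ y ∈ C ∧ z ∈ C} = 1 := by
  obtain ⟨C, hC, -⟩ := I.three_points x y z hxy hxz hyz
  rw [card_eq_one]
  refine ⟨C, eq_singleton_iff_unique_mem.2 ⟨mem_filter.2 hC, fun D hD => ?_⟩⟩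
  rw [mem_filter] at hD
  exact circle_eq_of_three_points hD.1 hC.1 hxy hxz hyz hD.2 hC.2

theorem card_circles_of_two_points (hxy : x ≠ y) :
    #{C ∈ I.circles | x ∈ C ∧ y ∈ C} = q + 1 := by
  have hq := I.two_le
  have hk : ∀ C ∈ ({C ∈ I.circles | x ∈ C ∧ y ∈ C} : Finset _), #(C ∩ {x, y}ᶜ) = q - 1 := by
    intro C hC
    obtain ⟨hC, hxC, hyC⟩ := mem_filter.1 hC
    rw [← sdiff_eq_inter_compl, card_sdiff_of_subset (insert_subset hxC (by simpa using hyC)),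
      I.circle_card C hC, card_pair hxy]
    omega
  have hm : ∀ z ∈ ({x, y}ᶜ : Finset P),
      #{C ∈ ({C ∈ I.circles | x ∈ C ∧ y ∈ C} : Finset _) | z ∈ C} = 1 := by
    intro z hz
    simp only [mem_compl, mem_insert, mem_singleton, not_or] at hz
    rw [filter_filter, ← card_circles_of_three_points (I := I) hxy (Ne.symm hz.1) (Ne.symm hz.2)]
    simp only [and_assoc]
  have hcount := card_mul_eq_of_card_inter hk hm
  rw [card_compl, card_pair hxy, I.card_points] at hcount
  refine Nat.eq_of_mul_eq_mul_right (show 0 < q - 1 by omega) (hcount.trans ?_)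
  obtain ⟨r, rfl⟩ := Nat.exists_eq_add_of_le' hq
  rw [mul_one, show r + 2 - 1 = r + 1 from rfl]
  have hsq : (r + 2) ^ 2 + 1 = (r + 2 + 1) * (r + 1) + 2 := by ring
  omega

variable (I) in
theorem card_circles_of_point (x : P) : #{C ∈ I.circles | x ∈ C} = q ^ 2 + q := by
  have hk : ∀ C ∈ ({C ∈ I.circles | x ∈ C} : Finset _), #(C ∩ {x}ᶜ) = q := by
    intro C hC
    obtain ⟨hC, hxC⟩ := mem_filter.1 hC
    rw [← sdiff_eq_inter_compl, card_sdiff_of_subset (singleton_subset_iff.2 hxC),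
      I.circle_card C hC, card_singleton, Nat.add_sub_cancel]
  have hm : ∀ y ∈ ({x}ᶜ : Finset P),
      #{C ∈ ({C ∈ I.circles | x ∈ C} : Finset _) | y ∈ C} = q + 1 := by
    intro y hy
    rw [mem_compl, mem_singleton] at hy
    rw [filter_filter, card_circles_of_two_points (Ne.symm hy)]
  have hcount := card_mul_eq_of_card_inter hk hm
  rw [card_compl, card_singleton, I.card_points, Nat.add_sub_cancel] at hcount
  refine Nat.eq_of_mul_eq_mul_right (zero_lt_two.trans_le I.two_le) (hcount.trans ?_)
  ring

end CirclesThroughPoints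

section TangentCircles

/-- The `q + 1` circles `D` through `p` and `y` meet `C` in one or two points and the numbers
`#(D ∩ C)` add up to `2 * q + 1`. -/
theorem card_tangent_circles (hC : C ∈ I.circles) (hp : p ∈ C) (hy : y ∉ C) :
    #{D ∈ I.circles | (p ∈ D ∧ y ∈ D) ∧ Orthogonal D C} = 1 := by
  have hpy : p ≠ y := fun h => hy (h ▸ hp)
  set G : Finset (Finset P) := {D ∈ I.circles | p ∈ D ∧ y ∈ D} with hG
  have hG_card : #G = q + 1 := card_circles_of_two_points hpy
  have hother : ∀ x ∈ C.erase p, #{D ∈ G | x ∈ D} = 1 := by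
    intro x hx
    have hyx : y ≠ x := fun h => hy (h ▸ mem_of_mem_erase hx)
    have hpx : p ≠ x := (ne_of_mem_erase hx).symm
    rw [hG, filter_filter, ← card_circles_of_three_points (I := I) hpy hpx hyx]
    simp only [and_assoc]
  have hself : #{D ∈ G | p ∈ D} = q + 1 := by
    rw [filter_true_of_mem fun D hD => (mem_filter.1 hD).2.1, hG_card]
  have hsum : ∑ D ∈ G, #(D ∩ C) = 2 * q + 1 := by
    rw [sum_card_inter_eq, ← add_sum_erase _ _ hp, hself, sum_const_nat hother,
      card_erase_of_mem hp, I.circle_card C hC]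
    omega
  have htwo : ∀ D ∈ G, #(D ∩ C) + (if Orthogonal D C then 1 else 0) = 2 := by
    intro D hD
    obtain ⟨hD, hpD, hyD⟩ := mem_filter.1 hD
    have hDC : D ≠ C := fun h => hy (h ▸ hyD)
    split_ifs with h
    · rw [card_inter_eq_one hD hC hDC h]
    · have hpos : 0 < #(D ∩ C) := card_pos.2 ⟨p, mem_inter.2 ⟨hpD, hp⟩⟩
      obtain ⟨k, hk⟩ := Nat.not_odd_iff_even.1 h
      have hle := card_inter_le_two_s1 hD hC hDC
      omega
  have htotal := sum_const_nat htwo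
  rw [sum_add_distrib, ← card_filter, hsum, hG_card, hG, filter_filter] at htotal
  omega

theorem card_orthogonal_circles_of_point (hC : C ∈ I.circles) (hy : y ∉ C) :
    #{D ∈ I.circles | y ∈ D ∧ Orthogonal D C} = q + 1 := by
  have hk : ∀ D ∈ ({D ∈ I.circles | y ∈ D ∧ Orthogonal D C} : Finset _), #(D ∩ C) = 1 := by
    intro D hD
    obtain ⟨hD, hyD, h⟩ := mem_filter.1 hD
    exact card_inter_eq_one hD hC (fun hDC => hy (hDC ▸ hyD)) h
  have hm : ∀ p ∈ C,
      #{D ∈ ({D ∈ I.circles | y ∈ D ∧ Orthogonal D C} : Finset _) | p ∈ D} = 1 := by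
    intro p hp
    rw [← card_tangent_circles hC hp hy, filter_filter]
    exact congrArg card (filter_congr fun D _ => by tauto)
  have hcount := card_mul_eq_of_card_inter hk hm
  rwa [mul_one, mul_one, I.circle_card C hC] at hcount

theorem card_orthogonal_circles (hq : Even q) (hC : C ∈ I.circles) :
    #{D ∈ I.circles | Orthogonal D C} = q ^ 2 := by
  set G : Finset (Finset P) := {D ∈ I.circles | Orthogonal D C} with hG
  have hCG : C ∈ G := by
    refine mem_filter.2 ⟨hC, ?_⟩
    rw [Orthogonal, inter_self, I.circle_card C hC]
    exact hq.add_one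
  have hk : ∀ D ∈ G.erase C, #(D ∩ Cᶜ) = q := by
    intro D hD
    obtain ⟨hDC, hD⟩ := mem_erase.1 hD
    obtain ⟨hD, h⟩ := mem_filter.1 hD
    have hsplit := card_inter_add_card_sdiff D C
    rw [card_inter_eq_one hD hC hDC h, I.circle_card D hD, sdiff_eq_inter_compl] at hsplit
    omega
  have hm : ∀ y ∈ Cᶜ, #{D ∈ G.erase C | y ∈ D} = q + 1 := by
    intro y hy
    rw [mem_compl] at hy
    rw [← card_orthogonal_circles_of_point hC hy, filter_erase, erase_eq_of_notMem (by simp [hy]),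
      hG, filter_filter]
    simp only [and_comm]
  have hcount := card_mul_eq_of_card_inter hk hm
  have hG_card := card_erase_add_one hCG
  have hcompl := card_add_card_compl C
  rw [I.circle_card C hC, I.card_points] at hcompl
  have hcompl_add : #Cᶜ + q = q ^ 2 := by omega
  refine Nat.eq_of_mul_eq_mul_right (zero_lt_two.trans_le I.two_le) ?_
  calc #G * q = #Cᶜ * (q + 1) + q := by rw [← hG_card, add_mul, hcount, one_mul]
    _ = #Cᶜ * q + (#Cᶜ + q) := by ring
    _ = #Cᶜ * q + q * q := by rw [hcompl_add, pow_two]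
    _ = (#Cᶜ + q) * q := (add_mul _ _ _).symm
    _ = q ^ 2 * q := by rw [hcompl_add]

end TangentCircles

section Blocks

variable {s t u : Finset P}

variable (I) in
/-- The points, as singletons, and the circles. For even `q` they stand for all points of a
projective 3-space in which the points of the inversive plane form an ovoid; a circle stands for
the pole of its plane. -/
def blocks : Finset (Finset P) := I.circles ∪ univ.image singleton

theorem card_filter_blocks (p : Finset P → Prop) [DecidablePred p] :
    #{D ∈ I.blocks | p D} = #{D ∈ I.circles | p D} + #{x : P | p {x}} := by
  have hdisj : Disjoint I.circles (univ.image singleton) := by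
    rw [disjoint_left]
    intro C hC h
    obtain ⟨x, -, rfl⟩ := mem_image.1 h
    exact circle_ne_singleton hC x rfl
  rw [blocks, filter_union, card_union_of_disjoint (disjoint_filter_filter hdisj), filter_image,
    card_image_of_injective _ singleton_injective]

variable (I) in
theorem card_blocks : #I.blocks = q ^ 3 + q ^ 2 + q + 1 := by
  have hcircles : #I.circles * (q + 1) = (q ^ 2 + 1) * (q ^ 2 + q) := by
    rw [← I.card_points, ← Finset.card_univ]
    exact card_mul_eq_of_card_inter
      (fun C hC => (congrArg card (inter_univ C)).trans (I.circle_card C hC))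
      fun x _ => I.card_circles_of_point x
  have hcard := card_filter_blocks (I := I) fun _ => True
  simp only [filter_true, Finset.card_univ, I.card_points] at hcard
  refine Nat.eq_of_mul_eq_mul_right q.succ_pos ?_
  rw [hcard, add_mul, hcircles, Nat.succ_eq_add_one]
  ring

theorem odd_card_of_mem_blocks (hq : Even q) (hs : s ∈ I.blocks) : Odd #s := by
  rcases mem_union.1 hs with hs | hs
  · rw [I.circle_card s hs]
    exact hq.add_one
  · obtain ⟨x, -, rfl⟩ := mem_image.1 hs
    rw [card_singleton]
    exact odd_one

theorem card_orthogonal_blocks (hq : Even q) (hs : s ∈ I.blocks) :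
    #{D ∈ I.blocks | Orthogonal D s} = q ^ 2 + q + 1 := by
  rw [card_filter_blocks]
  rcases mem_union.1 hs with hs | hs
  · simp only [orthogonal_singleton_left, filter_univ_mem]
    rw [card_orthogonal_circles hq hs, I.circle_card s hs, add_assoc]
  · obtain ⟨x, -, rfl⟩ := mem_image.1 hs
    simp only [orthogonal_singleton_right, mem_singleton, I.card_circles_of_point, filter_eq,
      mem_univ, if_true, card_singleton]

theorem odd_card_blocks_of_two_points (hq : Even q) (x y : P) :
    Odd #{D ∈ I.blocks | x ∈ D ∧ y ∈ D} := by
  by_cases hxy : x = y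
  · subst hxy
    simp only [and_self, ← orthogonal_singleton_right]
    rw [card_orthogonal_blocks hq (mem_union_right _ (mem_image_of_mem _ (mem_univ x)))]
    exact ((hq.pow_of_ne_zero two_ne_zero).add hq).add_one
  · rw [card_filter_blocks, card_circles_of_two_points hxy]
    simp only [mem_singleton]
    rw [filter_false_of_mem fun w _ hw => hxy (hw.1.trans hw.2.symm), card_empty]
    exact hq.add_one

theorem odd_card_blocks_of_three_points (hq : Even q) (x y z : P) :
    Odd #{D ∈ I.blocks | x ∈ D ∧ y ∈ D ∧ z ∈ D} := by
  by_cases hxy : x = y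
  · simpa only [hxy, and_self_left] using odd_card_blocks_of_two_points hq y z
  by_cases hxz : x = z
  · simpa only [hxz, and_left_comm, and_self] using odd_card_blocks_of_two_points hq y z
  by_cases hyz : y = z
  · simpa only [hyz, and_self] using odd_card_blocks_of_two_points hq x z
  rw [card_filter_blocks, card_circles_of_three_points hxy hxz hyz]
  simp only [mem_singleton]
  rw [filter_false_of_mem fun w _ hw => hxy (hw.1.trans hw.2.1.symm), card_empty]
  exact odd_one

/-- The three memberships in `odd_card_blocks_of_three_points` are replaced by orthogonality to a
block, one at a time. -/
theorem odd_card_orthogonal_to_three (hq : Even q) (hs : s ∈ I.blocks) (ht : t ∈ I.blocks)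
    (hu : u ∈ I.blocks) :
    Odd #{D ∈ I.blocks | Orthogonal D s ∧ Orthogonal D t ∧ Orthogonal D u} := by
  have odd_card {b : Finset P} (hb : b ∈ I.blocks) := odd_card_of_mem_blocks hq hb
  have hone (y z : P) : Odd #{D ∈ I.blocks | y ∈ D ∧ z ∈ D ∧ Orthogonal D s} := by
    simpa only [and_assoc] using odd_card_orthogonal (odd_card hs) fun x _ =>
      odd_card_blocks_of_three_points hq x y z
  have htwo (z : P) : Odd #{D ∈ I.blocks | z ∈ D ∧ Orthogonal D s ∧ Orthogonal D t} := by
    simpa only [and_assoc] using odd_card_orthogonal (odd_card ht) fun y _ => hone y z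
  simpa only [and_assoc] using odd_card_orthogonal (odd_card hu) fun z _ => htwo z

theorem isSpacePolarity (hq : Even q) :
    IsSpacePolarity q fun s t : I.blocks => Orthogonal s.1 t.1 where
  two_le := I.two_le
  card_univ := (Fintype.card_coe _).trans I.card_blocks
  symm := Orthogonal.symm
  card_perp s := by
    rw [← card_orthogonal_blocks hq s.2, univ_eq_attach, filter_attach fun D => Orthogonal D s.1,
      card_map, card_attach]
  exists_perp s t u := by
    obtain ⟨z, hz⟩ := card_pos.1 (odd_card_orthogonal_to_three hq s.2 t.2 u.2).pos
    rw [mem_filter] at hz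
    exact ⟨⟨z, hz.1⟩, hz.2⟩

end Blocks

end InversivePlane

/-- If there exists an inversive plane of even order `q`, then `q` is a
power of two. -/
theorem inversive_plane_even_order_is_power_of_two
    {q : ℕ} (hq : Even q) (P : Type) [Fintype P]
    (I : InversivePlane q P) :
    ∃ k : ℕ, 1 ≤ k ∧ q = 2 ^ k := by
  classical
  obtain ⟨k, hk⟩ := (I.isSpacePolarity hq).exists_eq_two_pow hq
  have hk_ne : k ≠ 0 := by
    rintro rfl
    exact absurd (hk ▸ I.two_le) (by norm_num)
  exact ⟨k, Nat.one_le_iff_ne_zero.2 hk_ne, hk⟩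
end
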